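/- arXiv:1507.08247 — 2 statements merged into one kernel-verified Lean document; each statement's English description precedes it below -/
import Mathlib

section
/- Let 1 < s < 2 and write s = 1 + t with 0 < t < 1. There exists a constant C_{BH}, depending only on s, such that every φ ∈ H¹(T̂) with |φ|_{1+t,T̂} < ∞ that admits a representative continuous on the closure of T̂ which vanishes at the three points (0,0), (1,0) and (0,1) satisfies ‖φ‖²_{L²(T̂)} + ‖∇φ‖²_{L²(T̂)} + |φ|²_{1+t,T̂} ≤ C²_{BH} · |φ|²_{1+t,T̂}. -/
open MeasureTheory Metric Set Filter
open scoped Topology NNReal ENNReal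

noncomputable section

abbrev E2 := EuclideanSpace ℝ (Fin 2)

/-- Squared Gagliardo seminorm of order `s` on `G ⊆ ℝ²`. -/
def gagSq (s : ℝ) (G : Set E2) (v : E2 → ℝ) : ℝ :=
  ∫ x in G, ∫ y in G, (v x - v y) ^ 2 / dist x y ^ (2 + 2 * s)

/-- Finiteness of the Gagliardo seminorm. -/
def GagFin (s : ℝ) (G : Set E2) (v : E2 → ℝ) : Prop :=
  Integrable (fun p : E2 × E2 => (v p.1 - v p.2) ^ 2 / dist p.1 p.2 ^ (2 + 2 * s))
    ((volume.restrict G).prod (volume.restrict G))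

/-- Test functions: smooth compactly supported functions with support in `G`. -/
def IsTestFun (G : Set E2) (φ : E2 → ℝ) : Prop :=
  ContDiff ℝ (⊤ : ℕ∞) φ ∧ HasCompactSupport φ ∧ tsupport φ ⊆ G

/-- Partial derivative in the `i`-th coordinate direction. -/
def pd (i : Fin 2) (f : E2 → ℝ) (x : E2) : ℝ := fderiv ℝ f x (EuclideanSpace.single i 1)

/-- Weak partial derivative on an open set. -/
def HasWeakPD (G : Set E2) (i : Fin 2) (v g : E2 → ℝ) : Prop :=
  ∀ φ : E2 → ℝ, IsTestFun G φ →
    (∫ x in G, v x * pd i φ x) = - ∫ x in G, g x * φ x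

/-- The open reference triangle with vertices `(0,0)`, `(1,0)`, `(0,1)`. -/
def refTri : Set E2 := {x : E2 | 0 < x 0 ∧ 0 < x 1 ∧ x 0 + x 1 < 1}

/-! For `z ∈ closure G` average `φ` against the mollifier `η` rescaled by `u⁻¹` towards `z`. These
averages tend to `φ z` as `u → ∞`, and their `u`-derivative is minus the integral of a flux kernel
against the gradient. Replacing the gradient by its mean value costs
`O(u ^ (-(1 + t / (1 + t))) |φ|_{1+t})`, where the integrable rate comes from passing through an
intermediate scale. Integrating in `u`, `φ` is within `C |φ|_{1+t}` of its averaged Taylor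
polynomial, uniformly on `closure G`. An affine polynomial is controlled by its values at affinely
spanning points, and there `φ` vanishes; hence the polynomial, `φ` and the mean gradient are all
bounded by `C |φ|_{1+t}`. The `L²` distance of the gradient from its mean is bounded by duality. -/

section MetricMeasure

variable {α : Type*} [MeasurableSpace α] {μ : Measure α}

lemma integral_abs_mul_abs_le_sqrt_mul_sqrt {f h : α → ℝ} (hf : MemLp f 2 μ) (hh : MemLp h 2 μ) :
    ∫ x, |f x| * |h x| ∂μ ≤ √(∫ x, f x ^ 2 ∂μ) * √(∫ x, h x ^ 2 ∂μ) := by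
  simpa [Real.sqrt_eq_rpow] using integral_mul_norm_le_Lp_mul_Lq
    Real.HolderConjugate.two_two (f := f) (g := h) (by simpa using hf) (by simpa using hh)

lemma memLp_two_tensor [SFinite μ] {K L : α → ℝ} (hK : MemLp K 2 μ) (hL : MemLp L 2 μ) :
    MemLp (fun p : α × α => K p.1 * L p.2) 2 (μ.prod μ) := by
  refine (memLp_two_iff_integrable_sq (hK.1.comp_fst.mul hL.1.comp_snd)).2 ?_
  simpa only [Pi.mul_apply, mul_pow] using hK.integrable_sq.mul_prod hL.integrable_sq

variable [IsFiniteMeasure μ]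

lemma integral_sub_mul_tensor {K L g : α → ℝ} (hK : MemLp K 2 μ) (hL : MemLp L 2 μ)
    (hg : MemLp g 2 μ) :
    ∫ p, (g p.1 - g p.2) * (K p.1 * L p.2) ∂μ.prod μ =
      (∫ x, K x * g x ∂μ) * (∫ y, L y ∂μ) - (∫ x, K x ∂μ) * ∫ y, L y * g y ∂μ := by
  have hK₁ := hK.integrable one_le_two
  have hL₁ := hL.integrable one_le_two
  have hKg : Integrable (fun x => K x * g x) μ := hK.integrable_mul hg
  have hLg : Integrable (fun y => L y * g y) μ := hL.integrable_mul hg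
  rw [← integral_prod_mul, ← integral_prod_mul,
    ← integral_sub (hKg.mul_prod hL₁) (hK₁.mul_prod hLg)]
  congr 1 with p
  ring

lemma abs_sub_mul_le_rpow_mul {X : Type*} [MetricSpace X] (g : X → ℝ) {x y : X} {a r T : ℝ}
    (ha : 0 ≤ a) (hd : T ≠ 0 → dist x y ≤ r) :
    |(g x - g y) * T| ≤ r ^ a * (|T| * |(g x - g y) / dist x y ^ a|) := by
  rcases eq_or_ne x y with rfl | hxy
  · simp
  rcases eq_or_ne T 0 with rfl | hT
  · simp
  have hpos : 0 < dist x y ^ a := Real.rpow_pos_of_pos (dist_pos.2 hxy) a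
  calc |(g x - g y) * T| = dist x y ^ a * (|T| * |(g x - g y) / dist x y ^ a|) := by
        rw [abs_mul, abs_div, abs_of_pos hpos]
        field_simp
    _ ≤ r ^ a * (|T| * |(g x - g y) / dist x y ^ a|) := by
        gcongr
        exact hd hT

variable [MetricSpace α] [OpensMeasurableSpace α] [SecondCountableTopology α]

lemma abs_integral_mul_sub_le {K L g : α → ℝ} {a r : ℝ} (ha : 0 ≤ a) (hr : 0 ≤ r) (hK : MemLp K 2 μ)
    (hL : MemLp L 2 μ) (hL₁ : ∫ y, L y ∂μ = 1) (hg : MemLp g 2 μ)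
    (hE : Integrable (fun p : α × α => (g p.1 - g p.2) ^ 2 / dist p.1 p.2 ^ (2 * a)) (μ.prod μ))
    (hd : ∀ᵐ p ∂μ.prod μ, K p.1 ≠ 0 → L p.2 ≠ 0 → dist p.1 p.2 ≤ r) :
    |(∫ x, K x * g x ∂μ) - (∫ x, K x ∂μ) * ∫ y, L y * g y ∂μ| ≤
      r ^ a * (√(∫ x, K x ^ 2 ∂μ) * √(∫ y, L y ^ 2 ∂μ)) *
        √(∫ p, (g p.1 - g p.2) ^ 2 / dist p.1 p.2 ^ (2 * a) ∂μ.prod μ) := by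
  set T : α × α → ℝ := fun p => K p.1 * L p.2
  set H : α × α → ℝ := fun p => (g p.1 - g p.2) / dist p.1 p.2 ^ a
  have hH_sq (p : α × α) : H p ^ 2 = (g p.1 - g p.2) ^ 2 / dist p.1 p.2 ^ (2 * a) := by
    rw [div_pow, ← Real.rpow_mul_natCast dist_nonneg, Nat.cast_ofNat, mul_comm a]
  have hT : MemLp T 2 (μ.prod μ) := memLp_two_tensor hK hL
  have hH : MemLp H 2 (μ.prod μ) := by
    refine (memLp_two_iff_integrable_sq ?_).2 (by simpa only [hH_sq] using hE)
    exact (hg.1.comp_fst.sub hg.1.comp_snd).div₀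
      (measurable_dist.pow_const a).aestronglyMeasurable
  have hT_sq : ∫ p, T p ^ 2 ∂μ.prod μ = (∫ x, K x ^ 2 ∂μ) * ∫ y, L y ^ 2 ∂μ := by
    rw [← integral_prod_mul]
    simp only [T, mul_pow]
  have hbound : ∀ᵐ p ∂μ.prod μ, ‖(g p.1 - g p.2) * T p‖ ≤ r ^ a * (|T p| * |H p|) := by
    filter_upwards [hd] with p hp
    exact abs_sub_mul_le_rpow_mul g ha fun hT₀ =>
      hp (left_ne_zero_of_mul hT₀) (right_ne_zero_of_mul hT₀)
  have hTH : Integrable (fun p => |T p| * |H p|) (μ.prod μ) := hT.norm.integrable_mul hH.norm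
  have hCS : ∫ p, |T p| * |H p| ∂μ.prod μ ≤ √(∫ x, K x ^ 2 ∂μ) * √(∫ y, L y ^ 2 ∂μ) *
      √(∫ p, (g p.1 - g p.2) ^ 2 / dist p.1 p.2 ^ (2 * a) ∂μ.prod μ) := by
    rw [← Real.sqrt_mul (integral_nonneg fun x => sq_nonneg _), ← hT_sq]
    simpa only [hH_sq] using integral_abs_mul_abs_le_sqrt_mul_sqrt hT hH
  calc |(∫ x, K x * g x ∂μ) - (∫ x, K x ∂μ) * ∫ y, L y * g y ∂μ|
      = ‖∫ p, (g p.1 - g p.2) * T p ∂μ.prod μ‖ := by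
        rw [integral_sub_mul_tensor hK hL hg, hL₁, mul_one, Real.norm_eq_abs]
    _ ≤ r ^ a * ∫ p, |T p| * |H p| ∂μ.prod μ := by
        rw [← integral_const_mul]
        exact norm_integral_le_of_norm_le (hTH.const_mul _) hbound
    _ ≤ r ^ a * _ := by gcongr
    _ = _ := (mul_assoc _ _ _).symm

-- Testing `abs_integral_mul_sub_le` with `K = g - ∫ L g` gives the `L²` bound by duality.
lemma integral_sub_average_sq_le {L g : α → ℝ} {a r : ℝ} (ha : 0 ≤ a) (hr : 0 ≤ r)
    (hL : MemLp L 2 μ) (hL₁ : ∫ y, L y ∂μ = 1) (hg : MemLp g 2 μ)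
    (hE : Integrable (fun p : α × α => (g p.1 - g p.2) ^ 2 / dist p.1 p.2 ^ (2 * a)) (μ.prod μ))
    (hd : ∀ᵐ p ∂μ.prod μ, dist p.1 p.2 ≤ r) :
    ∫ x, (g x - ∫ y, L y * g y ∂μ) ^ 2 ∂μ ≤ (r ^ a) ^ 2 * (∫ y, L y ^ 2 ∂μ) *
      ∫ p, (g p.1 - g p.2) ^ 2 / dist p.1 p.2 ^ (2 * a) ∂μ.prod μ := by
  set m := ∫ y, L y * g y ∂μ
  set E := ∫ p, (g p.1 - g p.2) ^ 2 / dist p.1 p.2 ^ (2 * a) ∂μ.prod μ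
  have hK : MemLp (fun x => g x - m) 2 μ := hg.sub (memLp_const m)
  have hK_sq : ∫ x, (g x - m) ^ 2 ∂μ =
      (∫ x, (g x - m) * g x ∂μ) - (∫ x, (g x - m) ∂μ) * m := by
    have hKg : Integrable (fun x => (g x - m) * g x) μ := hK.integrable_mul hg
    rw [← integral_mul_const, ← integral_sub hKg ((hK.integrable one_le_two).mul_const m)]
    congr 1 with x
    ring
  set k := √(∫ x, (g x - m) ^ 2 ∂μ)
  set B := r ^ a * √(∫ y, L y ^ 2 ∂μ) * √E
  have hk_sq : ∫ x, (g x - m) ^ 2 ∂μ = k * k :=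
    (Real.mul_self_sqrt (integral_nonneg fun x => sq_nonneg _)).symm
  have hkB : k * k ≤ B * k := by
    have hpair : |∫ x, (g x - m) ^ 2 ∂μ| ≤ r ^ a * (k * √(∫ y, L y ^ 2 ∂μ)) * √E := by
      rw [hK_sq]
      exact abs_integral_mul_sub_le ha hr hK hL hL₁ hg hE (hd.mono fun p hp _ _ => hp)
    calc k * k ≤ |∫ x, (g x - m) ^ 2 ∂μ| := hk_sq ▸ le_abs_self _
      _ ≤ _ := hpair
      _ = B * k := by ring
  have hB : 0 ≤ B := by positivity
  have hk_le : k ≤ B := le_of_not_gt fun h =>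
    (mul_lt_mul_of_pos_right h (hB.trans_lt h)).not_ge hkB
  calc ∫ x, (g x - m) ^ 2 ∂μ = k ^ 2 := by rw [hk_sq, sq]
    _ ≤ B ^ 2 := by gcongr
    _ = _ := by
      rw [mul_pow, mul_pow, Real.sq_sqrt (integral_nonneg fun y => sq_nonneg _),
        Real.sq_sqrt (integral_nonneg fun p => by positivity)]

end MetricMeasure

section Gagliardo

variable {G : Set E2} {t : ℝ} {g : E2 → ℝ}

lemma gagSq_nonneg (t : ℝ) (G : Set E2) (g : E2 → ℝ) : 0 ≤ gagSq t G g :=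
  integral_nonneg fun x => integral_nonneg fun y => by positivity

lemma GagFin.gagSq_eq_integral_prod (hE : GagFin t G g) :
    gagSq t G g = ∫ p, (g p.1 - g p.2) ^ 2 / dist p.1 p.2 ^ (2 * (1 + t))
      ∂(volume.restrict G).prod (volume.restrict G) := by
  rw [mul_add, mul_one, integral_prod _ hE]
  rfl

lemma ae_mem_prod_restrict (hGm : MeasurableSet G) :
    ∀ᵐ p ∂(volume.restrict G).prod (volume.restrict G), p ∈ G ×ˢ G := by
  rw [Measure.prod_restrict]
  exact ae_restrict_mem (hGm.prod hGm)

lemma GagFin.abs_setIntegral_mul_sub_le [IsFiniteMeasure (volume.restrict G)]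
    {K L : E2 → ℝ} {r : ℝ} (hE : GagFin t G g) (hGm : MeasurableSet G) (ht : -1 ≤ t) (hr : 0 ≤ r)
    (hK : MemLp K 2 (volume.restrict G)) (hL : MemLp L 2 (volume.restrict G))
    (hL₁ : ∫ y in G, L y = 1) (hg : MemLp g 2 (volume.restrict G))
    (hd : ∀ x ∈ G, ∀ y ∈ G, K x ≠ 0 → L y ≠ 0 → dist x y ≤ r) :
    |(∫ x in G, K x * g x) - (∫ x in G, K x) * ∫ y in G, L y * g y| ≤
      r ^ (1 + t) * (√(∫ x in G, K x ^ 2) * √(∫ y in G, L y ^ 2)) * √(gagSq t G g) := by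
  rw [hE.gagSq_eq_integral_prod]
  refine abs_integral_mul_sub_le (by linarith) hr hK hL hL₁ hg (by rwa [mul_add, mul_one]) ?_
  filter_upwards [ae_mem_prod_restrict hGm] with p hp using hd _ hp.1 _ hp.2

lemma GagFin.setIntegral_sub_average_sq_le [IsFiniteMeasure (volume.restrict G)]
    {L : E2 → ℝ} (hE : GagFin t G g) (hGm : MeasurableSet G) (hGb : Bornology.IsBounded G)
    (ht : -1 ≤ t) (hL : MemLp L 2 (volume.restrict G)) (hL₁ : ∫ y in G, L y = 1)
    (hg : MemLp g 2 (volume.restrict G)) :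
    ∫ x in G, (g x - ∫ y in G, L y * g y) ^ 2 ≤
      (diam G ^ (1 + t)) ^ 2 * (∫ y in G, L y ^ 2) * gagSq t G g := by
  rw [hE.gagSq_eq_integral_prod]
  refine integral_sub_average_sq_le (by linarith) diam_nonneg hL hL₁ hg
    (by rwa [mul_add, mul_one]) ?_
  filter_upwards [ae_mem_prod_restrict hGm] with p hp using dist_le_diam_of_mem hGb hp.1 hp.2

end Gagliardo

section ConvexDilation

variable {E : Type*} [NormedAddCommGroup E] [NormedSpace ℝ E] {G : Set E} {z : E} {u : ℝ}

lemma mem_of_add_smul_sub_mem (hG : Convex ℝ G) (hGo : IsOpen G) (hz : z ∈ closure G)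
    (hu : 1 ≤ u) {y : E} (hy : z + u • (y - z) ∈ G) : y ∈ G := by
  have hu₀ : 0 < u := by linarith
  have hcombo : (1 - u⁻¹) • z + u⁻¹ • (z + u • (y - z)) ∈ interior G :=
    hG.combo_closure_interior_mem_interior hz (hGo.interior_eq.symm ▸ hy)
      (sub_nonneg.2 (inv_le_one_of_one_le₀ hu)) (inv_pos.2 hu₀) (by ring)
  have hy_eq : (1 - u⁻¹) • z + u⁻¹ • (z + u • (y - z)) = y := by
    rw [smul_add, inv_smul_smul₀ hu₀.ne', sub_smul, one_smul]
    abel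
  exact interior_subset (hy_eq ▸ hcombo)

lemma setIntegral_comp_add_smul_sub [MeasurableSpace E] [BorelSpace E] [FiniteDimensional ℝ E]
    {F : Type*} [NormedAddCommGroup F] [NormedSpace ℝ F] (μ : Measure E) [μ.IsAddHaarMeasure]
    (hG : Convex ℝ G) (hGo : IsOpen G) (hz : z ∈ closure G) (hu : 1 ≤ u) {f : E → F}
    (hf : Function.support f ⊆ G) :
    ∫ x in G, f (z + u • (x - z)) ∂μ = (u ^ Module.finrank ℝ E)⁻¹ • ∫ x in G, f x ∂μ := by
  have hf' : ∀ x ∉ G, f (z + u • (x - z)) = 0 := fun x hx =>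
    Function.notMem_support.1 fun h => hx (mem_of_add_smul_sub_mem hG hGo hz hu (hf h))
  have hf₀ : ∀ x ∉ G, f x = 0 := fun x hx => Function.notMem_support.1 (hx <| hf ·)
  rw [setIntegral_eq_integral_of_forall_compl_eq_zero hf',
    setIntegral_eq_integral_of_forall_compl_eq_zero hf₀,
    integral_sub_right_eq_self (fun x => f (z + u • x)) z,
    Measure.integral_comp_smul μ (fun x => f (z + x)) u, integral_add_left_eq_self f z,
    abs_of_nonneg (by positivity)]

end ConvexDilation

lemma memLp_restrict_of_continuousOn_closure {X F : Type*} [PseudoMetricSpace X] [ProperSpace X]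
    [MeasurableSpace X] [OpensMeasurableSpace X] {μ : Measure X} [IsFiniteMeasureOnCompacts μ]
    [NormedAddCommGroup F] {G : Set X} (hGb : Bornology.IsBounded G) {f : X → F}
    (hf : ContinuousOn f (closure G)) (q : ℝ≥0∞) : MemLp f q (μ.restrict G) := by
  have hcpt : IsCompact (closure G) := hGb.isCompact_closure
  have : IsFiniteMeasure (μ.restrict (closure G)) :=
    isFiniteMeasure_restrict.2 hcpt.measure_lt_top.ne
  obtain ⟨M, hM⟩ := hcpt.exists_bound_of_continuousOn hf
  refine (MemLp.of_bound (hf.aestronglyMeasurable_of_isCompact hcpt isClosed_closure.measurableSet)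
    M ?_).mono_measure (Measure.restrict_mono subset_closure le_rfl)
  filter_upwards [ae_restrict_mem isClosed_closure.measurableSet] with x hx using hM x hx

lemma norm_lim_sub_le_of_norm_deriv_le_rpow {F : Type*} [NormedAddCommGroup F] [NormedSpace ℝ F]
    {f f' : ℝ → F} {l : F} {M κ : ℝ} (hκ : 0 < κ) (hf : ∀ u, 1 ≤ u → HasDerivAt f (f' u) u)
    (hf' : ∀ u, 1 ≤ u → ‖f' u‖ ≤ M * u ^ (-(1 + κ))) (hl : Tendsto f atTop (𝓝 l)) :
    ‖l - f 1‖ ≤ M / κ := by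
  have hM : 0 ≤ M := by simpa using (norm_nonneg _).trans (hf' 1 le_rfl)
  set B : ℝ → ℝ := fun u => M / κ * (1 - u ^ (-κ))
  have hB : ∀ u, 1 ≤ u → HasDerivAt B (M * u ^ (-(1 + κ))) u := by
    intro u hu
    have hpow := (Real.hasDerivAt_rpow_const (p := -κ) (Or.inl (by linarith : u ≠ 0)))
    refine ((hpow.const_sub 1).const_mul (M / κ)).congr_deriv ?_
    rw [show -κ - 1 = -(1 + κ) by ring]
    field_simp
  have hbound : ∀ u, 1 ≤ u → ‖f u - f 1‖ ≤ M / κ := by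
    intro u hu
    have hfB : ‖f u - f 1‖ ≤ B u := image_norm_le_of_norm_deriv_right_le_deriv_boundary'
      (fun v hv => ((hf v hv.1).sub_const _).continuousAt.continuousWithinAt)
      (fun v hv => ((hf v hv.1).sub_const _).hasDerivWithinAt) (by simp [B])
      (fun v hv => (hB v hv.1).continuousAt.continuousWithinAt)
      (fun v hv => (hB v hv.1).hasDerivWithinAt) (fun v hv => hf' v hv.1) (right_mem_Icc.2 hu)
    have hpow : 0 ≤ u ^ (-κ) := Real.rpow_nonneg (by linarith) _
    exact hfB.trans (mul_le_of_le_one_right (by positivity) (by linarith))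
  exact le_of_tendsto (hl.sub_const (f 1)).norm (eventually_atTop.2 ⟨1, hbound⟩)

lemma exists_affine_coeff_le {E : Type*} [NormedAddCommGroup E] [InnerProductSpace ℝ E]
    [FiniteDimensional ℝ E] {P : Set E} (hP : affineSpan ℝ P = ⊤) :
    ∃ Γ : ℝ, 0 ≤ Γ ∧ ∀ (q : ℝ) (c : E) (M : ℝ), 0 ≤ M → (∀ z ∈ P, |q + inner ℝ z c| ≤ M) →
      |q| ≤ Γ * M ∧ ‖c‖ ≤ Γ * M := by
  obtain ⟨Q, hQP, hQ, hQ_ind⟩ := exists_affineIndependent ℝ E P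
  have : Fintype Q := (finite_set_of_fin_dim_affineIndependent ℝ hQ_ind).fintype
  let T : ℝ × E →ₗ[ℝ] Q → ℝ :=
    LinearMap.pi fun z => LinearMap.fst ℝ ℝ E + innerₛₗ ℝ (z : E) ∘ₗ LinearMap.snd ℝ ℝ E
  have hT : T.ker = ⊥ := by
    refine LinearMap.ker_eq_bot'.2 fun ⟨q, c⟩ h => ?_
    have hconst : (innerₛₗ ℝ c).toAffineMap = AffineMap.const ℝ E (-q) := by
      refine AffineMap.ext_on (hQ.trans hP) fun z hz => ?_
      have hz₀ : q + inner ℝ z c = 0 := congrFun h ⟨z, hz⟩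
      simpa [real_inner_comm] using eq_neg_of_add_eq_zero_right hz₀
    have hval (z : E) : inner ℝ c z = -q := congrArg (fun A : E →ᵃ[ℝ] ℝ => A z) hconst
    have hq : q = 0 := by simpa using hval 0
    have hc : c = 0 := by simpa [hq] using hval c
    rw [hq, hc, Prod.mk_zero_zero]
  obtain ⟨Γ, -, hΓ⟩ := T.exists_antilipschitzWith hT
  refine ⟨Γ, Γ.2, fun q c M hM hqc => ?_⟩
  have hnorm : ‖(q, c)‖ ≤ Γ * M := calc
    ‖(q, c)‖ ≤ Γ * ‖T (q, c)‖ := hΓ.le_mul_norm (map_zero T) _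
    _ ≤ Γ * M := by
      gcongr
      exact (pi_norm_le_iff_of_nonneg hM).2 fun z => hqc z (hQP z.2)
  exact ⟨(norm_fst_le (q, c)).trans hnorm, (norm_snd_le (q, c)).trans hnorm⟩

lemma exists_bound_of_approx_affine {E : Type*} [NormedAddCommGroup E] [InnerProductSpace ℝ E]
    [FiniteDimensional ℝ E] {P : Set E} (hP : affineSpan ℝ P = ⊤) {K : Set E}
    (hK : Bornology.IsBounded K) (hPK : P ⊆ K) :
    ∃ C : ℝ, ∀ (φ : E → ℝ) (q : ℝ) (c : E) (M : ℝ), 0 ≤ M →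
      (∀ z ∈ K, |φ z - (q + inner ℝ z c)| ≤ M) → (∀ z ∈ P, φ z = 0) →
      (∀ z ∈ K, |φ z| ≤ C * M) ∧ ‖c‖ ≤ C * M := by
  obtain ⟨Γ, hΓ, hcoeff⟩ := exists_affine_coeff_le hP
  obtain ⟨ρ, hρ, hKρ⟩ := hK.exists_pos_norm_le
  refine ⟨1 + Γ * (1 + ρ), fun φ q c M hM hφ hφP => ?_⟩
  obtain ⟨hq, hc⟩ := hcoeff q c M hM fun z hz => by
    simpa only [hφP z hz, zero_sub, abs_neg] using hφ z (hPK hz)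
  refine ⟨fun z hz => ?_, hc.trans ?_⟩
  · have hinner : |inner ℝ z c| ≤ ρ * (Γ * M) := (abs_real_inner_le_norm z c).trans <|
      mul_le_mul (hKρ z hz) hc (norm_nonneg _) hρ.le
    calc |φ z| = |(φ z - (q + inner ℝ z c)) + (q + inner ℝ z c)| := by rw [sub_add_cancel]
      _ ≤ M + (Γ * M + ρ * (Γ * M)) := (abs_add_le _ _).trans <|
        add_le_add (hφ z hz) <| (abs_add_le _ _).trans (add_le_add hq hinner)
      _ = (1 + Γ * (1 + ρ)) * M := by ring
  · gcongr
    linarith [mul_nonneg hΓ hρ.le]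

/-- `η` is a mollifier carried by `G`: a nonnegative test function of `G` with unit mass. Its
rescalings average functions on `G`. -/
structure IsMollifier (G : Set E2) (η : E2 → ℝ) : Prop where
  isTestFun : IsTestFun G η
  nonneg : ∀ x, 0 ≤ η x
  setIntegral_eq_one : ∫ x in G, η x = 1

/-- The rescaling by `u⁻¹` of the mollifier `η` towards the point `z`. It has unit mass and, for
`G` convex and `z ∈ closure G`, lives in `G` within distance `diam G / u` of `z`. -/
def mollKernel (η : E2 → ℝ) (z : E2) (u : ℝ) (x : E2) : ℝ := u ^ 2 * η (z + u • (x - z))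

/-- The `i`-th component of the flux of the flow `u ↦ mollKernel η z u`, whose `u`-derivative is
the divergence of this vector field. -/
def fluxKernel (η : E2 → ℝ) (z : E2) (u : ℝ) (i : Fin 2) (x : E2) : ℝ :=
  (x i - z i) * (u * η (z + u • (x - z)))

lemma exists_isMollifier {G : Set E2} (hGo : IsOpen G) (hne : G.Nonempty) :
    ∃ η, IsMollifier G η := by
  obtain ⟨p, hp⟩ := hne
  obtain ⟨ε, hε, hball⟩ := nhds_basis_closedBall.mem_iff.1 (hGo.mem_nhds hp)
  let f : ContDiffBump p := ⟨ε / 2, ε, by linarith, by linarith⟩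
  have hsupp : tsupport (f.normed volume) ⊆ G := f.tsupport_normed_eq.trans_subset hball
  refine ⟨f.normed volume, ⟨f.contDiff_normed, f.hasCompactSupport_normed, hsupp⟩,
    f.nonneg_normed, ?_⟩
  rw [setIntegral_eq_integral_of_forall_compl_eq_zero, f.integral_normed]
  exact fun x hx => image_eq_zero_of_notMem_tsupport fun h => hx (hsupp h)

namespace IsMollifier

variable {G : Set E2} {η : E2 → ℝ} {z : E2} {u : ℝ}

lemma contDiff (hη : IsMollifier G η) : ContDiff ℝ (⊤ : ℕ∞) η := hη.isTestFun.1

lemma continuous (hη : IsMollifier G η) : Continuous η := hη.contDiff.continuous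

lemma mem_of_ne_zero (hη : IsMollifier G η) {x : E2} (hx : η x ≠ 0) : x ∈ G :=
  hη.isTestFun.2.2 (subset_tsupport _ hx)

lemma memLp (hη : IsMollifier G η) (hGb : Bornology.IsBounded G) :
    MemLp η 2 (volume.restrict G) :=
  memLp_restrict_of_continuousOn_closure hGb hη.continuous.continuousOn 2

lemma continuous_mollKernel (hη : IsMollifier G η) (z : E2) (u : ℝ) :
    Continuous (mollKernel η z u) := by
  have := hη.continuous
  unfold mollKernel
  fun_prop

lemma contDiff_fluxKernel (hη : IsMollifier G η) (z : E2) (u : ℝ) (i : Fin 2) :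
    ContDiff ℝ (⊤ : ℕ∞) (fluxKernel η z u i) := by
  have := hη.contDiff
  unfold fluxKernel
  fun_prop

lemma memLp_mollKernel (hη : IsMollifier G η) (hGb : Bornology.IsBounded G) (z : E2) (u : ℝ) :
    MemLp (mollKernel η z u) 2 (volume.restrict G) :=
  memLp_restrict_of_continuousOn_closure hGb (hη.continuous_mollKernel z u).continuousOn 2

lemma memLp_fluxKernel (hη : IsMollifier G η) (hGb : Bornology.IsBounded G) (z : E2) (u : ℝ)
    (i : Fin 2) : MemLp (fluxKernel η z u i) 2 (volume.restrict G) :=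
  memLp_restrict_of_continuousOn_closure hGb
    (hη.contDiff_fluxKernel z u i).continuous.continuousOn 2

lemma mollKernel_nonneg (hη : IsMollifier G η) (z : E2) (u : ℝ) (x : E2) :
    0 ≤ mollKernel η z u x := mul_nonneg (sq_nonneg u) (hη.nonneg _)

lemma dist_le_diam_div (hη : IsMollifier G η) (hGb : Bornology.IsBounded G)
    (hz : z ∈ closure G) (hu : 0 < u) {x : E2} (hx : η (z + u • (x - z)) ≠ 0) :
    dist x z ≤ diam G / u := by
  have hdist : dist (z + u • (x - z)) z ≤ diam G := diam_closure G ▸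
    dist_le_diam_of_mem hGb.closure (subset_closure (hη.mem_of_ne_zero hx)) hz
  rw [dist_self_add_left, norm_smul, Real.norm_of_nonneg hu.le, ← dist_eq_norm] at hdist
  rwa [le_div_iff₀' hu]

lemma abs_apply_sub_le_diam (hGb : Bornology.IsBounded G) (hz : z ∈ closure G) {x : E2}
    (hx : x ∈ G) (i : Fin 2) : |x i - z i| ≤ diam G := calc
  |x i - z i| ≤ ‖x - z‖ := PiLp.norm_apply_le (x - z) i
  _ ≤ diam G := by
    rw [← dist_eq_norm, ← diam_closure G]
    exact dist_le_diam_of_mem hGb.closure (subset_closure hx) hz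

lemma setIntegral_comp_dilation (hη : IsMollifier G η) (hGc : Convex ℝ G) (hGo : IsOpen G)
    (hz : z ∈ closure G) (hu : 1 ≤ u) {f : E2 → ℝ} (hf : ∀ x, η x = 0 → f x = 0) :
    ∫ x in G, f (z + u • (x - z)) = (u ^ 2)⁻¹ * ∫ x in G, f x := by
  rw [setIntegral_comp_add_smul_sub volume hGc hGo hz hu
    fun x hx => hη.mem_of_ne_zero (mt (hf x) hx), finrank_euclideanSpace_fin, smul_eq_mul]

lemma setIntegral_mollKernel (hη : IsMollifier G η) (hGc : Convex ℝ G) (hGo : IsOpen G)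
    (hz : z ∈ closure G) (hu : 1 ≤ u) : ∫ x in G, mollKernel η z u x = 1 := by
  have hu₀ : u ^ 2 ≠ 0 := by positivity
  simp only [mollKernel]
  rw [integral_const_mul, hη.setIntegral_comp_dilation hGc hGo hz hu fun _ => id,
    hη.setIntegral_eq_one, mul_one, mul_inv_cancel₀ hu₀]

lemma sqrt_setIntegral_mollKernel_sq (hη : IsMollifier G η) (hGc : Convex ℝ G) (hGo : IsOpen G)
    (hz : z ∈ closure G) (hu : 1 ≤ u) :
    √(∫ x in G, mollKernel η z u x ^ 2) = u * √(∫ x in G, η x ^ 2) := by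
  have hu₀ : 0 < u := by linarith
  have hsq : ∫ x in G, mollKernel η z u x ^ 2 = u ^ 2 * ∫ x in G, η x ^ 2 := by
    simp only [mollKernel, mul_pow]
    rw [integral_const_mul, hη.setIntegral_comp_dilation (f := fun x => η x ^ 2) hGc hGo hz hu
      fun x hx => by rw [hx, zero_pow two_ne_zero]]
    field_simp
  rw [hsq, Real.sqrt_mul (sq_nonneg u), Real.sqrt_sq hu₀.le]

lemma fluxKernel_eq_comp (η : E2 → ℝ) (z : E2) (u : ℝ) (i : Fin 2) (x : E2) :
    fluxKernel η z u i x = (fun y : E2 => (y i - z i) * η y) (z + u • (x - z)) := by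
  simp only [fluxKernel, PiLp.add_apply, PiLp.smul_apply, PiLp.sub_apply, smul_eq_mul]
  ring

lemma setIntegral_fluxKernel (hη : IsMollifier G η) (hGc : Convex ℝ G) (hGo : IsOpen G)
    (hz : z ∈ closure G) (hu : 1 ≤ u) (i : Fin 2) :
    ∫ x in G, fluxKernel η z u i x = (u ^ 2)⁻¹ * ∫ x in G, (x i - z i) * η x := by
  simp only [fluxKernel_eq_comp]
  exact hη.setIntegral_comp_dilation (f := fun x : E2 => (x i - z i) * η x) hGc hGo hz hu
    fun x hx => mul_eq_zero_of_right _ hx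

lemma sqrt_setIntegral_fluxKernel_sq_le (hη : IsMollifier G η) (hGc : Convex ℝ G)
    (hGo : IsOpen G) (hGb : Bornology.IsBounded G) (hz : z ∈ closure G) (hu : 1 ≤ u)
    (i : Fin 2) :
    √(∫ x in G, fluxKernel η z u i x ^ 2) ≤ u⁻¹ * diam G * √(∫ x in G, η x ^ 2) := by
  have : 0 < u := by linarith
  have hF : MemLp (fun x : E2 => (x i - z i) * η x) 2 (volume.restrict G) :=
    memLp_restrict_of_continuousOn_closure hGb
      (by have := hη.continuous; fun_prop) 2
  have hle : ∫ x in G, ((x i - z i) * η x) ^ 2 ≤ diam G ^ 2 * ∫ x in G, η x ^ 2 := by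
    rw [← integral_const_mul]
    refine setIntegral_mono_on hF.integrable_sq ((hη.memLp hGb).integrable_sq.const_mul _)
      hGo.measurableSet fun x hx => ?_
    rw [mul_pow, ← sq_abs (x i - z i)]
    gcongr
    exact abs_apply_sub_le_diam hGb hz hx i
  have hsq : ∫ x in G, fluxKernel η z u i x ^ 2 =
      (u ^ 2)⁻¹ * ∫ x in G, ((x i - z i) * η x) ^ 2 := by
    simp only [fluxKernel_eq_comp]
    exact hη.setIntegral_comp_dilation (f := fun x : E2 => ((x i - z i) * η x) ^ 2)
      hGc hGo hz hu fun x hx => by rw [hx, mul_zero, zero_pow two_ne_zero]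
  calc √(∫ x in G, fluxKernel η z u i x ^ 2)
      ≤ √((u⁻¹ * diam G) ^ 2 * ∫ x in G, η x ^ 2) := by
        rw [hsq, mul_pow, inv_pow, mul_assoc]
        gcongr
    _ = u⁻¹ * diam G * √(∫ x in G, η x ^ 2) := by
        rw [Real.sqrt_mul (sq_nonneg _), Real.sqrt_sq (by positivity)]

lemma abs_setIntegral_sub_mul_le (hη : IsMollifier G η) (hGo : IsOpen G)
    (hGb : Bornology.IsBounded G) (hz : z ∈ closure G) (i : Fin 2) :
    |∫ x in G, (x i - z i) * η x| ≤ diam G := by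
  have : IsFiniteMeasure (volume.restrict G) :=
    isFiniteMeasure_restrict.2 hGb.measure_lt_top.ne
  calc |∫ x in G, (x i - z i) * η x| ≤ ∫ x in G, diam G * η x := by
        rw [← Real.norm_eq_abs]
        refine norm_integral_le_of_norm_le
          (((hη.memLp hGb).integrable one_le_two).const_mul _) ?_
        filter_upwards [ae_restrict_mem hGo.measurableSet] with x hx
        rw [norm_mul, Real.norm_of_nonneg (hη.nonneg x)]
        exact mul_le_mul_of_nonneg_right (abs_apply_sub_le_diam hGb hz hx i) (hη.nonneg x)
    _ = diam G := by rw [integral_const_mul, hη.setIntegral_eq_one, mul_one]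

lemma isTestFun_fluxKernel (hη : IsMollifier G η) (hGc : Convex ℝ G) (hGo : IsOpen G)
    (hGb : Bornology.IsBounded G) (hz : z ∈ closure G) (hu : 1 ≤ u) (i : Fin 2) :
    IsTestFun G (fluxKernel η z u i) := by
  have hpre : tsupport (fluxKernel η z u i) ⊆ {x | z + u • (x - z) ∈ tsupport η} :=
    closure_minimal
      (fun x hx => subset_tsupport _ (right_ne_zero_of_mul (right_ne_zero_of_mul hx)))
      ((isClosed_tsupport η).preimage (by fun_prop))
  have hsub : tsupport (fluxKernel η z u i) ⊆ G := fun x hx =>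
    mem_of_add_smul_sub_mem hGc hGo hz hu (hη.isTestFun.2.2 (hpre hx))
  exact ⟨hη.contDiff_fluxKernel z u i, hGb.isCompact_closure.of_isClosed_subset
    (isClosed_tsupport _) (hsub.trans subset_closure), hsub⟩

lemma pd_fluxKernel (hη : IsMollifier G η) (z : E2) (u : ℝ) (i : Fin 2) (x : E2) :
    pd i (fluxKernel η z u i) x = u * η (z + u • (x - z)) +
      u ^ 2 * ((x i - z i) *
        fderiv ℝ η (z + u • (x - z)) (EuclideanSpace.single i 1)) := by
  have hcoord : HasFDerivAt (fun x : E2 => x i - z i) (EuclideanSpace.proj i : E2 →L[ℝ] ℝ) x :=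
    (EuclideanSpace.proj i : E2 →L[ℝ] ℝ).hasFDerivAt.sub_const _
  have hdil : HasFDerivAt (fun x : E2 => z + u • (x - z)) (u • ContinuousLinearMap.id ℝ E2) x :=
    (((hasFDerivAt_id x).sub_const z).const_smul u).const_add z
  have hη' : DifferentiableAt ℝ η (z + u • (x - z)) :=
    hη.contDiff.contDiffAt.differentiableAt (by simp)
  have hflux : HasFDerivAt (fluxKernel η z u i) _ x :=
    hcoord.mul ((hη'.hasFDerivAt.comp x hdil).const_mul u)
  have hproj : (EuclideanSpace.proj i : E2 →L[ℝ] ℝ) (EuclideanSpace.single i 1) = 1 := by simp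
  rw [pd, hflux.fderiv]
  simp only [add_apply, smul_apply, ContinuousLinearMap.comp_apply, ContinuousLinearMap.id_apply,
    map_smul, smul_eq_mul, hproj]
  ring

lemma sum_pd_fluxKernel (hη : IsMollifier G η) (z : E2) (u : ℝ) (x : E2) :
    ∑ i, pd i (fluxKernel η z u i) x =
      2 * u * η (z + u • (x - z)) + u ^ 2 * fderiv ℝ η (z + u • (x - z)) (x - z) := by
  have hcoord : x - z = ∑ i, (x i - z i) • EuclideanSpace.single i (1 : ℝ) := by
    ext j
    fin_cases j <;> simp
  have hlin (L : E2 →L[ℝ] ℝ) : L (x - z) = ∑ i, (x i - z i) * L (EuclideanSpace.single i 1) := by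
    rw [hcoord, map_sum]
    simp only [map_smul, smul_eq_mul]
  simp only [hη.pd_fluxKernel, Finset.sum_add_distrib, ← Finset.mul_sum, ← hlin,
    Fin.sum_univ_two]
  ring

lemma hasDerivAt_mollKernel (hη : IsMollifier G η) (z : E2) (u : ℝ) (x : E2) :
    HasDerivAt (fun u => mollKernel η z u x) (∑ i, pd i (fluxKernel η z u i) x) u := by
  have hη' : DifferentiableAt ℝ η (z + u • (x - z)) :=
    hη.contDiff.contDiffAt.differentiableAt (by simp)
  have hdil : HasDerivAt (fun u : ℝ => z + u • (x - z)) (x - z) u := by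
    simpa using ((hasDerivAt_id u).smul_const (x - z)).const_add z
  refine ((hasDerivAt_pow 2 u).mul (hη'.hasFDerivAt.comp_hasDerivAt u hdil)).congr_deriv ?_
  rw [hη.sum_pd_fluxKernel, Nat.cast_ofNat, pow_one]
  rfl

end IsMollifier

lemma exists_intermediate_scale {u t : ℝ} (hu : 1 ≤ u) (ht : 0 < t) :
    ∃ v, 1 ≤ v ∧ v ≤ u ∧ v ^ (1 + t) = u ∧ u ^ (-(1 + t / (1 + t))) = (u ^ 2)⁻¹ * v := by
  have hu₀ : 0 < u := by linarith
  have ht' : 0 < 1 + t := by linarith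
  refine ⟨u ^ (1 / (1 + t)), Real.one_le_rpow hu (by positivity),
    Real.rpow_le_self_of_one_le hu ((div_le_one ht').2 (by linarith)), ?_, ?_⟩
  · rw [← Real.rpow_mul hu₀.le, one_div_mul_cancel ht'.ne', Real.rpow_one]
  · rw [← Real.rpow_natCast u 2, ← Real.rpow_neg hu₀.le, ← Real.rpow_add hu₀]
    congr 1
    push_cast
    field_simp
    ring

namespace IsMollifier

variable {G : Set E2} {η : E2 → ℝ} {z : E2} {u t : ℝ}

lemma abs_setIntegral_mollKernel_sub_le (hη : IsMollifier G η) (hGc : Convex ℝ G)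
    (hGo : IsOpen G) (hGb : Bornology.IsBounded G) (hz : z ∈ closure G) (hu : 1 ≤ u)
    {g : E2 → ℝ} (hg : MemLp g 2 (volume.restrict G)) (hE : GagFin t G g) (ht : -1 ≤ t) :
    |(∫ x in G, mollKernel η z u x * g x) - ∫ x in G, η x * g x| ≤
      diam G ^ (1 + t) * (u * ∫ x in G, η x ^ 2) * √(gagSq t G g) := by
  have : IsFiniteMeasure (volume.restrict G) :=
    isFiniteMeasure_restrict.2 hGb.measure_lt_top.ne
  have hcmp := hE.abs_setIntegral_mul_sub_le hGo.measurableSet ht diam_nonneg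
    (hη.memLp_mollKernel hGb z u) (hη.memLp hGb) hη.setIntegral_eq_one hg
    fun x hx y hy _ _ => dist_le_diam_of_mem hGb hx hy
  rwa [hη.setIntegral_mollKernel hGc hGo hz hu, one_mul,
    hη.sqrt_setIntegral_mollKernel_sq hGc hGo hz hu, mul_assoc u,
    Real.mul_self_sqrt (integral_nonneg fun x => sq_nonneg _)] at hcmp

lemma abs_setIntegral_fluxKernel_sub_mollKernel_le (hη : IsMollifier G η) (hGc : Convex ℝ G)
    (hGo : IsOpen G) (hGb : Bornology.IsBounded G) (hz : z ∈ closure G) {v : ℝ} (hv : 1 ≤ v)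
    (hvu : v ≤ u) {g : E2 → ℝ} (hg : MemLp g 2 (volume.restrict G)) (hE : GagFin t G g)
    (ht : -1 ≤ t) (i : Fin 2) :
    |(∫ x in G, fluxKernel η z u i x * g x) -
        (∫ x in G, fluxKernel η z u i x) * ∫ x in G, mollKernel η z v x * g x| ≤
      (2 * diam G / v) ^ (1 + t) * (u⁻¹ * diam G * (v * ∫ x in G, η x ^ 2)) *
        √(gagSq t G g) := by
  have : IsFiniteMeasure (volume.restrict G) :=
    isFiniteMeasure_restrict.2 hGb.measure_lt_top.ne
  have hv₀ : 0 < v := by linarith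
  have hu : 1 ≤ u := hv.trans hvu
  have hdist : ∀ x ∈ G, ∀ y ∈ G, fluxKernel η z u i x ≠ 0 → mollKernel η z v y ≠ 0 →
      dist x y ≤ 2 * diam G / v := by
    intro x _ y _ hx hy
    calc dist x y ≤ dist x z + dist y z := dist_triangle_right x y z
      _ ≤ diam G / u + diam G / v := add_le_add
        (hη.dist_le_diam_div hGb hz (hv₀.trans_le hvu)
          (right_ne_zero_of_mul (right_ne_zero_of_mul hx)))
        (hη.dist_le_diam_div hGb hz hv₀ (right_ne_zero_of_mul hy))
      _ ≤ diam G / v + diam G / v := by gcongr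
      _ = 2 * diam G / v := by ring
  refine (hE.abs_setIntegral_mul_sub_le hGo.measurableSet ht (by positivity)
    (hη.memLp_fluxKernel hGb z u i) (hη.memLp_mollKernel hGb z v)
    (hη.setIntegral_mollKernel hGc hGo hz hv) hg hdist).trans ?_
  have hnorms : √(∫ x in G, fluxKernel η z u i x ^ 2) * √(∫ x in G, mollKernel η z v x ^ 2) ≤
      u⁻¹ * diam G * (v * ∫ x in G, η x ^ 2) := calc
    _ ≤ u⁻¹ * diam G * √(∫ x in G, η x ^ 2) * (v * √(∫ x in G, η x ^ 2)) := by
      rw [hη.sqrt_setIntegral_mollKernel_sq hGc hGo hz hv]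
      gcongr
      exact hη.sqrt_setIntegral_fluxKernel_sq_le hGc hGo hGb hz hu i
    _ = u⁻¹ * diam G * (v * (√(∫ x in G, η x ^ 2) * √(∫ x in G, η x ^ 2))) := by ring
    _ = u⁻¹ * diam G * (v * ∫ x in G, η x ^ 2) := by
      rw [Real.mul_self_sqrt (integral_nonneg fun x => sq_nonneg _)]
  gcongr

-- Comparing directly with the average at scale `1` would only give the nonintegrable rate `u⁻¹`;
-- passing through the average at scale `v = u ^ (1 / (1 + t))` balances the two errors.
lemma abs_setIntegral_fluxKernel_sub_le (hη : IsMollifier G η) (hGc : Convex ℝ G)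
    (hGo : IsOpen G) (hGb : Bornology.IsBounded G) (hz : z ∈ closure G) (hu : 1 ≤ u)
    {g : E2 → ℝ} (hg : MemLp g 2 (volume.restrict G)) (hE : GagFin t G g) (ht : 0 < t)
    (i : Fin 2) :
    |(∫ x in G, fluxKernel η z u i x * g x) -
        (∫ x in G, fluxKernel η z u i x) * ∫ x in G, η x * g x| ≤
      ((2 * diam G) ^ (1 + t) + diam G ^ (1 + t)) * (diam G * ∫ x in G, η x ^ 2) *
        √(gagSq t G g) * u ^ (-(1 + t / (1 + t))) := by
  have : 0 < u := by linarith
  set R := diam G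
  set N := ∫ x in G, η x ^ 2
  set S := √(gagSq t G g)
  set I := ∫ x in G, fluxKernel η z u i x
  obtain ⟨v, hv, hvu, hv_pow, hrate⟩ := exists_intermediate_scale hu ht
  set A := ∫ x in G, mollKernel η z v x * g x
  have : 0 ≤ R := diam_nonneg
  have hnear : |(∫ x in G, fluxKernel η z u i x * g x) - I * A| ≤
      (2 * R) ^ (1 + t) * (R * N) * S * ((u ^ 2)⁻¹ * v) := calc
    _ ≤ (2 * R / v) ^ (1 + t) * (u⁻¹ * R * (v * N)) * S :=
      hη.abs_setIntegral_fluxKernel_sub_mollKernel_le hGc hGo hGb hz hv hvu hg hE (by linarith) i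
    _ = _ := by
      rw [Real.div_rpow (by positivity) (by positivity), hv_pow]
      field_simp
  have hI : |I| ≤ (u ^ 2)⁻¹ * R := by
    simp only [I]
    rw [hη.setIntegral_fluxKernel hGc hGo hz hu, abs_mul, abs_of_nonneg (by positivity)]
    gcongr
    exact hη.abs_setIntegral_sub_mul_le hGo hGb hz i
  have hfar : |I * (A - ∫ x in G, η x * g x)| ≤
      R ^ (1 + t) * (R * N) * S * ((u ^ 2)⁻¹ * v) := calc
    _ ≤ ((u ^ 2)⁻¹ * R) * (R ^ (1 + t) * (v * N) * S) := by
      rw [abs_mul]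
      gcongr
      exact hη.abs_setIntegral_mollKernel_sub_le hGc hGo hGb hz hv hg hE (by linarith)
    _ = _ := by ring
  calc |(∫ x in G, fluxKernel η z u i x * g x) - I * ∫ x in G, η x * g x|
      = |((∫ x in G, fluxKernel η z u i x * g x) - I * A) +
          I * (A - ∫ x in G, η x * g x)| := by congr 1; ring
    _ ≤ _ := (abs_add_le _ _).trans (add_le_add hnear hfar)
    _ = _ := by rw [hrate]; ring

lemma exists_norm_sum_pd_fluxKernel_le (hη : IsMollifier G η) (hGb : Bornology.IsBounded G)
    (z : E2) (u : ℝ) :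
    ∃ M, ∀ w ∈ closedBall u 1, ∀ x ∈ G, ‖∑ i, pd i (fluxKernel η z w i) x‖ ≤ M := by
  have hη₀ := hη.continuous
  have hη₁ : Continuous (fderiv ℝ η) := hη.contDiff.continuous_fderiv (by simp)
  have hcont : Continuous fun q : ℝ × E2 => ∑ i, pd i (fluxKernel η z q.1 i) q.2 := by
    have hfderiv : Continuous fun q : ℝ × E2 => fderiv ℝ η (z + q.1 • (q.2 - z)) (q.2 - z) :=
      (hη₁.comp (by fun_prop)).clm_apply (by fun_prop)
    simp only [hη.sum_pd_fluxKernel]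
    fun_prop
  obtain ⟨M, hM⟩ := ((isCompact_closedBall u 1).prod
    hGb.isCompact_closure).exists_bound_of_continuousOn hcont.continuousOn
  exact ⟨M, fun w hw x hx => hM (w, x) ⟨hw, subset_closure hx⟩⟩

lemma hasDerivAt_setIntegral_mollKernel (hη : IsMollifier G η) (hGc : Convex ℝ G)
    (hGo : IsOpen G) (hGb : Bornology.IsBounded G) (hz : z ∈ closure G) (hu : 1 ≤ u)
    {φ : E2 → ℝ} {g : Fin 2 → E2 → ℝ} (hφ : MemLp φ 2 (volume.restrict G))
    (hw : ∀ i, HasWeakPD G i φ (g i)) :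
    HasDerivAt (fun u => ∫ x in G, mollKernel η z u x * φ x)
      (-∑ i, ∫ x in G, fluxKernel η z u i x * g i x) u := by
  have : IsFiniteMeasure (volume.restrict G) :=
    isFiniteMeasure_restrict.2 hGb.measure_lt_top.ne
  obtain ⟨M, hM⟩ := hη.exists_norm_sum_pd_fluxKernel_le hGb z u
  have hpd (i : Fin 2) : Continuous (pd i (fluxKernel η z u i)) :=
    ((hη.contDiff_fluxKernel z u i).continuous_fderiv (by simp)).clm_apply continuous_const
  have hpd_int (i : Fin 2) :
      Integrable (fun x => pd i (fluxKernel η z u i) x * φ x) (volume.restrict G) :=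
    (memLp_restrict_of_continuousOn_closure hGb (hpd i).continuousOn 2).integrable_mul hφ
  have hderiv := (hasDerivAt_integral_of_dominated_loc_of_deriv_le (μ := volume.restrict G)
    (F := fun u x => mollKernel η z u x * φ x)
    (F' := fun u x => (∑ i, pd i (fluxKernel η z u i) x) * φ x) (bound := fun x => M * ‖φ x‖)
    (closedBall_mem_nhds u one_pos)
    (Eventually.of_forall fun w => (hη.continuous_mollKernel z w).aestronglyMeasurable.mul hφ.1)
    ((hη.memLp_mollKernel hGb z u).integrable_mul hφ)
    ((continuous_finsetSum _ fun i _ => hpd i).aestronglyMeasurable.mul hφ.1)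
    (by
      filter_upwards [ae_restrict_mem hGo.measurableSet] with x hx w hw
      rw [norm_mul]
      gcongr
      exact hM w hw x hx)
    ((hφ.integrable one_le_two).norm.const_mul M)
    (Eventually.of_forall fun x w _ => (hη.hasDerivAt_mollKernel z w x).mul_const (φ x))).2
  refine hderiv.congr_deriv ?_
  simp only [Finset.sum_mul]
  rw [integral_finsetSum _ fun i _ => hpd_int i, ← Finset.sum_neg_distrib]
  refine Finset.sum_congr rfl fun i _ => ?_
  have hparts := hw i _ (hη.isTestFun_fluxKernel hGc hGo hGb hz hu i)
  simpa only [mul_comm] using hparts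

lemma tendsto_setIntegral_mollKernel (hη : IsMollifier G η) (hGc : Convex ℝ G)
    (hGo : IsOpen G) (hGb : Bornology.IsBounded G) (hz : z ∈ closure G) {φ : E2 → ℝ}
    (hφ : ContinuousOn φ (closure G)) :
    Tendsto (fun u => ∫ x in G, mollKernel η z u x * φ x) atTop (𝓝 (φ z)) := by
  have hφ₂ := memLp_restrict_of_continuousOn_closure (μ := volume) hGb hφ 2
  have : IsFiniteMeasure (volume.restrict G) :=
    isFiniteMeasure_restrict.2 hGb.measure_lt_top.ne
  rw [Metric.tendsto_nhds]
  intro ε hε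
  obtain ⟨δ, hδ, hφδ⟩ := Metric.continuousWithinAt_iff.1 (hφ z hz) (ε / 2) (by linarith)
  have hsmall : ∀ᶠ u in atTop, diam G / u < δ :=
    (tendsto_const_nhds.div_atTop tendsto_id).eventually_lt_const hδ
  filter_upwards [hsmall, eventually_ge_atTop 1] with u huδ hu
  have hK := hη.memLp_mollKernel hGb z u
  have hK₁ := hK.integrable one_le_two
  have hKφ : Integrable (fun x => mollKernel η z u x * φ x) (volume.restrict G) :=
    hK.integrable_mul hφ₂
  have hcenter : (∫ x in G, mollKernel η z u x * φ x) - φ z =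
      ∫ x in G, mollKernel η z u x * (φ x - φ z) := by
    simp only [mul_sub]
    rw [integral_sub hKφ (hK₁.mul_const _), integral_mul_const,
      hη.setIntegral_mollKernel hGc hGo hz hu, one_mul]
  calc dist (∫ x in G, mollKernel η z u x * φ x) (φ z)
      = ‖∫ x in G, mollKernel η z u x * (φ x - φ z)‖ := by rw [dist_eq_norm, hcenter]
    _ ≤ ∫ x in G, mollKernel η z u x * (ε / 2) := by
      refine norm_integral_le_of_norm_le (hK₁.mul_const _) ?_
      filter_upwards [ae_restrict_mem hGo.measurableSet] with x hx
      rw [norm_mul, Real.norm_of_nonneg (hη.mollKernel_nonneg z u x)]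
      rcases eq_or_ne (mollKernel η z u x) 0 with h0 | h0
      · rw [h0, zero_mul, zero_mul]
      refine mul_le_mul_of_nonneg_left ?_ (hη.mollKernel_nonneg z u x)
      have hdist := hη.dist_le_diam_div hGb hz (by linarith) (right_ne_zero_of_mul h0)
      exact (dist_eq_norm (φ x) (φ z)).symm.trans_le
        (hφδ (subset_closure hx) (hdist.trans_lt huδ)).le
    _ < ε := by
      rw [integral_mul_const, hη.setIntegral_mollKernel hGc hGo hz hu]
      linarith

end IsMollifier

/-- The averages over `G`, with weight `η`, of the components of a vector field `g`. -/
def meanGrad (G : Set E2) (η : E2 → ℝ) (g : Fin 2 → E2 → ℝ) : E2 :=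
  WithLp.toLp 2 fun i => ∫ x in G, η x * g i x

/-- The averaged Taylor polynomial of degree one of a function `φ` with gradient `g`: the average
over `G`, with weight `η`, of `z ↦ φ x + ⟪z - x, a⟫`, where `a` is the averaged gradient. -/
def averagedTaylor (G : Set E2) (η φ : E2 → ℝ) (g : Fin 2 → E2 → ℝ) (z : E2) : ℝ :=
  (∫ x in G, η x * φ x) - ∑ i, (∫ x in G, (x i - z i) * η x) * meanGrad G η g i

namespace IsMollifier

variable {G : Set E2} {η φ : E2 → ℝ} {g : Fin 2 → E2 → ℝ} {z : E2} {t : ℝ}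

lemma averagedTaylor_eq_add_inner (hη : IsMollifier G η) (hGb : Bornology.IsBounded G)
    (φ : E2 → ℝ) (g : Fin 2 → E2 → ℝ) (z : E2) :
    averagedTaylor G η φ g z = averagedTaylor G η φ g 0 + inner ℝ z (meanGrad G η g) := by
  have : IsFiniteMeasure (volume.restrict G) :=
    isFiniteMeasure_restrict.2 hGb.measure_lt_top.ne
  have hcoord (i : Fin 2) : MemLp (fun x : E2 => x i) 2 (volume.restrict G) :=
    memLp_restrict_of_continuousOn_closure hGb (by fun_prop) 2
  have hmoment (w : E2) (i : Fin 2) :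
      ∫ x in G, (x i - w i) * η x = (∫ x in G, x i * η x) - w i := by
    have hint : Integrable (fun x : E2 => x i * η x) (volume.restrict G) :=
      (hcoord i).integrable_mul (hη.memLp hGb)
    simp only [sub_mul]
    rw [integral_sub hint (((hη.memLp hGb).integrable one_le_two).const_mul _),
      integral_const_mul, hη.setIntegral_eq_one, mul_one]
  simp only [averagedTaylor, hmoment, Fin.sum_univ_two, PiLp.inner_apply, PiLp.zero_apply,
    RCLike.inner_apply, conj_trivial, sub_zero]
  ring

lemma abs_sub_averagedTaylor_le (hη : IsMollifier G η) (hGc : Convex ℝ G) (hGo : IsOpen G)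
    (hGb : Bornology.IsBounded G) (ht : 0 < t) (hφ : ContinuousOn φ (closure G))
    (hw : ∀ i, HasWeakPD G i φ (g i)) (hg : ∀ i, MemLp (g i) 2 (volume.restrict G))
    (hE : ∀ i, GagFin t G (g i)) (hz : z ∈ closure G) :
    |φ z - averagedTaylor G η φ g z| ≤
      ((2 * diam G) ^ (1 + t) + diam G ^ (1 + t)) * (diam G * ∫ x in G, η x ^ 2) /
        (t / (1 + t)) * ∑ i, √(gagSq t G (g i)) := by
  set M := ((2 * diam G) ^ (1 + t) + diam G ^ (1 + t)) * (diam G * ∫ x in G, η x ^ 2)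
  set d := ∑ i, (∫ x in G, (x i - z i) * η x) * meanGrad G η g i
  -- Subtracting `d * u⁻¹` removes the leading part of the `u`-derivative of the averages.
  set f : ℝ → ℝ := fun u => (∫ x in G, mollKernel η z u x * φ x) - d * u⁻¹
  have hf_one : f 1 = averagedTaylor G η φ g z := by
    simp [f, mollKernel, averagedTaylor, d]
  have hf_lim : Tendsto f atTop (𝓝 (φ z)) := by
    simpa using (hη.tendsto_setIntegral_mollKernel hGc hGo hGb hz hφ).sub
      (tendsto_inv_atTop_zero.const_mul d)
  have hf_deriv (u : ℝ) (hu : 1 ≤ u) : HasDerivAt f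
      (-∑ i, ((∫ x in G, fluxKernel η z u i x * g i x) -
        (∫ x in G, fluxKernel η z u i x) * ∫ x in G, η x * g i x)) u := by
    refine ((hη.hasDerivAt_setIntegral_mollKernel hGc hGo hGb hz hu
      (memLp_restrict_of_continuousOn_closure hGb hφ 2) hw).sub
        ((hasDerivAt_inv (by linarith)).const_mul d)).congr_deriv ?_
    simp only [hη.setIntegral_fluxKernel hGc hGo hz hu, Finset.sum_sub_distrib, mul_assoc,
      ← Finset.mul_sum, d, meanGrad]
    ring
  have hf_bound (u : ℝ) (hu : 1 ≤ u) :
      ‖-∑ i, ((∫ x in G, fluxKernel η z u i x * g i x) -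
        (∫ x in G, fluxKernel η z u i x) * ∫ x in G, η x * g i x)‖ ≤
      M * (∑ i, √(gagSq t G (g i))) * u ^ (-(1 + t / (1 + t))) := by
    rw [norm_neg, Finset.mul_sum, Finset.sum_mul]
    exact norm_sum_le_of_le _ fun i _ =>
      hη.abs_setIntegral_fluxKernel_sub_le hGc hGo hGb hz hu (hg i) (hE i) ht i
  have htail := norm_lim_sub_le_of_norm_deriv_le_rpow (by positivity : 0 < t / (1 + t))
    hf_deriv hf_bound hf_lim
  rwa [hf_one, Real.norm_eq_abs, mul_div_right_comm] at htail

lemma exists_abs_le_and_norm_meanGrad_le (hη : IsMollifier G η) (hGc : Convex ℝ G)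
    (hGo : IsOpen G) (hGb : Bornology.IsBounded G) (ht : 0 < t) {P : Set E2}
    (hPG : P ⊆ closure G) (hP : affineSpan ℝ P = ⊤) :
    ∃ C, ∀ (φ : E2 → ℝ) (g : Fin 2 → E2 → ℝ), ContinuousOn φ (closure G) →
      (∀ i, HasWeakPD G i φ (g i)) → (∀ i, MemLp (g i) 2 (volume.restrict G)) →
      (∀ i, GagFin t G (g i)) → (∀ z ∈ P, φ z = 0) →
      (∀ z ∈ closure G, |φ z| ≤ C * ∑ i, √(gagSq t G (g i))) ∧
        ‖meanGrad G η g‖ ≤ C * ∑ i, √(gagSq t G (g i)) := by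
  obtain ⟨C, happrox⟩ := exists_bound_of_approx_affine hP hGb.closure hPG
  set A := ((2 * diam G) ^ (1 + t) + diam G ^ (1 + t)) * (diam G * ∫ x in G, η x ^ 2) /
    (t / (1 + t))
  have : 0 ≤ ∫ x in G, η x ^ 2 := integral_nonneg fun x => sq_nonneg _
  refine ⟨C * A, fun φ g hφ hw hg hE hφP => ?_⟩
  have : 0 ≤ ∑ i, √(gagSq t G (g i)) := Finset.sum_nonneg fun i _ => Real.sqrt_nonneg _
  simp only [mul_assoc]
  refine happrox φ (averagedTaylor G η φ g 0) _ _ (by positivity) (fun z hz => ?_) hφP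
  rw [← hη.averagedTaylor_eq_add_inner hGb]
  exact hη.abs_sub_averagedTaylor_le hGc hGo hGb ht hφ hw hg hE hz

end IsMollifier

lemma HasWeakPD.congr_ae {G : Set E2} {i : Fin 2} {φ ψ g : E2 → ℝ} (hw : HasWeakPD G i φ g)
    (hψφ : ψ =ᵐ[volume.restrict G] φ) : HasWeakPD G i ψ g := fun θ hθ =>
  (integral_congr_ae (hψφ.mono fun x hx => by simp only [hx])).trans (hw θ hθ)

lemma integral_sq_le_two_mul_add {α : Type*} [MeasurableSpace α] {μ : Measure α}
    [IsFiniteMeasure μ] {f : α → ℝ} (hf : MemLp f 2 μ) (c : ℝ) :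
    ∫ x, f x ^ 2 ∂μ ≤ 2 * ((∫ x, (f x - c) ^ 2 ∂μ) + μ.real univ * c ^ 2) := by
  have hsub : Integrable (fun x => (f x - c) ^ 2) μ := (hf.sub (memLp_const c)).integrable_sq
  calc ∫ x, f x ^ 2 ∂μ ≤ ∫ x, 2 * ((f x - c) ^ 2 + c ^ 2) ∂μ :=
        integral_mono hf.integrable_sq ((hsub.add (integrable_const _)).const_mul 2)
          fun x => by simpa only [sub_add_cancel] using add_sq_le (a := f x - c) (b := c)
    _ = _ := by
      rw [integral_const_mul, integral_add hsub (integrable_const _), integral_const, smul_eq_mul]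

lemma IsMollifier.sum_setIntegral_sq_le {G : Set E2} {η : E2 → ℝ} {g : Fin 2 → E2 → ℝ} {t : ℝ}
    (hη : IsMollifier G η) (hGo : IsOpen G) (hGb : Bornology.IsBounded G) (ht : -1 ≤ t)
    (hg : ∀ i, MemLp (g i) 2 (volume.restrict G)) (hE : ∀ i, GagFin t G (g i)) :
    ∑ i, ∫ x in G, g i x ^ 2 ≤
      2 * ((diam G ^ (1 + t)) ^ 2 * (∫ x in G, η x ^ 2) * ∑ i, gagSq t G (g i) +
        volume.real G * ‖meanGrad G η g‖ ^ 2) := by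
  have : IsFiniteMeasure (volume.restrict G) :=
    isFiniteMeasure_restrict.2 hGb.measure_lt_top.ne
  rw [EuclideanSpace.real_norm_sq_eq, Finset.mul_sum, Finset.mul_sum, ← Finset.sum_add_distrib,
    Finset.mul_sum]
  refine Finset.sum_le_sum fun i _ => (integral_sq_le_two_mul_add (hg i)
    (meanGrad G η g i)).trans ?_
  rw [measureReal_restrict_apply_univ]
  gcongr
  exact (hE i).setIntegral_sub_average_sq_le hGo.measurableSet hGb ht (hη.memLp hGb)
    hη.setIntegral_eq_one (hg i)

lemma setIntegral_sq_le_of_abs_le {α : Type*} [MeasurableSpace α] {μ : Measure α} {G : Set α}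
    (hG : μ G ≠ ∞) {f : α → ℝ} {M : ℝ} (hf : ∀ x ∈ G, |f x| ≤ M) :
    ∫ x in G, f x ^ 2 ∂μ ≤ μ.real G * M ^ 2 := by
  have hf_sq : ∀ x ∈ G, ‖f x ^ 2‖ ≤ M ^ 2 := fun x hx => by
    rw [norm_pow]
    exact pow_le_pow_left₀ (norm_nonneg _) (hf x hx) 2
  rw [mul_comm]
  exact (le_abs_self _).trans (norm_setIntegral_le_of_norm_le_const hG.lt_top hf_sq)

lemma sum_sqrt_gagSq_sq_le {G : Set E2} {t : ℝ} (g : Fin 2 → E2 → ℝ) :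
    (∑ i, √(gagSq t G (g i))) ^ 2 ≤ 2 * ∑ i, gagSq t G (g i) := by
  simpa [Real.sq_sqrt, gagSq_nonneg] using
    sq_sum_le_card_mul_sum_sq (s := Finset.univ) (f := fun i => √(gagSq t G (g i)))

theorem fractional_bramble_hilbert_general {G : Set E2} (hGo : IsOpen G) (hGc : Convex ℝ G)
    (hGb : Bornology.IsBounded G) {P : Set E2} (hPG : P ⊆ closure G)
    (hP : affineSpan ℝ P = ⊤) {t : ℝ} (ht : 0 < t) :
    ∃ C : ℝ, 0 < C ∧ ∀ (φ : E2 → ℝ) (g : Fin 2 → E2 → ℝ) (ψ : E2 → ℝ),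
      (∀ i, HasWeakPD G i φ (g i)) →
      (∀ i, MemLp (g i) 2 (volume.restrict G)) →
      (∀ i, GagFin t G (g i)) →
      ContinuousOn ψ (closure G) →
      ψ =ᵐ[volume.restrict G] φ →
      (∀ z ∈ P, ψ z = 0) →
      (∫ x in G, φ x ^ 2) + (∑ i, ∫ x in G, g i x ^ 2) + (∑ i, gagSq t G (g i)) ≤
        C ^ 2 * ∑ i, gagSq t G (g i) := by
  have hP_ne : P.Nonempty := (affineSpan_nonempty ℝ).1 (hP ▸ univ_nonempty)
  obtain ⟨η, hη⟩ := exists_isMollifier hGo (closure_nonempty_iff.1 (hP_ne.mono hPG))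
  obtain ⟨A, hbound⟩ := hη.exists_abs_le_and_norm_meanGrad_le hGc hGo hGb ht hPG hP
  set B := (diam G ^ (1 + t)) ^ 2 * ∫ x in G, η x ^ 2
  set V := volume.real G
  have : 0 ≤ B := mul_nonneg (sq_nonneg _) (integral_nonneg fun x => sq_nonneg _)
  have hC : 0 < 1 + 2 * B + 6 * (V * A ^ 2) := by positivity
  refine ⟨√(1 + 2 * B + 6 * (V * A ^ 2)), Real.sqrt_pos.2 hC, fun φ g ψ hw hg hE hψ hψφ hψP => ?_⟩
  set E := ∑ i, gagSq t G (g i)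
  set S := ∑ i, √(gagSq t G (g i))
  obtain ⟨hψ_le, hmean_le⟩ := hbound ψ g hψ (fun i => (hw i).congr_ae hψφ) hg hE hψP
  have hV_le : V * (A * S) ^ 2 ≤ V * A ^ 2 * (2 * E) := by
    rw [mul_pow, ← mul_assoc]
    gcongr
    exact sum_sqrt_gagSq_sq_le g
  have hφ_sq : ∫ x in G, φ x ^ 2 ≤ V * (A * S) ^ 2 := by
    rw [← integral_congr_ae (hψφ.mono fun x hx => congrArg (· ^ 2) hx)]
    exact setIntegral_sq_le_of_abs_le hGb.measure_lt_top.ne fun x hx => hψ_le x (subset_closure hx)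
  have hg_sq : ∑ i, ∫ x in G, g i x ^ 2 ≤ 2 * (B * E + V * (A * S) ^ 2) :=
    (hη.sum_setIntegral_sq_le hGo hGb (by linarith) hg hE).trans (by gcongr)
  rw [Real.sq_sqrt hC.le]
  linarith

lemma isOpen_refTri : IsOpen refTri := by
  have hcoord (i : Fin 2) : Continuous fun x : E2 => x i := (EuclideanSpace.proj i).continuous
  exact (isOpen_lt continuous_const (hcoord 0)).inter <|
    (isOpen_lt continuous_const (hcoord 1)).inter <|
      isOpen_lt ((hcoord 0).add (hcoord 1)) continuous_const

lemma convex_refTri : Convex ℝ refTri := by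
  have hcoord (i : Fin 2) : IsLinearMap ℝ fun x : E2 => x i :=
    (EuclideanSpace.projₗ (𝕜 := ℝ) i).isLinear
  exact (convex_halfSpace_gt (hcoord 0) 0).inter <|
    (convex_halfSpace_gt (hcoord 1) 0).inter <|
      convex_halfSpace_lt ((hcoord 0).mk' _ + (hcoord 1).mk' _).isLinear 1

lemma isBounded_refTri : Bornology.IsBounded refTri := by
  refine isBounded_iff_forall_norm_le.2 ⟨1, fun x ⟨h0, h1, h⟩ => ?_⟩
  rw [← sq_le_one_iff₀ (norm_nonneg x), EuclideanSpace.real_norm_sq_eq, Fin.sum_univ_two]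
  nlinarith

lemma mem_closure_refTri {z : E2} (h0 : 0 ≤ z 0) (h1 : 0 ≤ z 1) (h : z 0 + z 1 ≤ 1) :
    z ∈ closure refTri := by
  let c : E2 := !₂[1 / 4, 1 / 4]
  have hc0 : c 0 = 1 / 4 := rfl
  have hc1 : c 1 = 1 / 4 := rfl
  have hlim : Tendsto (fun l : ℝ => z + l • (c - z)) (𝓝[>] 0) (𝓝 z) := by
    have hcont : Continuous fun l : ℝ => z + l • (c - z) := by fun_prop
    simpa using hcont.continuousWithinAt.tendsto (x := 0) (s := Ioi 0)
  refine mem_closure_of_tendsto hlim ?_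
  filter_upwards [Ioo_mem_nhdsGT one_pos] with l ⟨hl0, hl1⟩
  refine ⟨?_, ?_, ?_⟩ <;>
    simp only [PiLp.add_apply, PiLp.sub_apply, PiLp.smul_apply, smul_eq_mul, hc0, hc1] <;>
    nlinarith

/-- The vertices of the reference triangle, the interpolation nodes of affine polynomials. -/
def refTriVertices : Set E2 := {0, EuclideanSpace.single 0 1, EuclideanSpace.single 1 1}

lemma refTriVertices_subset_closure : refTriVertices ⊆ closure refTri := by
  rintro _ (rfl | rfl | rfl) <;> exact mem_closure_refTri (by simp) (by simp) (by simp)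

lemma affineSpan_refTriVertices : affineSpan ℝ refTriVertices = ⊤ := by
  have hspan : Submodule.span ℝ {EuclideanSpace.single 0 1, EuclideanSpace.single 1 1} =
      (⊤ : Submodule ℝ E2) := by
    rw [← (EuclideanSpace.basisFun (Fin 2) ℝ).toBasis.span_eq]
    congr 1
    ext x
    simp [Fin.exists_fin_two, eq_comm]
  refine SetLike.coe_injective ?_
  rw [refTriVertices, affineSpan_insert_zero, hspan, Submodule.top_coe, AffineSubspace.top_coe]

/-- **A fractional Bramble–Hilbert inequality** (Lemma 2.5): for `1 < s = 1 + t < 2`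
there is `C_BH` such that every `φ ∈ H^s(T̂)` vanishing at the vertices of the reference
triangle satisfies `‖φ‖_{s,T̂} ≤ C_BH |φ|_{s,T̂}`.  Here `g i` are the weak partial
derivatives of `φ` and `ψ` is a continuous representative of `φ`. -/
theorem fractional_bramble_hilbert (s : ℝ) (hs1 : 1 < s) (hs2 : s < 2) :
    ∃ C : ℝ, 0 < C ∧ ∀ (φ : E2 → ℝ) (g : Fin 2 → E2 → ℝ) (ψ : E2 → ℝ),
      MemLp φ 2 (volume.restrict refTri) →
      (∀ i, HasWeakPD refTri i φ (g i)) →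
      (∀ i, MemLp (g i) 2 (volume.restrict refTri)) →
      (∀ i, GagFin (s - 1) refTri (g i)) →
      ContinuousOn ψ (closure refTri) →
      (∀ᵐ x ∂(volume.restrict refTri), ψ x = φ x) →
      ψ 0 = 0 → ψ (EuclideanSpace.single 0 1) = 0 → ψ (EuclideanSpace.single 1 1) = 0 →
      (∫ x in refTri, (φ x) ^ 2) + (∑ i : Fin 2, ∫ x in refTri, (g i x) ^ 2) +
          (∑ i : Fin 2, gagSq (s - 1) refTri (g i)) ≤
        C ^ 2 * ∑ i : Fin 2, gagSq (s - 1) refTri (g i) := by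
  obtain ⟨C, hC, hbound⟩ := fractional_bramble_hilbert_general isOpen_refTri convex_refTri
    isBounded_refTri refTriVertices_subset_closure affineSpan_refTriVertices (sub_pos.2 hs1)
  refine ⟨C, hC, fun φ g ψ _ hw hg hE hψ hψφ h0 h1 h2 => hbound φ g ψ hw hg hE hψ hψφ ?_⟩
  rintro _ (rfl | rfl | rfl)
  exacts [h0, h1, h2]

end
end

section
/- Let d ≥ 1, 0 ≤ θ < 1/2, and let G ⊂ ℝ^d be a bounded domain with Lipschitz boundary. Then there exists a constant C, depending only on d, θ and G, such that for every i ∈ {1,…,d} and all functions f, g that are restrictions to G of smooth functions on ℝ^d: |∫_G (∂f/∂x_i) · g dx| ≤ C · ‖f‖_{1−θ,G} · ‖g‖_{θ,G}. -/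
open MeasureTheory Metric Set Filter
open scoped Topology NNReal ENNReal

noncomputable section

abbrev Ed (d : ℕ) := EuclideanSpace ℝ (Fin d)

/-- Squared Gagliardo seminorm of order `s` on `G ⊆ ℝ^d`. -/
def gagSqD (d : ℕ) (s : ℝ) (G : Set (Ed d)) (v : Ed d → ℝ) : ℝ :=
  ∫ x in G, ∫ y in G, (v x - v y) ^ 2 / dist x y ^ ((d : ℝ) + 2 * s)

/-- Partial derivative in the `i`-th coordinate direction. -/
def pdD {d : ℕ} (i : Fin d) (f : Ed d → ℝ) (x : Ed d) : ℝ :=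
  fderiv ℝ f x (EuclideanSpace.single i 1)

/-- Lipschitz boundary: near every boundary point the set is the region above the graph
of a Lipschitz function in some direction `ν`. -/
def HasLipschitzBoundaryD {d : ℕ} (G : Set (Ed d)) : Prop :=
  ∀ x ∈ frontier G, ∃ (ν : Ed d) (L : NNReal) (γ : Ed d → ℝ) (U : Set (Ed d)),
    ‖ν‖ = 1 ∧ LipschitzWith L γ ∧ IsOpen U ∧ x ∈ U ∧
    G ∩ U = {y ∈ U | γ (y - (inner ℝ y ν : ℝ) • ν) < (inner ℝ y ν : ℝ)}

/-!
Localize by a partition of unity `χ` subordinate to balls on which some open cone `B` of directions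
points into `G`, and put `h = χ g`, extended by zero outside `G`. The correlation
`H v = ∫ h(x) f(x + v) dx` satisfies `∂H(0) = ∫ h ∂f`, and on small multiples of directions in `B`
it only sees values of `f` in `G`.

Mollify `∂H(0)` at the scale `2⁻ⁿ` with two independent densities supported in `B`, integrate by
parts, and telescope over the scales. This expresses it by mixed second differences of `H`, that
is, by integrals of a translation difference of `h` against a translation difference of `f`. At
the scale `2⁻ᵏ` the factor `2ᵏ` lost in the integration by parts is shared between the two by
Cauchy–Schwarz, as `2^(θ k)` and `2^((1 - θ) k)`. Averaged over directions in `B`, the weighted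
squares of these differences sum to Gagliardo seminorms because the dyadic annuli are disjoint.

The extension of `h` by zero adds the mass of a boundary layer at each scale. Halving the scale
halves this mass up to terms that are already controlled, so the layers are summable against
`4^(θ k)` precisely because `4^θ < 2`, i.e. `θ < 1/2`. Finally, replacing `f` by `t f` turns the
resulting bound by a sum of squares into a bound by a product of norms.
-/

section Translation

variable {E : Type*} [AddCommGroup E] [MeasurableSpace E] {μ : Measure E} {G : Set E}
  {f h v : E → ℝ} {a b b' : E}

/-- The squared `L²` modulus of translation of `v` by `a` inside `G`: only those `y` enter for which
both `y` and `y + a` lie in `G`. -/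
def translationEnergy (μ : Measure E) (G : Set E) (v : E → ℝ) (a : E) : ℝ :=
  ∫ y in G ∩ (· + a) ⁻¹' G, (v (y + a) - v y) ^ 2 ∂μ

/-- The squared `L²` mass of `h` on the points that the shift by `-a` moves out of `G`; for `h`
supported in `G` this is the mass of a boundary layer of `G`. -/
def exitEnergy (μ : Measure E) (G : Set E) (h : E → ℝ) (a : E) : ℝ :=
  ∫ y in {y | y - a ∉ G}, h y ^ 2 ∂μ

/-- The correlation `v ↦ ∫ h(x) f(x + v) dx`; its derivative at `0` is `∫ h ∂f`. -/
def correlation (μ : Measure E) (h f : E → ℝ) (v : E) : ℝ :=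
  ∫ x, h x * f (x + v) ∂μ

/-- The mixed second difference of `H` at the origin with respect to the step `a` and the step from
`b` to `b'`. -/
def mixedDifference (H : E → ℝ) (a b b' : E) : ℝ :=
  H (a + b') - H (a + b) - (H b' - H b)

lemma translationEnergy_nonneg : 0 ≤ translationEnergy μ G v a :=
  integral_nonneg fun _ => sq_nonneg _

lemma exitEnergy_nonneg : 0 ≤ exitEnergy μ G h a :=
  integral_nonneg fun _ => sq_nonneg _

lemma sq_le_one_add_mul_sq_add_one_add_inv_mul_sq {ε : ℝ} (hε : 0 < ε) (x y : ℝ) :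
    x ^ 2 ≤ (1 + ε) * y ^ 2 + (1 + ε⁻¹) * (y - x) ^ 2 := by
  have hsq : (1 + ε) * y ^ 2 + (1 + ε⁻¹) * (y - x) ^ 2 - x ^ 2 = ε⁻¹ * ((1 + ε) * y - x) ^ 2 := by
    field_simp
    ring
  have : 0 ≤ ε⁻¹ * ((1 + ε) * y - x) ^ 2 := by positivity
  linarith

lemma abs_mul_le_weighted_sq {l : ℝ} (hl : 0 < l) (x y : ℝ) :
    |x * y| ≤ l / 2 * x ^ 2 + l⁻¹ / 2 * y ^ 2 := by
  have hsq : l / 2 * x ^ 2 + l⁻¹ / 2 * y ^ 2 - |x * y| = l⁻¹ / 2 * (l * |x| - |y|) ^ 2 := by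
    rw [abs_mul, ← sq_abs x, ← sq_abs y]
    field_simp
    ring
  have : 0 ≤ l⁻¹ / 2 * (l * |x| - |y|) ^ 2 := by positivity
  linarith

lemma exitEnergy_le_integral_sq (hh : MemLp h 2 μ) (a : E) :
    exitEnergy μ G h a ≤ ∫ y, h y ^ 2 ∂μ :=
  setIntegral_le_integral hh.integrable_sq (Eventually.of_forall fun _ => sq_nonneg _)

variable [MeasurableAdd E]

lemma translationEnergy_indicator (hG : MeasurableSet G) (v : E → ℝ) (a : E) :
    translationEnergy μ G (G.indicator v) a = translationEnergy μ G v a :=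
  setIntegral_congr_fun (hG.inter (measurable_add_const a hG)) fun y hy => by
    simp only [indicator_of_mem hy.1, indicator_of_mem (show y + a ∈ G from hy.2)]

lemma measurableSet_sub_notMem (hG : MeasurableSet G) (a : E) : MeasurableSet {y | y - a ∉ G} := by
  simp only [sub_eq_add_neg]
  exact (measurable_add_const (-a) hG).compl

lemma measurableSet_sub_mem_sub_notMem (hG : MeasurableSet G) (a b : E) :
    MeasurableSet {y | y - a ∈ G ∧ y - b ∉ G} := by
  refine MeasurableSet.inter ?_ (measurableSet_sub_notMem hG b)
  simp only [sub_eq_add_neg]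
  exact measurable_add_const (-a) hG

lemma setIntegral_add_exitEnergy_le (hG : MeasurableSet G) (hh : MemLp h 2 μ)
    (hsub : ∀ y ∈ h.support, y - (a + a) ∈ G → y - a ∈ G) :
    (∫ y in {y | y - a ∈ G ∧ y - (a + a) ∉ G}, h y ^ 2 ∂μ) + exitEnergy μ G h a ≤
      exitEnergy μ G h (a + a) := by
  have hexit := measurableSet_sub_notMem hG a
  have hexit' := measurableSet_sub_notMem hG (a + a)
  have hlayer := measurableSet_sub_mem_sub_notMem hG a (a + a)
  have hi := hh.integrable_sq
  rw [exitEnergy, exitEnergy, ← integral_indicator hexit, ← integral_indicator hexit',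
    ← integral_indicator hlayer, ← integral_add (hi.indicator hlayer) (hi.indicator hexit)]
  refine integral_mono ((hi.indicator hlayer).add (hi.indicator hexit)) (hi.indicator hexit')
    fun y => ?_
  by_cases hy : h y = 0
  · simp [indicator, hy]
  · have := hsub y hy
    by_cases hya : y - a ∈ G <;> by_cases hyaa : y - (a + a) ∈ G <;> simp_all

lemma setLIntegral_inter_preimage_add (hG : MeasurableSet G) (φ : E → E → ℝ≥0∞) (u : E) :
    ∫⁻ y in G ∩ (· + u) ⁻¹' G, φ y (y + u) ∂μ = ∫⁻ y in G, G.indicator (φ y) (y + u) ∂μ := by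
  rw [inter_comm, ← setLIntegral_indicator (measurable_add_const u hG)]
  rfl

variable [μ.IsAddRightInvariant]

lemma memLp_comp_add_right {p : ℝ≥0∞} (hv : MemLp v p μ) (a : E) :
    MemLp (fun y => v (y + a)) p μ :=
  hv.comp_measurePreserving (measurePreserving_add_right μ a)

lemma integrable_sub_translate_sq (hv : MemLp v 2 μ) (a : E) :
    Integrable (fun y => (v (y + a) - v y) ^ 2) μ :=
  ((memLp_comp_add_right hv a).sub hv).integrable_sq

lemma integral_translate_neg_sub_sq (h : E → ℝ) (a : E) :
    ∫ y, (h (y - a) - h y) ^ 2 ∂μ = translationEnergy μ univ h a := by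
  rw [← integral_add_right_eq_self _ a]
  simp only [translationEnergy, add_sub_cancel_right, preimage_univ, inter_univ,
    Measure.restrict_univ]
  exact integral_congr_ae (Eventually.of_forall fun _ => sub_sq_comm _ _)

lemma setIntegral_sub_notMem (hG : MeasurableSet G) (φ : E → ℝ) :
    ∫ y in {y | y - a ∉ G}, φ y ∂μ = ∫ y in Gᶜ, φ (y + a) ∂μ := by
  rw [← integral_indicator (measurableSet_sub_notMem hG a), ← integral_indicator hG.compl,
    ← integral_add_right_eq_self _ a]
  congr with y
  by_cases hy : y ∈ G <;> simp [hy]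

lemma translationEnergy_univ_eq_add_exitEnergy (hG : MeasurableSet G) (hh : MemLp h 2 μ)
    (hsupp : h.support ⊆ G) (hadd : ∀ y ∈ h.support, y + a ∈ G) :
    translationEnergy μ univ h a = translationEnergy μ G h a + exitEnergy μ G h a := by
  have hstay : MeasurableSet (G ∩ (· + a) ⁻¹' G) := hG.inter (measurable_add_const a hG)
  have hzero {y : E} (hy : y ∉ G) : h y = 0 := by
    by_contra hne
    exact hy (hsupp hne)
  have hexit : ∫ y in (G ∩ (· + a) ⁻¹' G)ᶜ, (h (y + a) - h y) ^ 2 ∂μ = exitEnergy μ G h a := by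
    rw [exitEnergy, setIntegral_sub_notMem hG, ← integral_indicator hstay.compl,
      ← integral_indicator hG.compl]
    congr with y
    by_cases hy : y ∈ G
    · by_cases hya : y + a ∈ G
      · simp [hy, hya]
      · have : h y = 0 := by
          by_contra hne
          exact hya (hadd y hne)
        simp [hy, hya, this, hzero hya]
    · simp [hy, hzero hy]
  rw [← hexit, translationEnergy, translationEnergy, preimage_univ, inter_univ,
    Measure.restrict_univ, integral_add_compl hstay (integrable_sub_translate_sq hh a)]

/-- The shift by `a` carries the layer lost at step `a` to the part of the layer lost at step `2a`
that survives step `a`. -/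
lemma exitEnergy_le_add_translationEnergy (hG : MeasurableSet G) (hh : MemLp h 2 μ)
    (hsupp : h.support ⊆ G) (hadd : ∀ y ∈ h.support, y + a ∈ G) {ε : ℝ} (hε : 0 < ε) :
    exitEnergy μ G h a ≤ (1 + ε) * ∫ y in {y | y - a ∈ G ∧ y - (a + a) ∉ G}, h y ^ 2 ∂μ +
      (1 + ε⁻¹) * translationEnergy μ G h a := by
  have hexit := measurableSet_sub_notMem hG a
  have hlayer : MeasurableSet {y | y ∈ G ∧ y - a ∉ G} := hG.inter hexit
  have hlayer' := measurableSet_sub_mem_sub_notMem hG a (a + a)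
  have hstay : MeasurableSet (G ∩ (· + a) ⁻¹' G) := hG.inter (measurable_add_const a hG)
  have hshift : ∫ y in {y | y - a ∈ G ∧ y - (a + a) ∉ G}, h y ^ 2 ∂μ =
      ∫ y in {y | y ∈ G ∧ y - a ∉ G}, h (y + a) ^ 2 ∂μ := by
    rw [← integral_indicator hlayer', ← integral_indicator hlayer, ← integral_add_right_eq_self _ a]
    congr with y
    by_cases hy : y ∈ G <;> by_cases hya : y - a ∈ G <;>
      simp [hy, hya, add_sub_add_right_eq_sub]
  have hi := (memLp_comp_add_right hh a).integrable_sq.indicator hlayer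
  have hd := (integrable_sub_translate_sq hh a).indicator hstay
  rw [hshift, exitEnergy, translationEnergy, ← integral_indicator hexit,
    ← integral_indicator hlayer, ← integral_indicator hstay, ← integral_const_mul,
    ← integral_const_mul, ← integral_add (hi.const_mul _) (hd.const_mul _)]
  refine integral_mono (hh.integrable_sq.indicator hexit) ((hi.const_mul _).add (hd.const_mul _))
    fun y => ?_
  have hrhs : 0 ≤ (1 + ε) * {y | y ∈ G ∧ y - a ∉ G}.indicator (fun y => h (y + a) ^ 2) y +
      (1 + ε⁻¹) * (G ∩ (· + a) ⁻¹' G).indicator (fun y => (h (y + a) - h y) ^ 2) y :=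
    add_nonneg (mul_nonneg (by positivity) (indicator_nonneg (fun _ _ => sq_nonneg _) _))
      (mul_nonneg (by positivity) (indicator_nonneg (fun _ _ => sq_nonneg _) _))
  by_cases hy : h y = 0
  · rwa [indicator_apply_eq_zero.2 fun _ => by simp [hy]]
  · by_cases hya : y - a ∈ G
    · simpa [hya] using hrhs
    · simpa [hya, hsupp hy, hadd y hy] using
        sq_le_one_add_mul_sq_add_one_add_inv_mul_sq hε (h y) (h (y + a))

lemma exitEnergy_halving (hG : MeasurableSet G) (hh : MemLp h 2 μ)
    (hsupp : h.support ⊆ G) (hadd : ∀ y ∈ h.support, y + a ∈ G)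
    (hsub : ∀ y ∈ h.support, y - (a + a) ∈ G → y - a ∈ G) {ε : ℝ} (hε : 0 < ε) :
    (2 + ε) * exitEnergy μ G h a ≤
      (1 + ε) * exitEnergy μ G h (a + a) + (1 + ε⁻¹) * translationEnergy μ G h a := by
  have hstep := exitEnergy_le_add_translationEnergy hG hh hsupp hadd hε
  have hsum := mul_le_mul_of_nonneg_left (setIntegral_add_exitEnergy_le hG hh hsub)
    (by positivity : 0 ≤ 1 + ε)
  linarith

lemma translationEnergy_mul_le (hv : MemLp v 2 μ) {χ : E → ℝ} {K L : ℝ}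
    (hχv : MemLp (fun y => χ y * v y) 2 μ) (hK : ∀ y, |χ y| ≤ K)
    (hL : ∀ y, |χ (y + a) - χ y| ≤ L) :
    translationEnergy μ G (fun y => χ y * v y) a ≤
      2 * K ^ 2 * translationEnergy μ G v a + 2 * L ^ 2 * ∫ y in G, v y ^ 2 ∂μ := by
  have hd := (integrable_sub_translate_sq hv a).integrableOn (s := G ∩ (· + a) ⁻¹' G)
  have hi := hv.integrable_sq.integrableOn (s := G ∩ (· + a) ⁻¹' G)
  calc translationEnergy μ G (fun y => χ y * v y) a
      ≤ ∫ y in G ∩ (· + a) ⁻¹' G,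
          (2 * K ^ 2 * (v (y + a) - v y) ^ 2 + 2 * L ^ 2 * v y ^ 2) ∂μ := by
        refine integral_mono (integrable_sub_translate_sq hχv a).integrableOn
          ((hd.const_mul _).add (hi.const_mul _)) fun y => ?_
        have hleibniz : (χ (y + a) * v (y + a) - χ y * v y) ^ 2 ≤
            2 * (χ (y + a) ^ 2 * (v (y + a) - v y) ^ 2) +
              2 * ((χ (y + a) - χ y) ^ 2 * v y ^ 2) := by
          nlinarith [sq_nonneg (χ (y + a) * (v (y + a) - v y) - (χ (y + a) - χ y) * v y)]
        have hχK := mul_le_mul_of_nonneg_right (sq_le_sq.2 ((hK (y + a)).trans (le_abs_self K)))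
          (sq_nonneg (v (y + a) - v y))
        have hχL := mul_le_mul_of_nonneg_right (sq_le_sq.2 ((hL y).trans (le_abs_self L)))
          (sq_nonneg (v y))
        linarith
    _ = 2 * K ^ 2 * translationEnergy μ G v a +
          2 * L ^ 2 * ∫ y in G ∩ (· + a) ⁻¹' G, v y ^ 2 ∂μ := by
        rw [integral_add (hd.const_mul _) (hi.const_mul _), integral_const_mul, integral_const_mul,
          translationEnergy]
    _ ≤ _ := by
        refine add_le_add le_rfl (mul_le_mul_of_nonneg_left ?_ (by positivity))
        exact setIntegral_mono_set hv.integrable_sq.integrableOn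
          (Eventually.of_forall fun _ => sq_nonneg _) inter_subset_left.eventuallyLE

lemma integrable_translate_mul_translate (hh : MemLp h 2 μ) (hf : MemLp f 2 μ) (a b : E) :
    Integrable (fun y => h (y + a) * f (y + b)) μ :=
  (memLp_comp_add_right hh a).integrable_mul (memLp_comp_add_right hf b)

lemma abs_correlation_le (hG : MeasurableSet G) (hh : MemLp h 2 μ) (hf : MemLp f 2 μ)
    (hadd : ∀ y ∈ h.support, y + a ∈ G) :
    |correlation μ h f a| ≤ (∫ y, h y ^ 2 ∂μ) + ∫ y in G, f y ^ 2 ∂μ := by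
  have hfG := (hf.integrable_sq.indicator hG).comp_add_right a
  rw [← integral_indicator hG, ← integral_add_right_eq_self (G.indicator fun y => f y ^ 2) a,
    ← integral_add hh.integrable_sq hfG]
  refine abs_integral_le_integral_abs.trans
    (integral_mono ?_ (hh.integrable_sq.add hfG) fun y => ?_)
  · simpa using (integrable_translate_mul_translate hh hf 0 a).abs
  · by_cases hy : h y = 0
    · simpa [hy] using indicator_nonneg (fun _ _ => sq_nonneg _) _
    · have := abs_mul_le_weighted_sq one_pos (h y) (f (y + a))
      simp only [indicator_of_mem (hadd y hy)]
      nlinarith [sq_nonneg (h y), sq_nonneg (f (y + a))]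

lemma mixedDifference_correlation (hh : MemLp h 2 μ) (hf : MemLp f 2 μ) (a b b' : E) :
    mixedDifference (correlation μ h f) a b b' =
      ∫ y, (h (y - a) - h y) * (f (y + b') - f (y + b)) ∂μ := by
  have hshift (c : E) : correlation μ h f (a + c) = ∫ y, h (y - a) * f (y + c) ∂μ := by
    rw [correlation, ← integral_add_right_eq_self (fun y => h (y - a) * f (y + c)) a]
    simp only [add_sub_cancel_right, add_assoc]
  have hint (c : E) := integrable_translate_mul_translate hh hf (-a) c
  simp only [← sub_eq_add_neg] at hint
  have hint₀ (c : E) : Integrable (fun y => h y * f (y + c)) μ := by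
    simpa using integrable_translate_mul_translate hh hf 0 c
  have hsub : Integrable (fun y => h (y - a) * f (y + b') - h (y - a) * f (y + b)) μ :=
    (hint b').sub (hint b)
  have hsub₀ : Integrable (fun y => h y * f (y + b') - h y * f (y + b)) μ :=
    (hint₀ b').sub (hint₀ b)
  rw [mixedDifference, hshift, hshift, correlation, correlation, ← integral_sub (hint _) (hint _),
    ← integral_sub (hint₀ _) (hint₀ _), ← integral_sub hsub hsub₀]
  congr with y
  ring

lemma abs_mixedDifference_correlation_le (hG : MeasurableSet G) (hh : MemLp h 2 μ)
    (hf : MemLp f 2 μ)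
    (hmem : ∀ y, y ∈ h.support ∨ y - a ∈ h.support → y ∈ G ∧ y + b ∈ G ∧ y + b' ∈ G)
    {l : ℝ} (hl : 0 < l) :
    |mixedDifference (correlation μ h f) a b b'| ≤ l / 2 * translationEnergy μ univ h a +
      l⁻¹ * (translationEnergy μ G f b' + translationEnergy μ G f b) := by
  have hstay (c : E) : MeasurableSet (G ∩ (· + c) ⁻¹' G) := hG.inter (measurable_add_const c hG)
  have hA : MemLp (fun y => h (y - a) - h y) 2 μ := by
    simp only [sub_eq_add_neg _ a]
    exact (memLp_comp_add_right hh (-a)).sub hh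
  have hB : MemLp (fun y => f (y + b') - f (y + b)) 2 μ :=
    (memLp_comp_add_right hf b').sub (memLp_comp_add_right hf b)
  have hD (c : E) := (integrable_sub_translate_sq hf c).indicator (hstay c)
  have hpointwise (y : E) : |(h (y - a) - h y) * (f (y + b') - f (y + b))| ≤
      l / 2 * (h (y - a) - h y) ^ 2 +
        l⁻¹ * ((G ∩ (· + b') ⁻¹' G).indicator (fun y => (f (y + b') - f y) ^ 2) y +
          (G ∩ (· + b) ⁻¹' G).indicator (fun y => (f (y + b) - f y) ^ 2) y) := by
    by_cases hy : y ∈ h.support ∨ y - a ∈ h.support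
    · obtain ⟨hyG, hyb, hyb'⟩ := hmem y hy
      rw [indicator_of_mem (by exact ⟨hyG, hyb'⟩), indicator_of_mem (by exact ⟨hyG, hyb⟩)]
      have hparallelogram : (f (y + b') - f (y + b)) ^ 2 ≤
          2 * ((f (y + b') - f y) ^ 2 + (f (y + b) - f y) ^ 2) := by
        nlinarith [sq_nonneg ((f (y + b') - f y) + (f (y + b) - f y))]
      have := mul_le_mul_of_nonneg_left hparallelogram (by positivity : 0 ≤ l⁻¹ / 2)
      linarith [abs_mul_le_weighted_sq hl (h (y - a) - h y) (f (y + b') - f (y + b))]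
    · simp only [Function.mem_support, not_or, not_not] at hy
      simp only [hy.1, hy.2, sub_self, zero_mul, abs_zero, ne_eq, OfNat.ofNat_ne_zero,
        not_false_eq_true, zero_pow, mul_zero, zero_add]
      exact mul_nonneg (by positivity) (add_nonneg (indicator_nonneg (fun _ _ => sq_nonneg _) _)
        (indicator_nonneg (fun _ _ => sq_nonneg _) _))
  rw [mixedDifference_correlation hh hf]
  refine abs_integral_le_integral_abs.trans ((integral_mono (hA.integrable_mul hB).abs
    ((hA.integrable_sq.const_mul _).add (((hD b').add (hD b)).const_mul _)) hpointwise).trans_eq ?_)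
  rw [integral_add' (hA.integrable_sq.const_mul _) (((hD b').add (hD b)).const_mul _)]
  simp only [integral_const_mul, Pi.add_apply]
  rw [integral_add (hD b') (hD b), integral_indicator (hstay b'), integral_indicator (hstay b),
    integral_translate_neg_sub_sq]
  rfl

end Translation

section InwardCone

variable {E : Type*} [NormedAddCommGroup E] [NormedSpace ℝ E] {G S B : Set E} {R : ℝ}

/-- `B` is an open set of directions, in the annulus of radii `R` and `2 R`, that point into `G` at
the points of `S`. Applied with `τ = 0`, `add_mem` says that `x + t w ∈ G` for `x ∈ S ∩ G`; the
additional shift `τ z` is needed to move along two directions of `B` at once. -/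
structure IsInwardCone (G S B : Set E) (R : ℝ) : Prop where
  isOpen : IsOpen B
  nonempty : B.Nonempty
  le_norm : ∀ w ∈ B, R ≤ ‖w‖
  norm_lt : ∀ w ∈ B, ‖w‖ < 2 * R
  add_mem : ∀ x ∈ S, ∀ z ∈ B, ∀ w ∈ B, ∀ τ ∈ Icc (-1 : ℝ) 1, ∀ t ∈ Icc (0 : ℝ) 1,
    x + τ • z ∈ G → x + τ • z + t • w ∈ G

lemma IsInwardCone.pos (hB : IsInwardCone G S B R) : 0 < R := by
  obtain ⟨w, hw⟩ := hB.nonempty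
  linarith [hB.le_norm w hw, hB.norm_lt w hw]

lemma IsInwardCone.add_smul_mem (hB : IsInwardCone G S B R) {x w : E} (hx : x ∈ S ∩ G) (hw : w ∈ B)
    {t : ℝ} (ht : t ∈ Icc (0 : ℝ) 1) : x + t • w ∈ G := by
  simpa using hB.add_mem x hx.1 w hw w hw 0 (by norm_num) t ht (by simpa using hx.2)

lemma half_pow_mem_Icc (k : ℕ) : (1 / 2 : ℝ) ^ k ∈ Icc (0 : ℝ) 1 :=
  ⟨by positivity, pow_le_one₀ (by norm_num) (by norm_num)⟩

lemma half_pow_succ_smul_add_self (k : ℕ) (z : E) :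
    (1 / 2 : ℝ) ^ (k + 1) • z + (1 / 2 : ℝ) ^ (k + 1) • z = (1 / 2 : ℝ) ^ k • z := by
  rw [← add_smul, pow_succ]
  ring_nf

end InwardCone

section Dyadic

variable {E : Type*} [NormedAddCommGroup E] [NormedSpace ℝ E] [MeasurableSpace E]
  {μ : Measure E} {G S B : Set E} {R β : ℝ} {h v χ : E → ℝ} {z : E}

/-- The dyadic weighted sum `∑ β^k ‖v(· + 2^{-k} z) - v‖²` of translation energies; for `β = 4^s` it
is the part of the Gagliardo energy of order `s` in the direction `z`. -/
def dyadicEnergy (μ : Measure E) (β : ℝ) (G : Set E) (v : E → ℝ) (n : ℕ) (z : E) : ℝ :=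
  ∑ k ∈ Finset.range n, β ^ k * translationEnergy μ G v ((1 / 2 : ℝ) ^ k • z)

lemma dyadicEnergy_nonneg (hβ : 0 ≤ β) (n : ℕ) : 0 ≤ dyadicEnergy μ β G v n z :=
  Finset.sum_nonneg fun _ _ => mul_nonneg (by positivity) translationEnergy_nonneg

lemma sub_mul_sum_pow_mul_le {D O : ℕ → ℝ} {p q c : ℝ} (hβ : 0 ≤ β) (hp : 0 ≤ p) (hq : 0 ≤ q)
    (hc : 0 ≤ c) (hD : ∀ k, 0 ≤ D k) (hO : ∀ k, 0 ≤ O k)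
    (hstep : ∀ k, p * D (k + 1) ≤ q * D k + c * O (k + 1)) (n : ℕ) :
    (p - β * q) * ∑ k ∈ Finset.range n, β ^ k * D k ≤
      p * D 0 + c * ∑ k ∈ Finset.range n, β ^ k * O k := by
  have hmain (n : ℕ) :
      (p - β * q) * ∑ k ∈ Finset.range n, β ^ k * D k + p * (β ^ n * D n) ≤
        p * D 0 + c * ∑ k ∈ Finset.range (n + 1), β ^ k * O k := by
    induction n with
    | zero => simpa using mul_nonneg hc (hO 0)
    | succ n ih =>
      have := mul_le_mul_of_nonneg_left (hstep n) (by positivity : 0 ≤ β ^ (n + 1))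
      rw [Finset.sum_range_succ _ n, Finset.sum_range_succ _ (n + 1)]
      rw [pow_succ] at this ⊢
      linarith
  obtain _ | n := n
  · simpa using mul_nonneg hp (hD 0)
  · have := mul_nonneg (mul_nonneg hβ hq) (mul_nonneg (pow_nonneg hβ n) (hD n))
    rw [Finset.sum_range_succ (fun k => β ^ k * D k)]
    linarith [hmain n]

lemma dyadicEnergy_mul_le [MeasurableAdd E] [μ.IsAddRightInvariant] (hβ : 0 ≤ β) (hβ2 : β ≤ 2)
    (hv : MemLp v 2 μ) {K Λ : ℝ} (hχv : MemLp (fun y => χ y * v y) 2 μ) (hK : ∀ y, |χ y| ≤ K)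
    (hΛ : ∀ x y, |χ x - χ y| ≤ Λ * ‖x - y‖) (n : ℕ) (z : E) :
    dyadicEnergy μ β G (fun y => χ y * v y) n z ≤
      2 * K ^ 2 * dyadicEnergy μ β G v n z + 4 * Λ ^ 2 * ‖z‖ ^ 2 * ∫ y in G, v y ^ 2 ∂μ := by
  have hterm (k : ℕ) : translationEnergy μ G (fun y => χ y * v y) ((1 / 2 : ℝ) ^ k • z) ≤
      2 * K ^ 2 * translationEnergy μ G v ((1 / 2 : ℝ) ^ k • z) +
        2 * (Λ * ((1 / 2 : ℝ) ^ k * ‖z‖)) ^ 2 * ∫ y in G, v y ^ 2 ∂μ := by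
    refine translationEnergy_mul_le hv hχv hK fun y => ?_
    simpa [norm_smul] using hΛ (y + (1 / 2 : ℝ) ^ k • z) y
  have hgeom : ∑ k ∈ Finset.range n, β ^ k * ((1 / 2) ^ k) ^ 2 ≤ 2 := by
    refine (Finset.sum_le_sum fun k _ => ?_).trans (sum_geometric_two_le n)
    rw [pow_right_comm, ← mul_pow]
    exact pow_le_pow_left₀ (by positivity) (by linarith) k
  calc dyadicEnergy μ β G (fun y => χ y * v y) n z
      ≤ ∑ k ∈ Finset.range n, (2 * K ^ 2 * (β ^ k * translationEnergy μ G v ((1 / 2 : ℝ) ^ k • z)) +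
          2 * Λ ^ 2 * ‖z‖ ^ 2 * (∫ y in G, v y ^ 2 ∂μ) *
            (β ^ k * ((1 / 2) ^ k) ^ 2)) :=
        Finset.sum_le_sum fun k _ =>
          (mul_le_mul_of_nonneg_left (hterm k) (pow_nonneg hβ k)).trans_eq (by ring)
    _ = 2 * K ^ 2 * dyadicEnergy μ β G v n z + 2 * Λ ^ 2 * ‖z‖ ^ 2 * (∫ y in G, v y ^ 2 ∂μ) *
          ∑ k ∈ Finset.range n, β ^ k * ((1 / 2) ^ k) ^ 2 := by
        rw [Finset.sum_add_distrib, ← Finset.mul_sum, ← Finset.mul_sum, dyadicEnergy]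
    _ ≤ _ := by
        have := mul_le_mul_of_nonneg_left hgeom
          (by positivity : 0 ≤ 2 * Λ ^ 2 * ‖z‖ ^ 2 * ∫ y in G, v y ^ 2 ∂μ)
        linarith

variable [MeasurableAdd E] [μ.IsAddRightInvariant]

lemma IsInwardCone.exitEnergy_halving (hG : MeasurableSet G) (hB : IsInwardCone G S B R)
    (hz : z ∈ B) (hh : MemLp h 2 μ) (hsupp : h.support ⊆ S ∩ G) {ε : ℝ} (hε : 0 < ε) (k : ℕ) :
    (2 + ε) * exitEnergy μ G h ((1 / 2 : ℝ) ^ (k + 1) • z) ≤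
      (1 + ε) * exitEnergy μ G h ((1 / 2 : ℝ) ^ k • z) +
        (1 + ε⁻¹) * translationEnergy μ G h ((1 / 2 : ℝ) ^ (k + 1) • z) := by
  rw [← half_pow_succ_smul_add_self k z]
  refine _root_.exitEnergy_halving hG hh (hsupp.trans inter_subset_right)
    (fun y hy => hB.add_smul_mem (hsupp hy) hz (half_pow_mem_Icc (k + 1))) (fun y hy hmem => ?_) hε
  rw [half_pow_succ_smul_add_self, sub_eq_add_neg, ← neg_smul] at hmem
  have hstep := hB.add_mem y (hsupp hy).1 z hz z hz (-(1 / 2 : ℝ) ^ k)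
    ⟨by linarith [(half_pow_mem_Icc k).2], by linarith [(half_pow_mem_Icc k).1]⟩ _
    (half_pow_mem_Icc (k + 1)) hmem
  convert hstep using 1
  rw [neg_smul, ← half_pow_succ_smul_add_self k z]
  abel

/-- A Hardy inequality: for `β < 2` the boundary layers contract from one dyadic scale to the next,
so extension by zero increases the dyadic energy at most by a constant factor. -/
lemma exists_dyadicEnergy_univ_le (hG : MeasurableSet G) (hB : IsInwardCone G S B R) (hβ : 0 ≤ β)
    (hβ2 : β < 2) :
    ∃ C, 0 ≤ C ∧ ∀ (h : E → ℝ) (n : ℕ), ∀ z ∈ B, MemLp h 2 μ → h.support ⊆ S ∩ G →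
      dyadicEnergy μ β univ h n z ≤ C * ((∫ y, h y ^ 2 ∂μ) + dyadicEnergy μ β G h n z) := by
  obtain ⟨ε, hε, hβε⟩ : ∃ ε > 0, 2 - β = 2 * ε := ⟨(2 - β) / 2, by linarith, by ring⟩
  have hgap : 0 < 2 + ε - β * (1 + ε) := by nlinarith
  refine ⟨1 + (2 + ε - β * (1 + ε))⁻¹ * ((2 + ε) + (1 + ε⁻¹)), by positivity,
    fun h n z hz hh hsupp => ?_⟩
  obtain ⟨exits, hexits_def⟩ : ∃ x, x = ∑ k ∈ Finset.range n,
    β ^ k * exitEnergy μ G h ((1 / 2 : ℝ) ^ k • z) := ⟨_, rfl⟩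
  have hsplit : dyadicEnergy μ β univ h n z = dyadicEnergy μ β G h n z + exits := by
    simp only [dyadicEnergy, hexits_def, ← Finset.sum_add_distrib, ← mul_add]
    exact Finset.sum_congr rfl fun k _ => by
      rw [translationEnergy_univ_eq_add_exitEnergy hG hh (hsupp.trans inter_subset_right)
        fun y hy => hB.add_smul_mem (hsupp hy) hz (half_pow_mem_Icc k)]
  have hexits : (2 + ε - β * (1 + ε)) * exits ≤
      (2 + ε) * exitEnergy μ G h ((1 / 2 : ℝ) ^ 0 • z) +
        (1 + ε⁻¹) * dyadicEnergy μ β G h n z := by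
    rw [hexits_def, dyadicEnergy]
    exact sub_mul_sum_pow_mul_le (D := fun k => exitEnergy μ G h ((1 / 2 : ℝ) ^ k • z))
      (O := fun k => translationEnergy μ G h ((1 / 2 : ℝ) ^ k • z)) (q := 1 + ε) hβ
      (by positivity) (by positivity) (by positivity) (fun _ => exitEnergy_nonneg)
      (fun _ => translationEnergy_nonneg) (hB.exitEnergy_halving hG hz hh hsupp hε) n
  have hfirst := mul_le_mul_of_nonneg_left
    (exitEnergy_le_integral_sq (G := G) hh ((1 / 2 : ℝ) ^ 0 • z)) (by positivity : 0 ≤ 2 + ε)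
  have hmass : 0 ≤ ∫ y, h y ^ 2 ∂μ := integral_nonneg fun _ => sq_nonneg _
  have henergy : 0 ≤ dyadicEnergy μ β G h n z := dyadicEnergy_nonneg hβ n
  have hexits' : exits ≤ (2 + ε - β * (1 + ε))⁻¹ *
      (((2 + ε) + (1 + ε⁻¹)) * ((∫ y, h y ^ 2 ∂μ) + dyadicEnergy μ β G h n z)) := by
    rw [← div_eq_inv_mul, le_div_iff₀' hgap]
    linarith [mul_nonneg (by positivity : 0 ≤ 1 + ε⁻¹) hmass,
      mul_nonneg (by positivity : 0 ≤ 2 + ε) henergy]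
  linarith

end Dyadic

section Gagliardo

lemma sq_sub_div_dist_rpow_le {E : Type*} [NormedAddCommGroup E] {v : E → ℝ} {K : ℝ≥0}
    (hv : LipschitzWith K v) (p : ℝ) (x y : E) :
    (v x - v y) ^ 2 / dist x y ^ p ≤ K ^ 2 * ‖x - y‖ ^ (2 - p) := by
  obtain rfl | hxy := eq_or_ne x y
  · simp only [sub_self, ne_eq, OfNat.ofNat_ne_zero, not_false_eq_true, zero_pow, zero_div]
    positivity
  · have hpos : 0 < dist x y := dist_pos.2 hxy
    rw [← dist_eq_norm, Real.rpow_sub hpos, ← mul_div_assoc, Real.rpow_two, ← mul_pow,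
      ← sq_abs (v x - v y), ← Real.dist_eq]
    gcongr
    exact hv.dist_le_mul x y

lemma setLIntegral_norm_sub_rpow_le {E : Type*} [NormedAddCommGroup E] [MeasurableSpace E]
    [BorelSpace E] {μ : Measure E} [μ.IsAddRightInvariant] {G : Set E} {ρ : ℝ}
    (hG : G ⊆ ball 0 ρ) (r : ℝ) {x : E} (hx : x ∈ G) :
    ∫⁻ y in G, ENNReal.ofReal (‖x - y‖ ^ r) ∂μ ≤
      ∫⁻ u in ball (0 : E) (ρ + ρ), ENNReal.ofReal (‖u‖ ^ r) ∂μ := by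
  have hsub {y : E} (hy : y ∈ G) : y - x ∈ ball (0 : E) (ρ + ρ) := by
    have hxρ := hG hx
    have hyρ := hG hy
    rw [mem_ball_zero_iff] at *
    exact (norm_sub_le y x).trans_lt (add_lt_add hyρ hxρ)
  have hmeas : Measurable ((ball (0 : E) (ρ + ρ)).indicator fun u => ENNReal.ofReal (‖u‖ ^ r)) :=
    (by fun_prop : Measurable fun u : E => ENNReal.ofReal (‖u‖ ^ r)).indicator measurableSet_ball
  rw [← lintegral_indicator measurableSet_ball,
    ← lintegral_sub_right_eq_self (μ := μ) ((ball (0 : E) (ρ + ρ)).indicator _) x]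
  refine (setLIntegral_mono (hmeas.comp (measurable_sub_const x)) fun y hy => ?_).trans
    (setLIntegral_le_lintegral G _)
  rw [Function.comp_apply, indicator_of_mem (hsub hy), norm_sub_rev]

variable {E : Type*} [NormedAddCommGroup E] [NormedSpace ℝ E]

lemma pairwise_disjoint_dilate {B : Set E} {R : ℝ} (hBR : ∀ w ∈ B, R ≤ ‖w‖)
    (hB2R : ∀ w ∈ B, ‖w‖ < 2 * R) :
    Pairwise (Function.onFun Disjoint fun k : ℕ => (((2 : ℝ) ^ k • ·) ⁻¹' B : Set E)) := by
  refine (pairwise_disjoint_on _).2 fun j k hjk => disjoint_left.2 fun u hj hk => ?_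
  have hRj := hBR _ hj
  have hRk := hB2R _ hk
  rw [norm_smul, Real.norm_of_nonneg (by positivity)] at hRj hRk
  have hpow : (2 : ℝ) * 2 ^ j ≤ 2 ^ k := by
    rw [← pow_succ']
    exact pow_le_pow_right₀ one_le_two hjk
  linarith [mul_le_mul_of_nonneg_right hpow (norm_nonneg u)]

variable [MeasurableSpace E]
  {μ : Measure E} {G B : Set E} {R s : ℝ} {v : E → ℝ}

/-- The squared Gagliardo seminorm of order `s` as an extended nonnegative number, so that no
integrability has to be known in advance. -/
def gagliardoEnergy (μ : Measure E) (s : ℝ) (G : Set E) (v : E → ℝ) : ℝ≥0∞ :=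
  ∫⁻ x in G, ∫⁻ y in G,
    ENNReal.ofReal ((v x - v y) ^ 2 / dist x y ^ ((Module.finrank ℝ E : ℝ) + 2 * s)) ∂μ ∂μ

/-- The squared fractional Sobolev norm of order `s`, for `0 < s < 1`. -/
def sobolevEnergy (μ : Measure E) (s : ℝ) (G : Set E) (v : E → ℝ) : ℝ≥0∞ :=
  ENNReal.ofReal (∫ x in G, v x ^ 2 ∂μ) + gagliardoEnergy μ s G v

lemma ofReal_integral_le_lintegral_ofReal {α : Type*} [MeasurableSpace α] {ν : Measure α}
    {φ : α → ℝ} (hφ : ∀ x, 0 ≤ φ x) (hmeas : AEStronglyMeasurable φ ν) :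
    ENNReal.ofReal (∫ x, φ x ∂ν) ≤ ∫⁻ x, ENNReal.ofReal (φ x) ∂ν := by
  rw [integral_eq_lintegral_of_nonneg_ae (Eventually.of_forall hφ) hmeas]
  exact ENNReal.ofReal_toReal_le

variable [FiniteDimensional ℝ E] [BorelSpace E] [μ.IsAddHaarMeasure]

lemma setLIntegral_comp_smul {A : Set E} (hA : MeasurableSet A) {F : E → ℝ≥0∞} (hF : Measurable F)
    {c : ℝ} (hc : 0 < c) :
    ∫⁻ w in (c • ·) ⁻¹' A, F (c • w) ∂μ =
      ENNReal.ofReal (c ^ (-(Module.finrank ℝ E : ℝ))) * ∫⁻ u in A, F u ∂μ := by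
  rw [← setLIntegral_map hA hF (measurable_const_smul c), Measure.map_addHaar_smul μ hc.ne',
    Measure.restrict_smul, lintegral_smul_measure, smul_eq_mul, Real.rpow_neg hc.le,
    Real.rpow_natCast, abs_of_pos (by positivity)]

lemma setLIntegral_dilate_le (hB : MeasurableSet B) (hR : 0 < R) (hBR : ∀ w ∈ B, R ≤ ‖w‖)
    (hB2R : ∀ w ∈ B, ‖w‖ < 2 * R) (hs : 0 ≤ s) {F : E → ℝ≥0∞} (hF : Measurable F) (k : ℕ) :
    ENNReal.ofReal ((4 ^ s) ^ k) * ∫⁻ w in B, F ((1 / 2 : ℝ) ^ k • w) ∂μ ≤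
      ∫⁻ u in ((2 : ℝ) ^ k • ·) ⁻¹' B, ENNReal.ofReal
        (((2 * R) / ‖u‖) ^ ((Module.finrank ℝ E : ℝ) + 2 * s)) * F u ∂μ := by
  have hA : MeasurableSet (((2 : ℝ) ^ k • ·) ⁻¹' B) := measurable_const_smul _ hB
  have hBA : ((1 / 2 : ℝ) ^ k • ·) ⁻¹' (((2 : ℝ) ^ k • ·) ⁻¹' B) = B := by
    ext w
    simp [smul_smul]
  have hscale := setLIntegral_comp_smul (μ := μ) hA hF (by positivity : 0 < (1 / 2 : ℝ) ^ k)
  rw [hBA] at hscale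
  rw [hscale, ← mul_assoc, ← ENNReal.ofReal_mul (by positivity), ← lintegral_const_mul _ hF]
  refine setLIntegral_mono_ae' hA (Eventually.of_forall fun u hu => mul_le_mul_left
    (ENNReal.ofReal_le_ofReal ?_) _)
  have hRu := hBR _ hu
  have huR := hB2R _ hu
  rw [norm_smul, Real.norm_of_nonneg (by positivity)] at hRu huR
  have hu0 : 0 < ‖u‖ := pos_of_mul_pos_right (hR.trans_le hRu) (by positivity)
  have hweight : ((4 : ℝ) ^ s) ^ k * ((1 / 2 : ℝ) ^ k) ^ (-(Module.finrank ℝ E : ℝ)) =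
      ((2 : ℝ) ^ k) ^ ((Module.finrank ℝ E : ℝ) + 2 * s) := by
    rw [one_div, inv_pow, Real.inv_rpow (by positivity), Real.rpow_neg (by positivity), inv_inv,
      Real.rpow_add (by positivity), mul_comm, Real.rpow_mul (by positivity), Real.rpow_ofNat,
      ← pow_mul, pow_mul', Real.rpow_pow_comm (by norm_num)]
    norm_num
  rw [hweight]
  exact Real.rpow_le_rpow (by positivity) ((le_div_iff₀ hu0).2 huR.le) (by positivity)

lemma sum_setLIntegral_dilate_le (hB : MeasurableSet B) (hR : 0 < R) (hBR : ∀ w ∈ B, R ≤ ‖w‖)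
    (hB2R : ∀ w ∈ B, ‖w‖ < 2 * R) (hs : 0 ≤ s) {F : E → ℝ≥0∞} (hF : Measurable F) (n : ℕ) :
    ∑ k ∈ Finset.range n,
        ENNReal.ofReal ((4 ^ s) ^ k) * ∫⁻ w in B, F ((1 / 2 : ℝ) ^ k • w) ∂μ ≤
      ∫⁻ u, ENNReal.ofReal (((2 * R) / ‖u‖) ^ ((Module.finrank ℝ E : ℝ) + 2 * s)) * F u ∂μ := by
  refine (Finset.sum_le_sum fun k _ => setLIntegral_dilate_le hB hR hBR hB2R hs hF k).trans ?_
  rw [← lintegral_biUnion_finset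
    ((pairwise_disjoint_dilate hBR hB2R).set_pairwise _) fun _ _ => measurable_const_smul _ hB]
  exact setLIntegral_le_lintegral _ _

lemma measurable_indicator_add (hG : MeasurableSet G) {φ : E → E → ℝ≥0∞}
    (hφ : Measurable (Function.uncurry φ)) :
    Measurable (Function.uncurry fun u y => G.indicator (φ y) (y + u)) := by
  have : Measurable fun p : E × E => φ p.2 (p.2 + p.1) := by fun_prop
  exact this.indicator ((measurable_snd.add measurable_fst) hG)

lemma measurable_setLIntegral_inter_preimage_add (hG : MeasurableSet G) {φ : E → E → ℝ≥0∞}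
    (hφ : Measurable (Function.uncurry φ)) :
    Measurable fun u => ∫⁻ y in G ∩ (· + u) ⁻¹' G, φ y (y + u) ∂μ := by
  simp only [setLIntegral_inter_preimage_add hG]
  exact (measurable_indicator_add hG hφ).lintegral_prod_right

lemma lintegral_mul_setLIntegral_inter_preimage_add (hG : MeasurableSet G) {ω : E → ℝ≥0∞}
    (hω : Measurable ω) {φ : E → E → ℝ≥0∞} (hφ : Measurable (Function.uncurry φ)) :
    ∫⁻ u, ω u * ∫⁻ y in G ∩ (· + u) ⁻¹' G, φ y (y + u) ∂μ ∂μ =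
      ∫⁻ y in G, ∫⁻ x in G, ω (x - y) * φ y x ∂μ ∂μ := by
  have hinner (u : E) : ω u * ∫⁻ y in G ∩ (· + u) ⁻¹' G, φ y (y + u) ∂μ =
      ∫⁻ y in G, G.indicator (fun x => ω (x - y) * φ y x) (y + u) ∂μ := by
    rw [← lintegral_const_mul _ (by fun_prop), ← setLIntegral_inter_preimage_add hG]
    simp
  simp only [hinner]
  rw [lintegral_lintegral_swap (measurable_indicator_add hG (by fun_prop)).aemeasurable]
  refine lintegral_congr fun y => ?_
  rw [lintegral_add_left_eq_self (G.indicator fun x => ω (x - y) * φ y x) y, lintegral_indicator hG]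

/-- Each dyadic scale of `dyadicEnergy` integrates over directions to the part of the Gagliardo
energy with `y - x` in the corresponding annulus; the annuli are disjoint. -/
lemma lintegral_dyadicEnergy_le (hG : MeasurableSet G) (hB : MeasurableSet B) (hR : 0 < R)
    (hBR : ∀ w ∈ B, R ≤ ‖w‖) (hB2R : ∀ w ∈ B, ‖w‖ < 2 * R) (hs : 0 ≤ s) (hv : Measurable v)
    (n : ℕ) :
    ∫⁻ w in B, ENNReal.ofReal (dyadicEnergy μ (4 ^ s) G v n w) ∂μ ≤
      ENNReal.ofReal ((2 * R) ^ ((Module.finrank ℝ E : ℝ) + 2 * s)) * gagliardoEnergy μ s G v := by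
  set φ : E → E → ℝ≥0∞ := fun y x => ENNReal.ofReal ((v x - v y) ^ 2)
  have hφ : Measurable (Function.uncurry φ) := by fun_prop
  have hF := measurable_setLIntegral_inter_preimage_add (μ := μ) hG hφ
  calc ∫⁻ w in B, ENNReal.ofReal (dyadicEnergy μ (4 ^ s) G v n w) ∂μ
      ≤ ∫⁻ w in B, ∑ k ∈ Finset.range n, ENNReal.ofReal ((4 ^ s) ^ k) *
          ∫⁻ y in G ∩ (· + (1 / 2 : ℝ) ^ k • w) ⁻¹' G, φ y (y + (1 / 2 : ℝ) ^ k • w) ∂μ ∂μ := by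
        refine lintegral_mono fun w => ?_
        rw [dyadicEnergy, ENNReal.ofReal_sum_of_nonneg fun k _ =>
          mul_nonneg (by positivity) translationEnergy_nonneg]
        refine Finset.sum_le_sum fun k _ => ?_
        rw [ENNReal.ofReal_mul (by positivity)]
        exact mul_le_mul_right (ofReal_integral_le_lintegral_ofReal (fun _ => sq_nonneg _)
          (by fun_prop)) _
    _ = ∑ k ∈ Finset.range n, ENNReal.ofReal ((4 ^ s) ^ k) * ∫⁻ w in B,
          ∫⁻ y in G ∩ (· + (1 / 2 : ℝ) ^ k • w) ⁻¹' G, φ y (y + (1 / 2 : ℝ) ^ k • w) ∂μ ∂μ := by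
        have hF' (k : ℕ) : Measurable fun w => ∫⁻ y in G ∩ (· + (1 / 2 : ℝ) ^ k • w) ⁻¹' G,
            φ y (y + (1 / 2 : ℝ) ^ k • w) ∂μ := hF.comp (measurable_const_smul _)
        rw [lintegral_finsetSum _ fun k _ => (hF' k).const_mul _]
        exact Finset.sum_congr rfl fun k _ => lintegral_const_mul _ (hF' k)
    _ ≤ _ := sum_setLIntegral_dilate_le hB hR hBR hB2R hs hF n
    _ = ∫⁻ y in G, ∫⁻ x in G, ENNReal.ofReal
          (((2 * R) / ‖x - y‖) ^ ((Module.finrank ℝ E : ℝ) + 2 * s)) * φ y x ∂μ ∂μ :=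
        lintegral_mul_setLIntegral_inter_preimage_add hG (by fun_prop) hφ
    _ = _ := by
        rw [gagliardoEnergy, ← lintegral_const_mul' _ _ ENNReal.ofReal_ne_top]
        refine lintegral_congr fun y => ?_
        rw [← lintegral_const_mul' _ _ ENNReal.ofReal_ne_top]
        refine lintegral_congr fun x => ?_
        rw [← ENNReal.ofReal_mul (by positivity), ← ENNReal.ofReal_mul (by positivity),
          Real.div_rpow (by positivity) (norm_nonneg _), dist_eq_norm, norm_sub_rev, sub_sq_comm]
        congr 1
        ring

lemma lintegral_ball_norm_rpow_lt_top [Nontrivial E] {r : ℝ}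
    (hr : -(Module.finrank ℝ E : ℝ) < r) (ρ : ℝ) :
    ∫⁻ u in ball (0 : E) ρ, ENNReal.ofReal (‖u‖ ^ r) ∂μ < ∞ := by
  have hdim : 1 ≤ Module.finrank ℝ E := Module.finrank_pos
  have hint : IntegrableOn (fun t : ℝ => t ^ (Module.finrank ℝ E - 1) • t ^ r) (Ioo 0 ρ) := by
    have hrpow := (intervalIntegral.integrableOn_Ioo_rpow_iff (s := Module.finrank ℝ E - 1 + r)
      (t := max ρ 1) (by positivity)).2 (by linarith)
    refine (hrpow.mono_set (Ioo_subset_Ioo_right (le_max_left _ _))).congr_fun (fun t ht => ?_)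
      measurableSet_Ioo
    simp only [smul_eq_mul]
    rw [Real.rpow_add ht.1, ← Real.rpow_natCast, Nat.cast_sub hdim, Nat.cast_one]
  exact ((integrableOn_fun_norm_addHaar μ (f := fun t : ℝ => t ^ r)).2 hint).setLIntegral_lt_top

lemma gagliardoEnergy_lt_top [Nontrivial E] (hG : Bornology.IsBounded G) (hs : s < 1) {K : ℝ≥0}
    (hv : LipschitzWith K v) : gagliardoEnergy μ s G v < ∞ := by
  obtain ⟨ρ, hρ⟩ := hG.subset_ball 0
  set p : ℝ := Module.finrank ℝ E + 2 * s
  set M := ENNReal.ofReal (K ^ 2) *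
    ∫⁻ u in ball (0 : E) (ρ + ρ), ENNReal.ofReal (‖u‖ ^ (2 - p)) ∂μ
  have hM : M < ∞ :=
    ENNReal.mul_lt_top ENNReal.ofReal_lt_top (lintegral_ball_norm_rpow_lt_top (by linarith) _)
  have hinner (x : E) (hx : x ∈ G) :
      ∫⁻ y in G, ENNReal.ofReal ((v x - v y) ^ 2 / dist x y ^ p) ∂μ ≤ M := by
    calc ∫⁻ y in G, ENNReal.ofReal ((v x - v y) ^ 2 / dist x y ^ p) ∂μ
        ≤ ∫⁻ y in G, ENNReal.ofReal (K ^ 2) * ENNReal.ofReal (‖x - y‖ ^ (2 - p)) ∂μ :=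
          lintegral_mono fun y => by
            rw [← ENNReal.ofReal_mul (by positivity)]
            exact ENNReal.ofReal_le_ofReal (sq_sub_div_dist_rpow_le hv p x y)
      _ ≤ M := by
          rw [lintegral_const_mul' _ _ ENNReal.ofReal_ne_top]
          exact mul_le_mul_right (setLIntegral_norm_sub_rpow_le hρ _ hx) _
  calc gagliardoEnergy μ s G v ≤ ∫⁻ _ in G, M ∂μ := setLIntegral_mono measurable_const hinner
    _ = M * μ G := setLIntegral_const _ _
    _ < ∞ := ENNReal.mul_lt_top hM hG.measure_lt_top

lemma ofReal_integral_integral_eq_gagliardoEnergy [Nontrivial E] (hG : Bornology.IsBounded G)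
    (hs : s < 1) {K : ℝ≥0} (hv : LipschitzWith K v) :
    ENNReal.ofReal (∫ x in G, ∫ y in G,
      (v x - v y) ^ 2 / dist x y ^ ((Module.finrank ℝ E : ℝ) + 2 * s) ∂μ ∂μ) =
      gagliardoEnergy μ s G v := by
  have hmeas : Measurable fun p : E × E =>
      (v p.1 - v p.2) ^ 2 / dist p.1 p.2 ^ ((Module.finrank ℝ E : ℝ) + 2 * s) := by
    have := hv.continuous.measurable
    fun_prop
  have hfin := gagliardoEnergy_lt_top (μ := μ) hG hs hv
  have hint : Integrable (fun p : E × E =>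
      (v p.1 - v p.2) ^ 2 / dist p.1 p.2 ^ ((Module.finrank ℝ E : ℝ) + 2 * s))
        ((μ.restrict G).prod (μ.restrict G)) := by
    refine ⟨hmeas.aestronglyMeasurable, ?_⟩
    rw [hasFiniteIntegral_iff_ofReal (Eventually.of_forall fun p => by positivity),
      lintegral_prod _ hmeas.ennreal_ofReal.aemeasurable]
    exact hfin
  rw [integral_integral hint, ofReal_integral_eq_lintegral_ofReal hint
    (Eventually.of_forall fun p => by positivity),
    lintegral_prod _ hmeas.ennreal_ofReal.aemeasurable]
  rfl

end Gagliardo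

section TwoScale

lemma continuous_mixedDifference {E X : Type*} [NormedAddCommGroup E] [TopologicalSpace X]
    {H : E → ℝ} {a b b' : X → E} (hH : Continuous H) (ha : Continuous a)
    (hb : Continuous b) (hb' : Continuous b') :
    Continuous fun x => mixedDifference H (a x) (b x) (b' x) := by
  unfold mixedDifference
  fun_prop

lemma hasCompactSupport_mul_prod {E : Type*} [NormedAddCommGroup E] {u v : E → ℝ}
    (hu : HasCompactSupport u) (hv : HasCompactSupport v) :
    HasCompactSupport fun p : E × E => u p.1 * v p.2 := by
  refine .intro (hu.isCompact.prod hv.isCompact) fun p hp => ?_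
  rcases not_and_or.1 hp with h | h
  · rw [image_eq_zero_of_notMem_tsupport h, zero_mul]
  · rw [image_eq_zero_of_notMem_tsupport h, mul_zero]

variable {E : Type*} [NormedAddCommGroup E] [NormedSpace ℝ E]

/-- The function whose integral against `(z, w) ↦ ∂ρ(z) ρ(w)` is, up to sign, the derivative of `H`
mollified at the scale `2⁻ⁿ` in both variables. It is obtained by passing from one dyadic scale to
the next in one variable at a time. -/
def dyadicKernel (H : E → ℝ) (n : ℕ) (p : E × E) : ℝ :=
  H (p.1 + p.2) + ∑ k ∈ Finset.range n,
    (2 ^ (k + 1) * mixedDifference H ((1 / 2 : ℝ) ^ (k + 1) • p.1) ((1 / 2 : ℝ) ^ k • p.2)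
        ((1 / 2 : ℝ) ^ (k + 1) • p.2) +
      2 ^ k * mixedDifference H ((1 / 2 : ℝ) ^ k • p.1) ((1 / 2 : ℝ) ^ k • p.2)
        ((1 / 2 : ℝ) ^ (k + 1) • p.2))

lemma dyadicKernel_succ (H : E → ℝ) (n : ℕ) (p : E × E) :
    dyadicKernel H (n + 1) p = dyadicKernel H n p +
      (2 ^ (n + 1) * mixedDifference H ((1 / 2 : ℝ) ^ (n + 1) • p.1) ((1 / 2 : ℝ) ^ n • p.2)
          ((1 / 2 : ℝ) ^ (n + 1) • p.2) +
        2 ^ n * mixedDifference H ((1 / 2 : ℝ) ^ n • p.1) ((1 / 2 : ℝ) ^ n • p.2)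
          ((1 / 2 : ℝ) ^ (n + 1) • p.2)) := by
  rw [dyadicKernel, Finset.sum_range_succ, ← add_assoc, dyadicKernel]

lemma continuous_dyadicKernel {H : E → ℝ} (hH : Continuous H) (n : ℕ) :
    Continuous (dyadicKernel H n) := by
  refine (hH.comp (by fun_prop)).add (continuous_finsetSum _ fun k _ => ?_)
  have hmixed (s t t' : ℝ) := continuous_mixedDifference hH
    (by fun_prop : Continuous fun p : E × E => s • p.1)
    (by fun_prop : Continuous fun p : E × E => t • p.2)
    (by fun_prop : Continuous fun p : E × E => t' • p.2)
  exact (continuous_const.mul (hmixed _ _ _)).add (continuous_const.mul (hmixed _ _ _))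

variable [MeasurableSpace E] {μ : Measure E} {ρ : E → ℝ}

/-- The mean of `φ (s z + t w)` over independent `z` and `w` with density `ρ`. -/
def twoScaleMean (μ : Measure E) (ρ φ : E → ℝ) (s t : ℝ) : ℝ :=
  ∫ p, φ (s • p.1 + t • p.2) * (ρ p.1 * ρ p.2) ∂μ.prod μ

lemma twoScaleMean_comm [SFinite μ] (φ : E → ℝ) (s t : ℝ) :
    twoScaleMean μ ρ φ s t = twoScaleMean μ ρ φ t s := by
  rw [twoScaleMean, ← integral_prod_swap]
  simp only [Prod.fst_swap, Prod.snd_swap, add_comm, mul_comm, twoScaleMean]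

variable [FiniteDimensional ℝ E] [BorelSpace E] [μ.IsAddHaarMeasure]

lemma exists_mollifier {B : Set E} (hB : IsOpen B) (hBne : B.Nonempty) :
    ∃ ρ : E → ℝ, ContDiff ℝ 1 ρ ∧ HasCompactSupport ρ ∧ tsupport ρ ⊆ B ∧ ∫ z, ρ z ∂μ = 1 := by
  obtain ⟨c, hc⟩ := hBne
  obtain ⟨r, hr, hrB⟩ := nhds_basis_closedBall.mem_iff.1 (hB.mem_nhds hc)
  let bump : ContDiffBump c := ⟨r / 2, r, half_pos hr, half_lt_self hr⟩
  exact ⟨bump.normed μ, bump.contDiff_normed, bump.hasCompactSupport_normed,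
    bump.tsupport_normed_eq (μ := μ).trans_subset hrB, bump.integral_normed⟩

lemma tendsto_twoScaleMean {φ : E → ℝ} (hφ : Continuous φ) (hρ : Continuous ρ)
    (hρc : HasCompactSupport ρ) (hρ1 : ∫ z, ρ z ∂μ = 1) {t : ℕ → ℝ} (ht : Tendsto t atTop (𝓝 0)) :
    Tendsto (fun n => twoScaleMean μ ρ φ (t n) (t n)) atTop (𝓝 (φ 0)) := by
  have hrestrict (τ : ℝ) : twoScaleMean μ ρ φ τ τ = ∫ p in tsupport ρ ×ˢ tsupport ρ,
      φ (τ • p.1 + τ • p.2) * (ρ p.1 * ρ p.2) ∂μ.prod μ := by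
    refine (setIntegral_eq_integral_of_forall_compl_eq_zero fun p hp => ?_).symm
    rcases not_and_or.1 hp with h | h <;> simp [image_eq_zero_of_notMem_tsupport h]
  have hcont : Continuous fun τ => twoScaleMean μ ρ φ τ τ := by
    simp only [hrestrict]
    exact continuous_parametric_integral_of_continuous (by fun_prop)
      (hρc.isCompact.prod hρc.isCompact)
  have hzero : twoScaleMean μ ρ φ 0 0 = φ 0 := by
    simp only [twoScaleMean, zero_smul, add_zero]
    rw [integral_const_mul, integral_prod_mul, hρ1, one_mul, mul_one]
  simpa only [hzero, Function.comp_def] using (hcont.tendsto 0).comp ht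

lemma integral_fderiv_smul_mul_eq {K : E → ℝ} (hK : ContDiff ℝ 1 K) (hρ : ContDiff ℝ 1 ρ)
    (hρc : HasCompactSupport ρ) (e : E) {s : ℝ} (hs : s ≠ 0) :
    ∫ z, fderiv ℝ K (s • z) e * ρ z ∂μ = -s⁻¹ * ∫ z, K (s • z) * fderiv ℝ ρ z e ∂μ := by
  have hKs : ContDiff ℝ 1 fun z => K (s • z) := hK.comp (contDiff_id.const_smul s)
  have hfderiv (z : E) : fderiv ℝ (fun z => K (s • z)) z e = s * fderiv ℝ K (s • z) e := by
    simp [fderiv_comp_smul]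
  have hKs' : Continuous fun z => fderiv ℝ (fun z => K (s • z)) z e :=
    (hKs.continuous_fderiv one_ne_zero).clm_apply continuous_const
  have hρ' : Continuous fun z => fderiv ℝ ρ z e :=
    (hρ.continuous_fderiv one_ne_zero).clm_apply continuous_const
  have hparts := integral_mul_fderiv_eq_neg_fderiv_mul_of_integrable (μ := μ) (v := e)
    ((hKs'.mul hρ.continuous).integrable_of_hasCompactSupport hρc.mul_left)
    ((hKs.continuous.mul hρ').integrable_of_hasCompactSupport (hρc.fderiv_apply ℝ e).mul_left)
    ((hKs.continuous.mul hρ.continuous).integrable_of_hasCompactSupport hρc.mul_left)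
    (fun z _ => hKs.differentiable one_ne_zero z) (fun z _ => hρ.differentiable one_ne_zero z)
  simp only [hfderiv, mul_assoc, integral_const_mul] at hparts
  rw [hparts, neg_mul_neg, inv_mul_cancel_left₀ hs]

lemma integrable_mul_mul_prod {J : E × E → ℝ} {u v : E → ℝ} (hJ : Continuous J)
    (hu : Continuous u) (huc : HasCompactSupport u) (hv : Continuous v)
    (hvc : HasCompactSupport v) :
    Integrable (fun p => J p * (u p.1 * v p.2)) (μ.prod μ) :=
  (by fun_prop : Continuous fun p => J p * (u p.1 * v p.2)).integrable_of_hasCompactSupport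
    (hasCompactSupport_mul_prod huc hvc).mul_left

lemma integral_prod_fderiv_smul_mul_eq {F : E → E → ℝ} (hF : ∀ w, ContDiff ℝ 1 (F w)) (e : E)
    (hFc : Continuous fun p : E × E => F p.2 p.1)
    (hFc' : Continuous fun p : E × E => fderiv ℝ (F p.2) p.1 e) (hρ : ContDiff ℝ 1 ρ)
    (hρc : HasCompactSupport ρ) {s : ℝ} (hs : s ≠ 0) :
    ∫ p, fderiv ℝ (F p.2) (s • p.1) e * (ρ p.1 * ρ p.2) ∂μ.prod μ =
      -s⁻¹ * ∫ p, F p.2 (s • p.1) * (fderiv ℝ ρ p.1 e * ρ p.2) ∂μ.prod μ := by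
  have hscale : Continuous fun p : E × E => (s • p.1, p.2) := by fun_prop
  have hint := integrable_mul_mul_prod (μ := μ) (hFc'.comp hscale) hρ.continuous hρc
    hρ.continuous hρc
  have hint' := integrable_mul_mul_prod (μ := μ) (hFc.comp hscale)
    ((hρ.continuous_fderiv one_ne_zero).clm_apply continuous_const) (hρc.fderiv_apply ℝ e)
    hρ.continuous hρc
  simp only [Function.comp_apply] at hint hint'
  rw [integral_prod_symm _ hint, integral_prod_symm _ hint', ← integral_const_mul]
  refine integral_congr_ae (.of_forall fun w => ?_)
  simp only [← mul_assoc, integral_mul_const]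
  rw [integral_fderiv_smul_mul_eq (hF w) hρ hρc e hs]

variable {H : E → ℝ}

lemma twoScaleMean_fderiv (hH : ContDiff ℝ 1 H) (e : E) (hρ : ContDiff ℝ 1 ρ)
    (hρc : HasCompactSupport ρ) {s : ℝ} (hs : s ≠ 0) (t : ℝ) :
    twoScaleMean μ ρ (fderiv ℝ H · e) s t =
      -s⁻¹ * ∫ p, H (s • p.1 + t • p.2) * (fderiv ℝ ρ p.1 e * ρ p.2) ∂μ.prod μ := by
  have hfderiv : Continuous fun z => fderiv ℝ H z e :=
    (hH.continuous_fderiv one_ne_zero).clm_apply continuous_const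
  have hparts := integral_prod_fderiv_smul_mul_eq (μ := μ) (F := fun w z => H (z + t • w))
    (fun w => hH.comp (contDiff_id.add contDiff_const)) e (hH.continuous.comp (by fun_prop))
    (by
      simp only [fderiv_comp_add_right]
      exact hfderiv.comp (by fun_prop)) hρ hρc hs
  simpa only [fderiv_comp_add_right, twoScaleMean] using hparts

lemma twoScaleMean_fderiv_sub (hH : ContDiff ℝ 1 H) (e : E) (hρ : ContDiff ℝ 1 ρ)
    (hρc : HasCompactSupport ρ) {s : ℝ} (hs : s ≠ 0) (t t' : ℝ) :
    twoScaleMean μ ρ (fderiv ℝ H · e) s t' - twoScaleMean μ ρ (fderiv ℝ H · e) s t =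
      -s⁻¹ * ∫ p, mixedDifference H (s • p.1) (t • p.2) (t' • p.2) *
        (fderiv ℝ ρ p.1 e * ρ p.2) ∂μ.prod μ := by
  have hfderiv : Continuous fun z => fderiv ℝ H z e :=
    (hH.continuous_fderiv one_ne_zero).clm_apply continuous_const
  have hdiff (w z : E) : DifferentiableAt ℝ (fun z => H (z + w)) z :=
    (hH.comp (contDiff_id.add contDiff_const)).differentiable one_ne_zero z
  have hfderiv_mixed (w z : E) :
      fderiv ℝ (fun z => mixedDifference H z (t • w) (t' • w)) z e =
        fderiv ℝ H (z + t' • w) e - fderiv ℝ H (z + t • w) e := by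
    simp only [mixedDifference]
    rw [fderiv_sub_const, fderiv_fun_sub (hdiff _ _) (hdiff _ _), fderiv_comp_add_right,
      fderiv_comp_add_right, sub_apply]
  have hint (τ : ℝ) := integrable_mul_mul_prod (μ := μ)
    (hfderiv.comp (by fun_prop : Continuous fun p : E × E => s • p.1 + τ • p.2))
    hρ.continuous hρc hρ.continuous hρc
  simp only [Function.comp_apply] at hint
  have hparts := integral_prod_fderiv_smul_mul_eq (μ := μ)
    (F := fun w z => mixedDifference H z (t • w) (t' • w))
    (fun w => ((hH.comp (contDiff_id.add contDiff_const)).sub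
      (hH.comp (contDiff_id.add contDiff_const))).sub contDiff_const) e
    (continuous_mixedDifference hH.continuous (by fun_prop) (by fun_prop) (by fun_prop))
    (by
      simp only [hfderiv_mixed]
      exact (hfderiv.comp (by fun_prop)).sub (hfderiv.comp (by fun_prop))) hρ hρc hs
  simp only [hfderiv_mixed, sub_mul] at hparts
  rw [twoScaleMean, twoScaleMean, ← integral_sub (hint t') (hint t), hparts]

lemma twoScaleMean_fderiv_half_pow (hH : ContDiff ℝ 1 H) (e : E) (hρ : ContDiff ℝ 1 ρ)
    (hρc : HasCompactSupport ρ) (n : ℕ) :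
    twoScaleMean μ ρ (fderiv ℝ H · e) ((1 / 2) ^ n) ((1 / 2) ^ n) =
      -∫ p, dyadicKernel H n p * (fderiv ℝ ρ p.1 e * ρ p.2) ∂μ.prod μ := by
  have hint {J : E × E → ℝ} (hJ : Continuous J) := integrable_mul_mul_prod (μ := μ) hJ
    ((hρ.continuous_fderiv one_ne_zero).clm_apply continuous_const) (hρc.fderiv_apply ℝ e)
    hρ.continuous hρc
  induction n with
  | zero => simp [twoScaleMean_fderiv hH e hρ hρc one_ne_zero, dyadicKernel]
  | succ n ih =>
    have hne (k : ℕ) : (1 / 2 : ℝ) ^ k ≠ 0 := by positivity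
    have hfine := twoScaleMean_fderiv_sub (μ := μ) hH e hρ hρc (hne (n + 1)) ((1 / 2) ^ n)
      ((1 / 2) ^ (n + 1))
    have hcoarse := twoScaleMean_fderiv_sub (μ := μ) hH e hρ hρc (hne n) ((1 / 2) ^ n)
      ((1 / 2) ^ (n + 1))
    rw [twoScaleMean_comm _ ((1 / 2) ^ (n + 1)) ((1 / 2) ^ n)] at hfine
    have hmixed (s : ℝ) := hint (continuous_mixedDifference hH.continuous
      (by fun_prop : Continuous fun p : E × E => s • p.1)
      (by fun_prop : Continuous fun p : E × E => (1 / 2 : ℝ) ^ n • p.2)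
      (by fun_prop : Continuous fun p : E × E => (1 / 2 : ℝ) ^ (n + 1) • p.2))
    simp only [dyadicKernel_succ, add_mul, mul_assoc]
    rw [integral_add (hint (continuous_dyadicKernel hH.continuous n))
      (((hmixed _).const_mul _).fun_add ((hmixed _).const_mul _)),
      integral_add ((hmixed _).const_mul _) ((hmixed _).const_mul _), integral_const_mul,
      integral_const_mul]
    simp only [one_div, inv_pow, inv_inv] at hfine hcoarse ih ⊢
    linarith

lemma enorm_fderiv_zero_le_of_dyadicKernel (hH : ContDiff ℝ 1 H) {e : E} (hρ : ContDiff ℝ 1 ρ)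
    (hρc : HasCompactSupport ρ) (hρ1 : ∫ z, ρ z ∂μ = 1) {B : Set E} (hρB : tsupport ρ ⊆ B)
    {M : ℝ≥0∞} (hM : ∀ p : E × E, ‖fderiv ℝ ρ p.1 e * ρ p.2‖ₑ ≤ M)
    {A : ℝ≥0∞} (hA : ∀ n, ∫⁻ p in B ×ˢ B, ‖dyadicKernel H n p‖ₑ ∂μ.prod μ ≤ A) :
    ‖fderiv ℝ H 0 e‖ₑ ≤ A * M := by
  have hfderiv : Continuous fun z => fderiv ℝ H z e :=
    (hH.continuous_fderiv one_ne_zero).clm_apply continuous_const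
  refine le_of_tendsto' (tendsto_twoScaleMean hfderiv hρ.continuous hρc hρ1
    (tendsto_pow_atTop_nhds_zero_of_lt_one (by norm_num : (0 : ℝ) ≤ 1 / 2) (by norm_num))).enorm
    fun n => ?_
  have hsupp (p : E × E) (hp : p ∉ B ×ˢ B) : fderiv ℝ ρ p.1 e * ρ p.2 = 0 := by
    rcases not_and_or.1 hp with h | h
    · rw [image_eq_zero_of_notMem_tsupport
        (f := fun z => fderiv ℝ ρ z e) fun h' => h (hρB (tsupport_fderiv_apply_subset ℝ e h')),
        zero_mul]
    · rw [image_eq_zero_of_notMem_tsupport fun h' => h (hρB h'), mul_zero]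
  rw [twoScaleMean_fderiv_half_pow hH e hρ hρc, enorm_neg,
    ← setIntegral_eq_integral_of_forall_compl_eq_zero (s := B ×ˢ B)
      fun p hp => by rw [hsupp p hp, mul_zero]]
  calc ‖∫ p in B ×ˢ B, dyadicKernel H n p * (fderiv ℝ ρ p.1 e * ρ p.2) ∂μ.prod μ‖ₑ
      ≤ ∫⁻ p in B ×ˢ B, ‖dyadicKernel H n p‖ₑ * M ∂μ.prod μ := by
        refine (enorm_integral_le_lintegral_enorm _).trans (lintegral_mono fun p => ?_)
        rw [enorm_mul]
        gcongr
        exact hM p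
    _ ≤ A * M := by
        rw [lintegral_mul_const _ (continuous_dyadicKernel hH.continuous n).measurable.enorm]
        gcongr
        exact hA n

/-- The first derivatives of `H` at `0` are controlled by the values of `H` on small multiples of
the directions in `B` only. -/
lemma exists_enorm_fderiv_zero_le (μ : Measure E) [μ.IsAddHaarMeasure] {B : Set E} (hB : IsOpen B)
    (hBne : B.Nonempty) :
    ∃ M : ℝ≥0∞, M ≠ ∞ ∧ ∀ (H : E → ℝ) (e : E) (A : ℝ≥0∞), ContDiff ℝ 1 H → ‖e‖ ≤ 1 →
      (∀ n, ∫⁻ p in B ×ˢ B, ‖dyadicKernel H n p‖ₑ ∂μ.prod μ ≤ A) → ‖fderiv ℝ H 0 e‖ₑ ≤ A * M := by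
  obtain ⟨ρ, hρ, hρc, hρB, hρ1⟩ := exists_mollifier (μ := μ) hB hBne
  obtain ⟨M₀, hM₀⟩ := hρc.exists_bound_of_continuous hρ.continuous
  obtain ⟨M₁, hM₁⟩ := (hρc.fderiv ℝ).exists_bound_of_continuous (hρ.continuous_fderiv one_ne_zero)
  refine ⟨ENNReal.ofReal (M₁ * M₀), ENNReal.ofReal_ne_top, fun H e A hH he hA =>
    enorm_fderiv_zero_le_of_dyadicKernel hH hρ hρc hρ1 hρB (fun p => ?_) hA⟩
  rw [← ofReal_norm, norm_mul]
  refine ENNReal.ofReal_le_ofReal (mul_le_mul ?_ (hM₀ p.2) (norm_nonneg _)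
    ((norm_nonneg _).trans (hM₁ 0)))
  exact ((fderiv ℝ ρ p.1).unit_le_opNorm e he).trans (hM₁ p.1)

end TwoScale

section Correlation

variable {E : Type*} [NormedAddCommGroup E] [NormedSpace ℝ E] [FiniteDimensional ℝ E]
  [MeasurableSpace E] [BorelSpace E] {μ : Measure E} [μ.IsAddHaarMeasure] {f h : E → ℝ}

lemma correlation_eq_convolution (h f : E → ℝ) :
    correlation μ h f = convolution (fun x => h (-x)) f (ContinuousLinearMap.mul ℝ ℝ) μ := by
  ext v
  rw [correlation, convolution, ← integral_neg_eq_self]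
  simp only [ContinuousLinearMap.mul_apply', neg_add_eq_sub]

lemma locallyIntegrable_comp_neg (hh : MemLp h 2 μ) : LocallyIntegrable (fun x => h (-x)) μ :=
  (hh.comp_measurePreserving (Measure.measurePreserving_neg μ)).locallyIntegrable one_le_two

lemma contDiff_correlation (hh : MemLp h 2 μ) (hf : ContDiff ℝ 1 f) (hfc : HasCompactSupport f) :
    ContDiff ℝ 1 (correlation μ h f) := by
  rw [correlation_eq_convolution]
  exact hfc.contDiff_convolution_right _ (locallyIntegrable_comp_neg hh) (n := 1) hf

lemma fderiv_correlation_apply (hh : MemLp h 2 μ) (hf : ContDiff ℝ 1 f)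
    (hfc : HasCompactSupport f) (v e : E) :
    fderiv ℝ (correlation μ h f) v e = correlation μ h (fderiv ℝ f · e) v := by
  have hloc := locallyIntegrable_comp_neg hh
  rw [correlation_eq_convolution, correlation_eq_convolution,
    (hfc.hasFDerivAt_convolution_right _ hloc hf v).fderiv,
    convolution_precompR_apply _ hloc (hfc.fderiv ℝ) (hf.continuous_fderiv one_ne_zero)]

end Correlation

section Local

lemma sum_range_mul_succ_add_mul_le {a : ℕ → ℝ} (ha : ∀ k, 0 ≤ a k) {c c' : ℝ} (hc : 0 ≤ c)
    (hc' : 0 ≤ c') (n : ℕ) :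
    ∑ k ∈ Finset.range n, (c * a (k + 1) + c' * a k) ≤
      (c + c') * ∑ k ∈ Finset.range (n + 1), a k := by
  rw [Finset.sum_add_distrib, ← Finset.mul_sum, ← Finset.mul_sum, add_mul]
  gcongr
  · rw [Finset.sum_range_succ']
    linarith [ha 0]
  · exact fun k _ _ => ha k
  · exact n.le_succ

lemma lintegral_prod_add_le {α γ : Type*} [MeasurableSpace α] [MeasurableSpace γ] (μ : Measure α)
    (ν : Measure γ) [IsFiniteMeasure ν] (F : α → ℝ≥0∞) (K : γ → ℝ≥0∞) :
    ∫⁻ p, (F p.1 + K p.2) ∂μ.prod ν ≤ (∫⁻ x, F x ∂μ) * ν univ + (∫⁻ y, K y ∂ν) * μ univ := by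
  refine (lintegral_prod_le _).trans_eq ?_
  simp only [lintegral_add_left measurable_const, lintegral_const]
  rw [lintegral_add_right _ measurable_const, lintegral_mul_const' _ _ (measure_ne_top ν univ),
    lintegral_const]

lemma memLp_mul_of_abs_le {α : Type*} [MeasurableSpace α] {μ : Measure α} {p : ℝ≥0∞}
    {g χ : α → ℝ} (hg : MemLp g p μ) (hχ : AEStronglyMeasurable χ μ) {K : ℝ}
    (hK : ∀ y, |χ y| ≤ K) : MemLp (fun y => χ y * g y) p μ :=
  hg.mul' (memLp_top_of_bound hχ K (.of_forall hK))

lemma integral_indicator_mul_sq_le {α : Type*} [MeasurableSpace α] {μ : Measure α} {G : Set α}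
    {g χ : α → ℝ} (hG : MeasurableSet G) (hg : MemLp g 2 μ) {K : ℝ} (hK : ∀ y, |χ y| ≤ K) :
    ∫ y, G.indicator (fun y => χ y * g y) y ^ 2 ∂μ ≤ K ^ 2 * ∫ y in G, g y ^ 2 ∂μ := by
  rw [← integral_const_mul, ← integral_indicator hG]
  refine integral_mono_of_nonneg (.of_forall fun _ => sq_nonneg _)
    ((hg.integrable_sq.const_mul _).indicator hG) (.of_forall fun y => ?_)
  by_cases hy : y ∈ G
  · simp only [indicator_of_mem hy, mul_pow]
    exact mul_le_mul_of_nonneg_right (sq_le_sq' (by linarith [abs_le.1 (hK y)])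
      (abs_le.1 (hK y)).2) (sq_nonneg _)
  · simp [indicator_of_notMem hy]

variable {E : Type*} [NormedAddCommGroup E] [NormedSpace ℝ E] [MeasurableSpace E]
  [BorelSpace E] {μ : Measure E} [μ.IsAddRightInvariant] {G S B : Set E} {R β : ℝ} {f h χ : E → ℝ}

lemma IsInwardCone.pow_mul_abs_mixedDifference_correlation_le (hG : MeasurableSet G)
    (hB : IsInwardCone G S B R) (hh : MemLp h 2 μ) (hf : MemLp f 2 μ)
    (hsupp : h.support ⊆ S ∩ G) (hβ : 0 < β) {z w : E} (hz : z ∈ B) (hw : w ∈ B) (j k : ℕ) :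
    2 ^ j * |mixedDifference (correlation μ h f) ((1 / 2 : ℝ) ^ j • z) ((1 / 2 : ℝ) ^ k • w)
        ((1 / 2 : ℝ) ^ (k + 1) • w)| ≤
      β ^ j / 2 * translationEnergy μ univ h ((1 / 2 : ℝ) ^ j • z) +
        (4 / β) ^ j * (translationEnergy μ G f ((1 / 2 : ℝ) ^ (k + 1) • w) +
          translationEnergy μ G f ((1 / 2 : ℝ) ^ k • w)) := by
  have hmem (y : E) (hy : y ∈ h.support ∨ y - (1 / 2 : ℝ) ^ j • z ∈ h.support) :
      ∃ x ∈ S, ∃ τ ∈ Icc (-1 : ℝ) 1, x + τ • z = y ∧ y ∈ G := by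
    obtain ⟨hj0, hj1⟩ := half_pow_mem_Icc j
    rcases hy with hy | hy
    · exact ⟨y, (hsupp hy).1, 0, by norm_num, by simp, (hsupp hy).2⟩
    · refine ⟨_, (hsupp hy).1, (1 / 2) ^ j, ⟨by linarith, hj1⟩, sub_add_cancel .., ?_⟩
      simpa using hB.add_smul_mem (hsupp hy) hz ⟨hj0, hj1⟩
  have hstay (y : E) (hy : y ∈ h.support ∨ y - (1 / 2 : ℝ) ^ j • z ∈ h.support) :
      y ∈ G ∧ y + (1 / 2 : ℝ) ^ k • w ∈ G ∧ y + (1 / 2 : ℝ) ^ (k + 1) • w ∈ G := by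
    obtain ⟨x, hx, τ, hτ, rfl, hxG⟩ := hmem y hy
    exact ⟨hxG, hB.add_mem x hx z hz w hw τ hτ _ (half_pow_mem_Icc k) hxG,
      hB.add_mem x hx z hz w hw τ hτ _ (half_pow_mem_Icc (k + 1)) hxG⟩
  have hbound := mul_le_mul_of_nonneg_left (abs_mixedDifference_correlation_le (l := (β / 2) ^ j)
    hG hh hf hstay (by positivity)) (by positivity : (0 : ℝ) ≤ 2 ^ j)
  have hpow : (2 : ℝ) ^ j * (β / 2) ^ j = β ^ j := by rw [← mul_pow]; ring_nf
  have hpow' : (2 : ℝ) ^ j * ((β / 2) ^ j)⁻¹ = (4 / β) ^ j := by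
    rw [← inv_pow, ← mul_pow]
    field_simp
    norm_num
  rwa [mul_add, ← mul_assoc, ← mul_assoc, mul_div_assoc', hpow, hpow'] at hbound

lemma IsInwardCone.abs_dyadicKernel_correlation_le (hG : MeasurableSet G)
    (hB : IsInwardCone G S B R) (hh : MemLp h 2 μ) (hf : MemLp f 2 μ)
    (hsupp : h.support ⊆ S ∩ G) (hβ : 1 ≤ β) (hβ4 : β ≤ 4) {z w : E} (hz : z ∈ B) (hw : w ∈ B)
    (n : ℕ) :
    |dyadicKernel (correlation μ h f) n (z, w)| ≤ (∫ y, h y ^ 2 ∂μ) + (∫ y in G, f y ^ 2 ∂μ) +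
      (dyadicEnergy μ β univ h (n + 1) z + 7 * dyadicEnergy μ (4 / β) G f (n + 1) w) := by
  have hβ0 : 0 < β := by linarith
  have hγ : 1 ≤ 4 / β := (one_le_div hβ0).2 hβ4
  have hγ4 : 4 / β ≤ 4 := div_le_self (by norm_num) hβ
  let Th (k : ℕ) := β ^ k * translationEnergy μ univ h ((1 / 2 : ℝ) ^ k • z)
  let Tf (k : ℕ) := (4 / β) ^ k * translationEnergy μ G f ((1 / 2 : ℝ) ^ k • w)
  have hTh (k : ℕ) : 0 ≤ Th k := mul_nonneg (by positivity) translationEnergy_nonneg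
  have hTf (k : ℕ) : 0 ≤ Tf k := mul_nonneg (by positivity) translationEnergy_nonneg
  have hbase : |correlation μ h f (z + w)| ≤ (∫ y, h y ^ 2 ∂μ) + ∫ y in G, f y ^ 2 ∂μ := by
    refine abs_correlation_le hG hh hf fun y hy => ?_
    have hyz := hB.add_smul_mem (hsupp hy) hz (t := 1) (by norm_num)
    simpa [add_assoc] using hB.add_mem y (hsupp hy).1 z hz w hw 1 (by norm_num) 1 (by norm_num) hyz
  have hterm (k : ℕ) :
      |2 ^ (k + 1) * mixedDifference (correlation μ h f) ((1 / 2 : ℝ) ^ (k + 1) • z)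
          ((1 / 2 : ℝ) ^ k • w) ((1 / 2 : ℝ) ^ (k + 1) • w) +
        2 ^ k * mixedDifference (correlation μ h f) ((1 / 2 : ℝ) ^ k • z)
          ((1 / 2 : ℝ) ^ k • w) ((1 / 2 : ℝ) ^ (k + 1) • w)| ≤
      (1 / 2 * Th (k + 1) + 1 / 2 * Th k) + (2 * Tf (k + 1) + 5 * Tf k) := by
    have hfine := hB.pow_mul_abs_mixedDifference_correlation_le hG hh hf hsupp hβ0 hz hw (k + 1) k
    have hcoarse := hB.pow_mul_abs_mixedDifference_correlation_le hG hh hf hsupp hβ0 hz hw k k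
    have hdown : (4 / β) ^ k * translationEnergy μ G f ((1 / 2 : ℝ) ^ (k + 1) • w) ≤ Tf (k + 1) :=
      mul_le_mul_of_nonneg_right (pow_le_pow_right₀ hγ k.le_succ) translationEnergy_nonneg
    have hup : (4 / β) ^ (k + 1) * translationEnergy μ G f ((1 / 2 : ℝ) ^ k • w) ≤ 4 * Tf k := by
      rw [pow_succ', mul_assoc]
      exact mul_le_mul_of_nonneg_right hγ4 (hTf k)
    refine (abs_add_le _ _).trans ?_
    rw [abs_mul, abs_mul, abs_of_nonneg (by positivity : (0 : ℝ) ≤ 2 ^ (k + 1)),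
      abs_of_nonneg (by positivity : (0 : ℝ) ≤ 2 ^ k)]
    simp only [Th, Tf] at *
    linarith
  refine (abs_add_le _ _).trans (add_le_add hbase ?_)
  refine (Finset.abs_sum_le_sum_abs _ _).trans ((Finset.sum_le_sum fun k _ => hterm k).trans ?_)
  rw [Finset.sum_add_distrib]
  refine (add_le_add (sum_range_mul_succ_add_mul_le hTh (by norm_num) (by norm_num) n)
    (sum_range_mul_succ_add_mul_le hTf (by norm_num) (by norm_num) n)).trans_eq ?_
  rw [dyadicEnergy, dyadicEnergy]
  norm_num [Th, Tf]

lemma IsInwardCone.exists_abs_dyadicKernel_correlation_indicator_le (hG : MeasurableSet G)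
    (hB : IsInwardCone G S B R) (hβ : 1 ≤ β) (hβ2 : β < 2) {Λ : ℝ≥0} (hχ : LipschitzWith Λ χ)
    {K : ℝ} (hK : ∀ y, |χ y| ≤ K) (hχS : χ.support ⊆ S) :
    ∃ C, 0 ≤ C ∧ ∀ f g : E → ℝ, MemLp f 2 μ → MemLp g 2 μ → ∀ z ∈ B, ∀ w ∈ B, ∀ n,
      |dyadicKernel (correlation μ (G.indicator fun y => χ y * g y) f) n (z, w)| ≤
        C * ((∫ y in G, g y ^ 2 ∂μ) + dyadicEnergy μ β G g (n + 1) z) +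
          C * ((∫ y in G, f y ^ 2 ∂μ) + dyadicEnergy μ (4 / β) G f (n + 1) w) := by
  obtain ⟨A, hA, hardy⟩ := exists_dyadicEnergy_univ_le (μ := μ) hG hB (by linarith) hβ2
  have hR := hB.pos
  refine ⟨7 + K ^ 2 + A * (3 * K ^ 2 + 4 * Λ ^ 2 * (2 * R) ^ 2), by positivity,
    fun f g hf hg z hz w hw n => ?_⟩
  have hχg := memLp_mul_of_abs_le hg hχ.continuous.aestronglyMeasurable hK
  have hh := hχg.indicator hG
  have hsupp : (G.indicator fun y => χ y * g y).support ⊆ S ∩ G := by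
    rw [support_indicator]
    exact fun y hy => ⟨hχS (left_ne_zero_of_mul hy.2), hy.1⟩
  have hkernel := hB.abs_dyadicKernel_correlation_le hG hh hf hsupp hβ (by linarith) hz hw n
  have hextend := hardy _ (n + 1) z hz hh hsupp
  have hmass := integral_indicator_mul_sq_le hG hg hK
  have hproduct : dyadicEnergy μ β G (G.indicator fun y => χ y * g y) (n + 1) z ≤
      2 * K ^ 2 * dyadicEnergy μ β G g (n + 1) z +
        4 * Λ ^ 2 * (2 * R) ^ 2 * ∫ y in G, g y ^ 2 ∂μ := by
    simp only [dyadicEnergy, translationEnergy_indicator hG]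
    refine (dyadicEnergy_mul_le (by linarith) hβ2.le hg hχg hK (Λ := Λ)
      (fun x y => by simpa [dist_eq_norm] using hχ.dist_le_mul x y) (n + 1) z).trans ?_
    gcongr
    · exact le_rfl
    · exact (hB.norm_lt z hz).le
  have hgmass : 0 ≤ ∫ y in G, g y ^ 2 ∂μ := integral_nonneg fun _ => sq_nonneg _
  have hfmass : 0 ≤ ∫ y in G, f y ^ 2 ∂μ := integral_nonneg fun _ => sq_nonneg _
  have hgenergy : 0 ≤ dyadicEnergy μ β G g (n + 1) z := dyadicEnergy_nonneg (by linarith) _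
  have hfenergy : 0 ≤ dyadicEnergy μ (4 / β) G f (n + 1) w := dyadicEnergy_nonneg (by positivity) _
  have hextended : dyadicEnergy μ β univ (G.indicator fun y => χ y * g y) (n + 1) z ≤
      A * ((3 * K ^ 2 + 4 * Λ ^ 2 * (2 * R) ^ 2) *
        ((∫ y in G, g y ^ 2 ∂μ) + dyadicEnergy μ β G g (n + 1) z)) := by
    refine hextend.trans (mul_le_mul_of_nonneg_left ?_ hA)
    have := mul_nonneg (by positivity : 0 ≤ K ^ 2 + 4 * Λ ^ 2 * (2 * R) ^ 2) hgenergy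
    have := mul_nonneg (by positivity : 0 ≤ 2 * K ^ 2) hgmass
    linarith
  have := mul_nonneg (by positivity : 0 ≤ K ^ 2) hgenergy
  have := mul_nonneg (by positivity : 0 ≤ K ^ 2 + A * (3 * K ^ 2 + 4 * Λ ^ 2 * (2 * R) ^ 2))
    (add_nonneg hfmass hfenergy)
  linarith

end Local

section LocalEstimate

lemma four_rpow_lt_two {θ : ℝ} (hθ : θ < 1 / 2) : (4 : ℝ) ^ θ < 2 := by
  calc (4 : ℝ) ^ θ < 4 ^ (1 / 2 : ℝ) := Real.rpow_lt_rpow_of_exponent_lt (by norm_num) hθ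
    _ = 2 := by rw [← Real.sqrt_eq_rpow, show (4 : ℝ) = 2 ^ 2 by norm_num]; simp

variable {E : Type*} [NormedAddCommGroup E] [NormedSpace ℝ E] [FiniteDimensional ℝ E]
  [MeasurableSpace E] [BorelSpace E] {μ : Measure E} [μ.IsAddHaarMeasure] {G S B : Set E} {R θ : ℝ}
  {χ : E → ℝ}

lemma IsInwardCone.setLIntegral_dyadicEnergy_le (hG : MeasurableSet G) (hB : IsInwardCone G S B R)
    {s C : ℝ} (hs : 0 ≤ s) (hC : 0 ≤ C) {v : E → ℝ} (hv : Measurable v) (n : ℕ) :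
    ∫⁻ z in B, ENNReal.ofReal (C * ((∫ y in G, v y ^ 2 ∂μ) + dyadicEnergy μ (4 ^ s) G v n z)) ∂μ ≤
      ENNReal.ofReal C * (μ B + ENNReal.ofReal ((2 * R) ^ ((Module.finrank ℝ E : ℝ) + 2 * s))) *
        sobolevEnergy μ s G v := by
  have hmass : 0 ≤ ∫ y in G, v y ^ 2 ∂μ := integral_nonneg fun _ => sq_nonneg _
  have hsplit (z : E) :
      ENNReal.ofReal (C * ((∫ y in G, v y ^ 2 ∂μ) + dyadicEnergy μ (4 ^ s) G v n z)) =
        ENNReal.ofReal C * (ENNReal.ofReal (∫ y in G, v y ^ 2 ∂μ) +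
          ENNReal.ofReal (dyadicEnergy μ (4 ^ s) G v n z)) := by
    rw [ENNReal.ofReal_mul hC, ENNReal.ofReal_add hmass (dyadicEnergy_nonneg (by positivity) n)]
  simp only [hsplit]
  rw [lintegral_const_mul' _ _ ENNReal.ofReal_ne_top, lintegral_add_left measurable_const,
    setLIntegral_const, mul_assoc, add_mul, mul_comm (μ B)]
  gcongr
  · exact le_self_add
  · refine (lintegral_dyadicEnergy_le hG hB.isOpen.measurableSet hB.pos hB.le_norm hB.norm_lt hs
      hv n).trans ?_
    gcongr
    exact le_add_self

lemma IsInwardCone.exists_setLIntegral_dyadicKernel_correlation_le (hG : MeasurableSet G)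
    (hB : IsInwardCone G S B R) (hθ0 : 0 ≤ θ) (hθ : θ < 1 / 2) {Λ : ℝ≥0} (hχ : LipschitzWith Λ χ)
    {K : ℝ} (hK : ∀ y, |χ y| ≤ K) (hχS : χ.support ⊆ S) :
    ∃ C : ℝ≥0∞, C ≠ ∞ ∧ ∀ f g : E → ℝ, Measurable f → MemLp f 2 μ → Measurable g → MemLp g 2 μ →
      ∀ n, ∫⁻ p in B ×ˢ B,
        ‖dyadicKernel (correlation μ (G.indicator fun y => χ y * g y) f) n p‖ₑ ∂μ.prod μ ≤
          C * (sobolevEnergy μ (1 - θ) G f + sobolevEnergy μ θ G g) := by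
  have hβ : (1 : ℝ) ≤ 4 ^ θ := Real.one_le_rpow (by norm_num) hθ0
  have hγ : (4 : ℝ) / 4 ^ θ = 4 ^ (1 - θ) := by rw [Real.rpow_sub (by norm_num), Real.rpow_one]
  obtain ⟨C, hC, hkernel⟩ := hB.exists_abs_dyadicKernel_correlation_indicator_le (μ := μ) hG hβ
    (four_rpow_lt_two hθ) hχ hK hχS
  have hμB : μ B ≠ ∞ := (isBounded_ball.subset fun w hw =>
    mem_ball_zero_iff.2 (hB.norm_lt w hw)).measure_lt_top.ne
  have : IsFiniteMeasure (μ.restrict B) := ⟨by simpa using hμB.lt_top⟩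
  let A (s : ℝ) : ℝ≥0∞ := ENNReal.ofReal C *
    (μ B + ENNReal.ofReal ((2 * R) ^ ((Module.finrank ℝ E : ℝ) + 2 * s)))
  have hA (s : ℝ) : A s ≠ ∞ := by finiteness
  refine ⟨(A θ + A (1 - θ)) * μ B, ENNReal.mul_ne_top (ENNReal.add_ne_top.2 ⟨hA _, hA _⟩) hμB,
    fun f g hfm hf hgm hg n => ?_⟩
  let Kf (w : E) := ENNReal.ofReal (C * ((∫ y in G, f y ^ 2 ∂μ) +
    dyadicEnergy μ (4 ^ (1 - θ)) G f (n + 1) w))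
  let Kg (z : E) := ENNReal.ofReal (C * ((∫ y in G, g y ^ 2 ∂μ) +
    dyadicEnergy μ (4 ^ θ) G g (n + 1) z))
  calc ∫⁻ p in B ×ˢ B,
        ‖dyadicKernel (correlation μ (G.indicator fun y => χ y * g y) f) n p‖ₑ ∂μ.prod μ
      ≤ ∫⁻ p in B ×ˢ B, (Kg p.1 + Kf p.2) ∂μ.prod μ := by
        refine setLIntegral_mono' (hB.isOpen.prod hB.isOpen).measurableSet fun p hp => ?_
        rw [← ofReal_norm, Real.norm_eq_abs]
        refine (ENNReal.ofReal_le_ofReal (hkernel f g hf hg p.1 hp.1 p.2 hp.2 n)).trans ?_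
        rw [hγ]
        exact ENNReal.ofReal_add_le
    _ ≤ (∫⁻ z in B, Kg z ∂μ) * μ B + (∫⁻ w in B, Kf w ∂μ) * μ B := by
        rw [← Measure.prod_restrict, ← Measure.restrict_apply_univ B]
        exact lintegral_prod_add_le _ _ Kg Kf
    _ ≤ A θ * sobolevEnergy μ θ G g * μ B + A (1 - θ) * sobolevEnergy μ (1 - θ) G f * μ B := by
        gcongr
        · exact hB.setLIntegral_dyadicEnergy_le hG hθ0 hC hgm (n + 1)
        · exact hB.setLIntegral_dyadicEnergy_le hG (by linarith) hC hfm (n + 1)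
    _ ≤ (A θ + A (1 - θ)) * μ B * (sobolevEnergy μ (1 - θ) G f + sobolevEnergy μ θ G g) := by
        rw [mul_right_comm, mul_right_comm (A (1 - θ)), mul_add, add_comm]
        gcongr
        · exact le_add_self
        · exact le_self_add

lemma IsInwardCone.exists_enorm_setIntegral_mul_fderiv_le (hG : MeasurableSet G)
    (hB : IsInwardCone G S B R) (hθ0 : 0 ≤ θ) (hθ : θ < 1 / 2) {Λ : ℝ≥0} (hχ : LipschitzWith Λ χ)
    {K : ℝ} (hK : ∀ y, |χ y| ≤ K) (hχS : χ.support ⊆ S) :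
    ∃ C : ℝ≥0∞, C ≠ ∞ ∧ ∀ (f g : E → ℝ) (e : E), ContDiff ℝ 1 f → HasCompactSupport f →
      Measurable g → MemLp g 2 μ → ‖e‖ ≤ 1 →
        ‖∫ x in G, χ x * g x * fderiv ℝ f x e ∂μ‖ₑ ≤
          C * (sobolevEnergy μ (1 - θ) G f + sobolevEnergy μ θ G g) := by
  obtain ⟨A, hA, hkernel⟩ := hB.exists_setLIntegral_dyadicKernel_correlation_le (μ := μ) hG hθ0 hθ
    hχ hK hχS
  obtain ⟨M, hM, hfderiv⟩ := exists_enorm_fderiv_zero_le μ hB.isOpen hB.nonempty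
  refine ⟨A * M, by finiteness, fun f g e hf hfc hgm hg he => ?_⟩
  have hh : MemLp (G.indicator fun y => χ y * g y) 2 μ :=
    (memLp_mul_of_abs_le hg hχ.continuous.aestronglyMeasurable hK).indicator hG
  have hmain := hfderiv _ e _ (contDiff_correlation hh hf hfc) he (hkernel f g
    hf.continuous.measurable (hf.continuous.memLp_of_hasCompactSupport hfc) hgm hg)
  rw [fderiv_correlation_apply hh hf hfc] at hmain
  have hcorr : correlation μ (G.indicator fun y => χ y * g y) (fderiv ℝ f · e) 0 =
      ∫ x in G, χ x * g x * fderiv ℝ f x e ∂μ := by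
    rw [correlation, ← integral_indicator hG]
    refine integral_congr_ae (Eventually.of_forall fun x => ?_)
    by_cases hx : x ∈ G <;> simp [hx]
  rwa [hcorr, mul_right_comm] at hmain

end LocalEstimate

section Cones

lemma isInwardCone_ball {E : Type*} [NormedAddCommGroup E] [NormedSpace ℝ E] {G : Set E}
    {x₀ w₀ : E} {r ρ : ℝ} (hr : 0 < r) (hr3 : 3 * r ≤ ‖w₀‖) (hρ : ‖w₀‖ ≤ ρ)
    (hadd : ∀ y ∈ G ∩ ball x₀ (3 * ρ), ∀ w ∈ ball w₀ r, ∀ t ∈ Icc (0 : ℝ) 1, y + t • w ∈ G) :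
    IsInwardCone G (ball x₀ ρ) (ball w₀ r) (‖w₀‖ - r) := by
  have hnorm {w : E} (hw : w ∈ ball w₀ r) : ‖w₀‖ - r ≤ ‖w‖ ∧ ‖w‖ < 2 * (‖w₀‖ - r) := by
    rw [mem_ball_iff_norm] at hw
    have := abs_le.1 (abs_norm_sub_norm_le w w₀)
    constructor <;> linarith
  refine ⟨isOpen_ball, nonempty_ball.2 hr, fun w hw => (hnorm hw).1, fun w hw => (hnorm hw).2,
    fun x hx z hz w hw τ hτ t ht hmem => hadd _ ⟨hmem, ?_⟩ w hw t ht⟩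
  rw [mem_ball_iff_norm] at hx ⊢
  have hτz : ‖τ • z‖ ≤ 1 * ‖z‖ := by
    rw [norm_smul]
    exact mul_le_mul_of_nonneg_right (abs_le.2 hτ) (norm_nonneg z)
  calc ‖x + τ • z - x₀‖ = ‖x - x₀ + τ • z‖ := by rw [add_sub_right_comm]
    _ ≤ ‖x - x₀‖ + ‖τ • z‖ := norm_add_le _ _
    _ < 3 * ρ := by linarith [(hnorm hz).2]

lemma add_smul_mem_ball {E : Type*} [NormedAddCommGroup E] [NormedSpace ℝ E] {x₀ w₀ y w : E}
    {r ρ t : ℝ} (hr : 3 * r ≤ ‖w₀‖) (hρ : ‖w₀‖ ≤ ρ) (hy : y ∈ ball x₀ (3 * ρ))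
    (hw : w ∈ ball w₀ r) (ht : t ∈ Icc (0 : ℝ) 1) : y + t • w ∈ ball x₀ (5 * ρ) := by
  rw [mem_ball_iff_norm] at *
  have htw : ‖t • w‖ ≤ 1 * ‖w‖ := by
    rw [norm_smul, Real.norm_of_nonneg ht.1]
    exact mul_le_mul_of_nonneg_right ht.2 (norm_nonneg w)
  calc ‖y + t • w - x₀‖ = ‖y - x₀ + t • w‖ := by rw [add_sub_right_comm]
    _ ≤ ‖y - x₀‖ + ‖t • w‖ := norm_add_le _ _
    _ < 5 * ρ := by linarith [norm_le_norm_add_norm_sub' w w₀, norm_nonneg w₀]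

lemma exists_isInwardCone_of_mem {E : Type*} [NormedAddCommGroup E] [NormedSpace ℝ E]
    [Nontrivial E] {G : Set E} {x₀ : E} (hG : IsOpen G) (hx₀ : x₀ ∈ G) :
    ∃ ρ > 0, ∃ B R, IsInwardCone G (ball x₀ ρ) B R := by
  obtain ⟨ε, hε, hsub⟩ := Metric.isOpen_iff.1 hG x₀ hx₀
  obtain ⟨ρ, hρ, rfl⟩ : ∃ ρ > 0, ε = 5 * ρ := ⟨ε / 5, by positivity, by ring⟩
  obtain ⟨w₀, hw₀⟩ := exists_norm_eq E hρ.le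
  have hr3 : 3 * (ρ / 3) ≤ ‖w₀‖ := by linarith
  exact ⟨ρ, hρ, ball w₀ (ρ / 3), _, isInwardCone_ball (by positivity) hr3 hw₀.le
    fun y hy w hw t ht => hsub (add_smul_mem_ball hr3 hw₀.le hy.2 hw ht)⟩

lemma lt_inner_add_smul_of_lipschitzWith {F : Type*} [NormedAddCommGroup F] [InnerProductSpace ℝ F]
    {γ : F → ℝ} {L : ℝ≥0} (hγ : LipschitzWith L γ) {ν : F} (hν : ‖ν‖ = 1) {y : F}
    (hy : γ (y - inner ℝ y ν • ν) < inner ℝ y ν) {w : F} {c : ℝ}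
    (hw : (1 + 2 * L) * ‖w - c • ν‖ ≤ c) {t : ℝ} (ht : 0 ≤ t) :
    γ (y + t • w - inner ℝ (y + t • w) ν • ν) < inner ℝ (y + t • w) ν := by
  obtain ⟨u, rfl⟩ : ∃ u, w = c • ν + u := ⟨w - c • ν, by abel⟩
  rw [add_sub_cancel_left] at hw
  have hu : |inner ℝ u ν| ≤ ‖u‖ := by simpa [hν] using abs_real_inner_le_norm u ν
  have hinner : inner ℝ (y + t • (c • ν + u)) ν = inner ℝ y ν + t * (c + inner ℝ u ν) := by
    simp only [inner_add_left, real_inner_smul_left, real_inner_self_eq_norm_sq, hν]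
    ring
  have hproj : ‖u - inner ℝ u ν • ν‖ ≤ 2 * ‖u‖ := by
    have := norm_sub_le u (inner ℝ u ν • ν)
    rw [norm_smul, hν, mul_one, Real.norm_eq_abs] at this
    linarith
  have hγ_le : γ (y + t • (c • ν + u) - inner ℝ (y + t • (c • ν + u)) ν • ν) -
      γ (y - inner ℝ y ν • ν) ≤ L * (t * (2 * ‖u‖)) := by
    refine (le_abs_self _).trans ((hγ.dist_le_mul _ _).trans ?_)
    rw [dist_eq_norm, hinner, show y + t • (c • ν + u) -
      (inner ℝ y ν + t * (c + inner ℝ u ν)) • ν - (y - inner ℝ y ν • ν) =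
        t • (u - inner ℝ u ν • ν) by module, norm_smul, Real.norm_of_nonneg ht]
    gcongr
  rw [hinner] at hγ_le ⊢
  have : t * (L * (2 * ‖u‖)) ≤ t * (c + inner ℝ u ν) :=
    mul_le_mul_of_nonneg_left (by linarith [neg_abs_le (inner ℝ u ν)]) ht
  linarith

lemma HasLipschitzBoundaryD.exists_isInwardCone {d : ℕ} {G : Set (Ed d)}
    (hG : HasLipschitzBoundaryD G) {x₀ : Ed d} (hx₀ : x₀ ∈ frontier G) :
    ∃ ρ > 0, ∃ B R, IsInwardCone G (ball x₀ ρ) B R := by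
  obtain ⟨ν, L, γ, U, hν, hγ, hU, hxU, hGU⟩ := hG x₀ hx₀
  obtain ⟨ε, hε, hsub⟩ := Metric.isOpen_iff.1 hU x₀ hxU
  have mem_iff {y : Ed d} (hy : y ∈ U) : y ∈ G ↔ γ (y - inner ℝ y ν • ν) < inner ℝ y ν := by
    simpa [hy] using Set.ext_iff.1 hGU y
  obtain ⟨ρ, hρ, rfl⟩ : ∃ ρ > 0, ε = 5 * ρ := ⟨ε / 5, by positivity, by ring⟩
  have hballU {y : Ed d} {s : ℝ} (hs : s ≤ 5) (hy : y ∈ ball x₀ (s * ρ)) : y ∈ U :=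
    hsub (ball_subset_ball (by gcongr) hy)
  have hw₀ : ‖ρ • ν‖ = ρ := by rw [norm_smul, hν, mul_one, Real.norm_of_nonneg hρ.le]
  set r := ρ / (3 * (1 + 2 * L))
  have hr : 0 < r := by positivity
  have hrL : 3 * ((1 + 2 * L) * r) = ρ := by simp only [r]; field_simp
  have hr3 : 3 * r ≤ ‖ρ • ν‖ := by
    have : 0 ≤ L * r := by positivity
    linarith
  refine ⟨ρ, hρ, ball (ρ • ν) r, _, isInwardCone_ball hr hr3 hw₀.le fun y hy w hw t ht => ?_⟩
  have hwν : (1 + 2 * L) * ‖w - ρ • ν‖ ≤ ρ := by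
    calc (1 + 2 * L) * ‖w - ρ • ν‖ ≤ (1 + 2 * L) * r := by
          gcongr
          exact (mem_ball_iff_norm.1 hw).le
      _ ≤ ρ := by linarith
  exact (mem_iff (hballU le_rfl (add_smul_mem_ball hr3 hw₀.le hy.2 hw ht))).2
    (lt_inner_add_smul_of_lipschitzWith hγ hν ((mem_iff (hballU (by norm_num) hy.2)).1 hy.1) hwν
      ht.1)

end Cones

section Global

variable {E : Type*} [NormedAddCommGroup E] [NormedSpace ℝ E] [FiniteDimensional ℝ E]

lemma exists_lipschitz_partition_of_unity {s : Set E} (hs : IsCompact s) {ρ : E → ℝ}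
    (hρ : ∀ x ∈ s, 0 < ρ x) :
    ∃ (t : Finset E) (χ : E → E → ℝ), (∀ x ∈ t, x ∈ s) ∧ (∀ x ∈ t, ∃ Λ, LipschitzWith Λ (χ x)) ∧
      (∀ x ∈ t, ∀ y, |χ x y| ≤ 1) ∧ (∀ x ∈ t, (χ x).support ⊆ ball x (ρ x)) ∧
        ∀ y ∈ s, ∑ x ∈ t, χ x y = 1 := by
  classical
  obtain ⟨t, hts, hcover⟩ := hs.elim_nhds_subcover (fun x => ball x (ρ x))
    fun x hx => ball_mem_nhds x (hρ x hx)
  obtain ⟨φ, hφ⟩ := SmoothPartitionOfUnity.exists_isSubordinate (modelWithCornersSelf ℝ E)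
    hs.isClosed (fun x : t => ball (x : E) (ρ x)) (fun _ => isOpen_ball)
    (by simpa only [iUnion_subtype] using hcover)
  let χ (x : E) : E → ℝ := if hx : x ∈ t then φ ⟨x, hx⟩ else 0
  have hχ {x : E} (hx : x ∈ t) : χ x = φ ⟨x, hx⟩ := dif_pos hx
  refine ⟨t, χ, hts, fun x hx => ?_, fun x hx y => ?_, fun x hx => ?_, fun y hy => ?_⟩
  · have hcompact : HasCompactSupport (φ ⟨x, hx⟩) := Metric.isCompact_of_isClosed_isBounded
      (isClosed_tsupport _) (isBounded_ball.subset (hφ ⟨x, hx⟩))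
    have hcontDiff : ContDiff ℝ 1 (φ ⟨x, hx⟩) :=
      (φ ⟨x, hx⟩).contMDiff.contDiff.of_le (mod_cast le_top)
    rw [hχ hx]
    exact hcontDiff.lipschitzWith_of_hasCompactSupport hcompact one_ne_zero
  · rw [hχ hx, abs_of_nonneg (φ.nonneg _ _)]
    exact φ.le_one _ _
  · rw [hχ hx]
    exact (subset_tsupport _).trans (hφ ⟨x, hx⟩)
  · rw [← φ.sum_eq_one hy, finsum_eq_sum_of_fintype, ← Finset.sum_coe_sort]
    exact Finset.sum_congr rfl fun x _ => congrFun (hχ x.2) y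

lemma exists_contDiff_hasCompactSupport_eqOn {s : Set E} (hs : Bornology.IsBounded s) {n : ℕ∞}
    {f : E → ℝ} (hf : ContDiff ℝ n f) :
    ∃ F : E → ℝ, ContDiff ℝ n F ∧ HasCompactSupport F ∧ EqOn F f s := by
  obtain ⟨r, hr, hsr⟩ := hs.subset_closedBall_lt 0 0
  let b : ContDiffBump (0 : E) := ⟨r, r + 1, hr, lt_add_one r⟩
  exact ⟨fun x => b x * f x, b.contDiff.mul hf, b.hasCompactSupport.mul_right, fun x hx => by
    simp [b.one_of_mem_closedBall (hsr hx)]⟩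

variable [MeasurableSpace E] [BorelSpace E] {μ : Measure E} [μ.IsAddHaarMeasure] {G : Set E}
  {θ : ℝ}

lemma exists_enorm_setIntegral_mul_fderiv_le (hG : MeasurableSet G) (hGb : Bornology.IsBounded G)
    (hcone : ∀ x ∈ closure G, ∃ ρ > 0, ∃ B R, IsInwardCone G (ball x ρ) B R) (hθ0 : 0 ≤ θ)
    (hθ : θ < 1 / 2) :
    ∃ C : ℝ≥0∞, C ≠ ∞ ∧ ∀ (f g : E → ℝ) (e : E), ContDiff ℝ 1 f → HasCompactSupport f →
      Measurable g → MemLp g 2 μ → ‖e‖ ≤ 1 →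
        ‖∫ x in G, g x * fderiv ℝ f x e ∂μ‖ₑ ≤
          C * (sobolevEnergy μ (1 - θ) G f + sobolevEnergy μ θ G g) := by
  choose! ρ hρ B R hB using hcone
  obtain ⟨t, χ, htG, hΛ, hχ1, hχsupp, hχsum⟩ :=
    exists_lipschitz_partition_of_unity hGb.isCompact_closure hρ
  choose! Λ hΛ using hΛ
  have hlocal (x : E) (hx : x ∈ t) := (hB x (htG x hx)).exists_enorm_setIntegral_mul_fderiv_le
    (μ := μ) hG hθ0 hθ (hΛ x hx) (hχ1 x hx) (hχsupp x hx)
  choose! C hC hlocal using hlocal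
  refine ⟨∑ x ∈ t, C x, ENNReal.sum_ne_top.2 hC, fun f g e hf hfc hgm hg he => ?_⟩
  have hint (x : E) (hx : x ∈ t) : IntegrableOn (fun y => χ x y * g y * fderiv ℝ f y e) G μ := by
    have hfderiv : MemLp (fderiv ℝ f · e) 2 μ :=
      ((hf.continuous_fderiv one_ne_zero).clm_apply continuous_const).memLp_of_hasCompactSupport
        (hfc.fderiv_apply ℝ e)
    exact ((memLp_mul_of_abs_le hg (hΛ x hx).continuous.aestronglyMeasurable
      (hχ1 x hx)).integrable_mul hfderiv).integrableOn
  have hsplit : ∫ y in G, g y * fderiv ℝ f y e ∂μ =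
      ∑ x ∈ t, ∫ y in G, χ x y * g y * fderiv ℝ f y e ∂μ := by
    rw [← integral_finsetSum t hint]
    refine setIntegral_congr_fun hG fun y hy => ?_
    simp only [mul_assoc, ← Finset.sum_mul, hχsum y (subset_closure hy), one_mul]
  rw [hsplit, Finset.sum_mul]
  exact (enorm_sum_le _ _).trans
    (Finset.sum_le_sum fun x hx => hlocal x hx f g e hf hfc hgm hg he)

end Global

section Euclidean

lemma abs_le_two_mul_sqrt_mul_sqrt {q C N M : ℝ} (hC : 0 ≤ C) (hN : 0 ≤ N) (hM : 0 ≤ M)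
    (h : ∀ t : ℝ, t * q ≤ C * (t ^ 2 * N + M)) : |q| ≤ 2 * C * √N * √M := by
  have hdiscrim : discrim (C * N) (-q) (C * M) ≤ 0 := discrim_le_zero fun t => by linarith [h t]
  refine abs_le_of_sq_le_sq ?_ (by positivity)
  rw [mul_pow, mul_pow, Real.sq_sqrt hN, Real.sq_sqrt hM]
  rw [discrim] at hdiscrim
  linarith

variable {d : ℕ} {G : Set (Ed d)} {θ s : ℝ} {f g u v : Ed d → ℝ}

/-- The square of the norm `‖f‖_{1-θ,G}` for `0 ≤ θ < 1`, where `‖f‖_{1,G}` is the `H¹` norm. -/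
def sobolevHighSq (θ : ℝ) (G : Set (Ed d)) (f : Ed d → ℝ) : ℝ :=
  (∫ x in G, f x ^ 2) +
    if θ = 0 then ∑ k : Fin d, ∫ x in G, pdD k f x ^ 2 else gagSqD d (1 - θ) G f

/-- The square of the norm `‖g‖_{θ,G}` for `0 ≤ θ < 1`, where `‖g‖_{0,G}` is the `L²` norm. -/
def sobolevLowSq (θ : ℝ) (G : Set (Ed d)) (g : Ed d → ℝ) : ℝ :=
  (∫ x in G, g x ^ 2) + if θ = 0 then 0 else gagSqD d θ G g

lemma integral_sq_nonneg (G : Set (Ed d)) (v : Ed d → ℝ) : 0 ≤ ∫ x in G, v x ^ 2 :=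
  integral_nonneg fun _ => sq_nonneg _

lemma gagSqD_nonneg (s : ℝ) (G : Set (Ed d)) (v : Ed d → ℝ) : 0 ≤ gagSqD d s G v :=
  integral_nonneg fun _ => integral_nonneg fun _ => by positivity

lemma sobolevHighSq_nonneg (θ : ℝ) (G : Set (Ed d)) (f : Ed d → ℝ) : 0 ≤ sobolevHighSq θ G f := by
  refine add_nonneg (integral_sq_nonneg G f) ?_
  split_ifs
  exacts [Finset.sum_nonneg fun _ _ => integral_sq_nonneg G _, gagSqD_nonneg _ G f]

lemma sobolevLowSq_nonneg (θ : ℝ) (G : Set (Ed d)) (g : Ed d → ℝ) : 0 ≤ sobolevLowSq θ G g := by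
  refine add_nonneg (integral_sq_nonneg G g) ?_
  split_ifs
  exacts [le_rfl, gagSqD_nonneg _ G g]

lemma pdD_const_mul (hf : Differentiable ℝ f) (k : Fin d) (t : ℝ) (x : Ed d) :
    pdD k (fun y => t * f y) x = t * pdD k f x := by
  rw [pdD, fderiv_const_mul (hf x)]
  rfl

lemma integral_const_mul_sq (t : ℝ) (G : Set (Ed d)) (v : Ed d → ℝ) :
    ∫ x in G, (t * v x) ^ 2 = t ^ 2 * ∫ x in G, v x ^ 2 := by
  simp only [mul_pow, integral_const_mul]

lemma gagSqD_const_mul (s t : ℝ) (G : Set (Ed d)) (v : Ed d → ℝ) :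
    gagSqD d s G (fun x => t * v x) = t ^ 2 * gagSqD d s G v := by
  simp only [gagSqD, ← mul_sub, mul_pow, mul_div_assoc, integral_const_mul]

lemma sobolevHighSq_const_mul (hf : Differentiable ℝ f) (θ t : ℝ) (G : Set (Ed d)) :
    sobolevHighSq θ G (fun x => t * f x) = t ^ 2 * sobolevHighSq θ G f := by
  simp only [sobolevHighSq, pdD_const_mul hf, integral_const_mul_sq, gagSqD_const_mul,
    ← Finset.mul_sum, ← mul_ite, mul_add]

lemma gagSqD_congr (hG : MeasurableSet G) (huv : EqOn u v G) (s : ℝ) :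
    gagSqD d s G u = gagSqD d s G v :=
  setIntegral_congr_fun hG fun x hx => setIntegral_congr_fun hG fun y hy => by
    simp only [huv hx, huv hy]

lemma sobolevEnergy_eq_ofReal [Nontrivial (Ed d)] (hG : MeasurableSet G)
    (hGb : Bornology.IsBounded G) (hs : s < 1) {K : ℝ≥0} (hu : LipschitzWith K u)
    (huv : EqOn u v G) :
    sobolevEnergy volume s G u = ENNReal.ofReal ((∫ x in G, v x ^ 2) + gagSqD d s G v) := by
  rw [sobolevEnergy, ← ofReal_integral_integral_eq_gagliardoEnergy hGb hs hu,
    finrank_euclideanSpace_fin, ← gagSqD, gagSqD_congr hG huv,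
    ← ENNReal.ofReal_add (integral_sq_nonneg G u) (gagSqD_nonneg s G v),
    setIntegral_congr_fun hG fun x hx => by rw [huv hx]]

lemma integrableOn_of_continuous (hG : Bornology.IsBounded G) (hv : Continuous v) :
    IntegrableOn v G :=
  (hv.continuousOn.integrableOn_compact hG.isCompact_closure).mono_set subset_closure

lemma abs_integral_pdD_mul_le_add (hG : Bornology.IsBounded G) (i : Fin d)
    (hf : ContDiff ℝ 1 f) (hg : Continuous g) :
    |∫ x in G, pdD i f x * g x| ≤ sobolevHighSq 0 G f + sobolevLowSq 0 G g := by
  have hp : Continuous (pdD i f) := (hf.continuous_fderiv one_ne_zero).clm_apply continuous_const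
  have hint : IntegrableOn (fun x => pdD i f x ^ 2 + g x ^ 2) G :=
    integrableOn_of_continuous hG (by fun_prop)
  have hpart : ∫ x in G, pdD i f x ^ 2 ≤ ∑ k : Fin d, ∫ x in G, pdD k f x ^ 2 :=
    Finset.single_le_sum (f := fun k => ∫ x in G, pdD k f x ^ 2)
      (fun k _ => integral_sq_nonneg G _) (Finset.mem_univ i)
  calc |∫ x in G, pdD i f x * g x| ≤ ∫ x in G, (pdD i f x ^ 2 + g x ^ 2) := by
        rw [← Real.norm_eq_abs]
        refine norm_integral_le_of_norm_le hint <| Eventually.of_forall fun x => abs_le.2 ?_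
        constructor <;> nlinarith [sq_nonneg (pdD i f x + g x), sq_nonneg (pdD i f x - g x)]
    _ = (∫ x in G, pdD i f x ^ 2) + ∫ x in G, g x ^ 2 :=
        integral_add (integrableOn_of_continuous hG (by fun_prop))
          (integrableOn_of_continuous hG (by fun_prop))
    _ ≤ sobolevHighSq 0 G f + sobolevLowSq 0 G g := by
        simp only [sobolevHighSq, sobolevLowSq, if_true]
        linarith [integral_sq_nonneg G f]

lemma integral_pdD_mul_congr (hG : IsOpen G) {F H : Ed d → ℝ} (hFf : EqOn F f G)
    (hHg : EqOn H g G) (i : Fin d) :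
    ∫ x in G, H x * fderiv ℝ F x (EuclideanSpace.single i 1) = ∫ x in G, pdD i f x * g x :=
  setIntegral_congr_fun hG.measurableSet fun x hx => by
    simp only [pdD, hHg hx, (hFf.eventuallyEq_of_mem (hG.mem_nhds hx)).fderiv_eq, mul_comm]

lemma HasLipschitzBoundaryD.exists_isInwardCone_of_mem_closure [Nontrivial (Ed d)]
    (hG : HasLipschitzBoundaryD G) (hGo : IsOpen G) {x₀ : Ed d} (hx₀ : x₀ ∈ closure G) :
    ∃ ρ > 0, ∃ B R, IsInwardCone G (ball x₀ ρ) B R := by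
  by_cases hmem : x₀ ∈ G
  · exact exists_isInwardCone_of_mem hGo hmem
  · exact hG.exists_isInwardCone ⟨hx₀, by rwa [hGo.interior_eq]⟩

lemma HasLipschitzBoundaryD.exists_abs_integral_pdD_mul_le_add [Nontrivial (Ed d)]
    (hG : HasLipschitzBoundaryD G) (hGo : IsOpen G) (hGb : Bornology.IsBounded G) (hθ0 : 0 < θ)
    (hθ : θ < 1 / 2) :
    ∃ C : ℝ≥0, ∀ (i : Fin d) (f g : Ed d → ℝ), ContDiff ℝ 1 f → ContDiff ℝ 1 g →
      |∫ x in G, pdD i f x * g x| ≤ C * (sobolevHighSq θ G f + sobolevLowSq θ G g) := by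
  obtain ⟨C, hC, hbound⟩ := exists_enorm_setIntegral_mul_fderiv_le (μ := volume)
    hGo.measurableSet hGb (fun x hx => hG.exists_isInwardCone_of_mem_closure hGo hx) hθ0.le hθ
  lift C to ℝ≥0 using hC
  refine ⟨C, fun i f g hf hg => ?_⟩
  obtain ⟨F, hF, hFc, hFf⟩ := exists_contDiff_hasCompactSupport_eqOn hGb (n := 1) hf
  obtain ⟨H, hH, hHc, hHg⟩ := exists_contDiff_hasCompactSupport_eqOn hGb (n := 1) hg
  obtain ⟨KF, hKF⟩ := hF.lipschitzWith_of_hasCompactSupport hFc one_ne_zero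
  obtain ⟨KH, hKH⟩ := hH.lipschitzWith_of_hasCompactSupport hHc one_ne_zero
  have hFH := hbound F H (EuclideanSpace.single i 1) hF hFc hH.continuous.measurable
    (hH.continuous.memLp_of_hasCompactSupport hHc) (by simp)
  rw [integral_pdD_mul_congr hGo hFf hHg,
    sobolevEnergy_eq_ofReal hGo.measurableSet hGb (by linarith) hKF hFf,
    sobolevEnergy_eq_ofReal hGo.measurableSet hGb (by linarith) hKH hHg] at hFH
  have hhigh := sobolevHighSq_nonneg θ G f
  have hlow := sobolevLowSq_nonneg θ G g
  simp only [sobolevHighSq, sobolevLowSq, hθ0.ne', if_false] at hhigh hlow ⊢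
  rwa [← ENNReal.ofReal_add hhigh hlow, ← ENNReal.ofReal_coe_nnreal,
    ← ENNReal.ofReal_mul C.coe_nonneg, ← ofReal_norm,
    ENNReal.ofReal_le_ofReal_iff (by positivity)] at hFH

end Euclidean

theorem necas_derivative_bound_general (d : ℕ) (hd : 1 ≤ d) (θ : ℝ) (hθ0 : 0 ≤ θ)
    (hθ : θ < 1 / 2) (G : Set (Ed d)) (hGopen : IsOpen G) (hGbdd : Bornology.IsBounded G)
    (hGlip : HasLipschitzBoundaryD G) :
    ∃ C : ℝ, 0 < C ∧ ∀ (i : Fin d) (f g : Ed d → ℝ), ContDiff ℝ 1 f → ContDiff ℝ 1 g →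
      |∫ x in G, pdD i f x * g x| ≤ C * √(sobolevHighSq θ G f) * √(sobolevLowSq θ G g) := by
  have : Nonempty (Fin d) := ⟨⟨0, hd⟩⟩
  obtain ⟨C, hC⟩ : ∃ C : ℝ≥0, ∀ (i : Fin d) (f g : Ed d → ℝ), ContDiff ℝ 1 f → ContDiff ℝ 1 g →
      |∫ x in G, pdD i f x * g x| ≤ C * (sobolevHighSq θ G f + sobolevLowSq θ G g) := by
    rcases hθ0.eq_or_lt with rfl | hθpos
    · exact ⟨1, fun i f g hf hg => by
        simpa using abs_integral_pdD_mul_le_add hGbdd i hf hg.continuous⟩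
    · exact hGlip.exists_abs_integral_pdD_mul_le_add hGopen hGbdd hθpos hθ
  refine ⟨2 * (C + 1), by positivity, fun i f g hf hg => abs_le_two_mul_sqrt_mul_sqrt
    (by positivity) (sobolevHighSq_nonneg θ G f) (sobolevLowSq_nonneg θ G g) fun t => ?_⟩
  have hscaled := hC i (fun x => t * f x) g (contDiff_const.mul hf) hg
  simp only [pdD_const_mul (hf.differentiable one_ne_zero), mul_assoc, integral_const_mul,
    sobolevHighSq_const_mul (hf.differentiable one_ne_zero)] at hscaled
  have hsum : 0 ≤ t ^ 2 * sobolevHighSq θ G f + sobolevLowSq θ G g :=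
    add_nonneg (mul_nonneg (sq_nonneg t) (sobolevHighSq_nonneg θ G f)) (sobolevLowSq_nonneg θ G g)
  linarith [le_abs_self (t * ∫ x in G, pdD i f x * g x)]

/-- **Lemma 2.6 (Nečas)**: for `0 ≤ θ < 1/2` and a bounded Lipschitz domain `G ⊆ ℝ^d`
there is `C` with `∫_G (∂f/∂x_i) g ≤ C ‖f‖_{1−θ,G} ‖g‖_{θ,G}` for all smooth `f, g`.
Here `‖·‖_{0,G}` is the `L²` norm, `‖·‖_{1,G}` the `H¹` norm and, for `0 < r < 1`,
`‖v‖_{r,G} = (‖v‖²_{L²(G)} + |v|²_{r,G})^{1/2}`. -/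
theorem necas_derivative_bound (d : ℕ) (hd : 1 ≤ d) (θ : ℝ) (hθ0 : 0 ≤ θ)
    (hθ : θ < 1 / 2)
    (G : Set (Ed d)) (hGopen : IsOpen G) (hGconn : IsConnected G)
    (hGbdd : Bornology.IsBounded G) (hGlip : HasLipschitzBoundaryD G) :
    ∃ C : ℝ, 0 < C ∧ ∀ (i : Fin d) (f g : Ed d → ℝ),
      ContDiff ℝ (⊤ : ℕ∞) f → ContDiff ℝ (⊤ : ℕ∞) g →
      |∫ x in G, pdD i f x * g x| ≤
        C * Real.sqrt ((∫ x in G, (f x) ^ 2) +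
              if θ = 0 then ∑ k : Fin d, ∫ x in G, (pdD k f x) ^ 2
              else gagSqD d (1 - θ) G f) *
          Real.sqrt ((∫ x in G, (g x) ^ 2) +
              if θ = 0 then 0 else gagSqD d θ G g) := by
  obtain ⟨C, hC, hbound⟩ := necas_derivative_bound_general d hd θ hθ0 hθ G hGopen hGbdd hGlip
  exact ⟨C, hC, fun i f g hf hg => hbound i f g (hf.of_le (by simp)) (hg.of_le (by simp))⟩

end
end
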